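/- arXiv:cs/0610132 — 11 statements merged into one kernel-verified Lean document; each statement's English description precedes it below -/
import Mathlib

section
/- Let q be a prime power and F the finite field with q² elements. The set P = {(α,β) ∈ F × F : α^{q+1} = β^q + β} has exactly q³ elements. -/
theorem aux_bound (q : ℕ) (hq : 1 < q) (F : Type*) [Field F] [Fintype F] [DecidableEq F]
    (e c : F) : (Finset.univ.filter fun b : F => b ^ q + e * b = c).card ≤ q := by
  classical
  set f : Polynomial F := Polynomial.X ^ q +
    (Polynomial.C e * Polynomial.X - Polynomial.C c) with hf
  have hd : (Polynomial.C e * Polynomial.X - Polynomial.C c).degree < (q : WithBot ℕ) := by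
    have h1 : (Polynomial.C e * Polynomial.X - Polynomial.C c).degree ≤ 1 := by
      have := Polynomial.degree_linear_le (a := e) (b := -c)
      simpa [sub_eq_add_neg] using this
    exact lt_of_le_of_lt h1 (by exact_mod_cast hq)
  have hm : f.Monic := Polynomial.monic_X_pow_add hd
  have hn : f.natDegree = q := by
    apply Polynomial.natDegree_eq_of_degree_eq_some
    rw [hf, Polynomial.degree_add_eq_left_of_degree_lt] <;> rw [Polynomial.degree_X_pow]
    exact hd
  have hs : (Finset.univ.filter fun b : F => b ^ q + e * b = c) ⊆ f.roots.toFinset := by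
    intro b hb
    have hb' := (Finset.mem_filter.1 hb).2
    rw [Multiset.mem_toFinset, Polynomial.mem_roots hm.ne_zero]
    simp [hf, Polynomial.IsRoot, ← hb']
  calc _ ≤ f.roots.toFinset.card := Finset.card_le_card hs
    _ ≤ f.roots.card := Multiset.toFinset_card_le _
    _ ≤ f.natDegree := Polynomial.card_roots' f
    _ = q := hn

theorem aux_add (q : ℕ) (hq : IsPrimePow q) (F : Type*) [Field F] [Fintype F]
    (hF : Fintype.card F = q ^ 2) (x y : F) : (x + y) ^ q = x ^ q + y ^ q := by
  obtain ⟨p, k, hp, hk, rfl⟩ := hq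
  have hp' : p.Prime := hp.nat_prime
  obtain ⟨r, hr⟩ := CharP.exists F
  obtain ⟨n, hrp, hn⟩ := FiniteField.card F r
  have : r = p := by
    have h1 : r ∣ (p ^ k) ^ 2 := by
      rw [← hF, hn]; exact dvd_pow_self _ n.pos.ne'
    exact (Nat.prime_dvd_prime_iff_eq hrp hp').1
      (hrp.dvd_of_dvd_pow (hrp.dvd_of_dvd_pow h1))
  subst this
  have : Fact r.Prime := ⟨hrp⟩
  exact add_pow_char_pow x y r k

/-- Let `q` be a prime power and `F` the finite field with `q²` elements. The set
`P = {(α,β) ∈ F × F : α^{q+1} = β^q + β}` has exactly `q³` elements. -/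
theorem stmt_1 (q : ℕ) (hq : IsPrimePow q) (F : Type*) [Field F] [Fintype F] [DecidableEq F]
    (hF : Fintype.card F = q ^ 2) :
    (Finset.univ.filter fun p : F × F => p.1 ^ (q + 1) = p.2 ^ q + p.2).card = q ^ 3 := by
  have hq1 : 1 < q := hq.one_lt
  have hqq : ∀ x : F, (x ^ q) ^ q = x := by
    intro x
    rw [← pow_mul, ← sq, ← hF, FiniteField.pow_card]
  set S : Finset F := Finset.univ.filter fun c : F => c ^ q = c with hS
  set N : F → ℕ := fun c => (Finset.univ.filter fun b : F => b ^ q + b = c).card with hN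
  have hNle : ∀ c, N c ≤ q := by
    intro c
    have := aux_bound q hq1 F 1 c
    simpa [hN] using this
  have hSle : S.card ≤ q := by
    have := aux_bound q hq1 F (-1) 0
    simpa [hS, ← sub_eq_add_neg, sub_eq_zero] using this
  have hsum : q ^ 2 = ∑ c ∈ S, N c := by
    rw [← hF, ← Finset.card_univ]
    apply Finset.card_eq_sum_card_fiberwise
    intro b _
    simp only [hS, Finset.coe_filter, Set.mem_ofPred_eq, Finset.mem_univ, true_and]
    rw [aux_add q hq F hF, hqq, add_comm]
  have hNeq : ∀ c ∈ S, N c = q := by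
    intro c hc
    by_contra hne
    have hlt : ∑ c ∈ S, N c < ∑ _c ∈ S, q :=
      Finset.sum_lt_sum (fun i _ => hNle i) ⟨c, hc, lt_of_le_of_ne (hNle c) hne⟩
    rw [Finset.sum_const, smul_eq_mul, ← hsum] at hlt
    nlinarith
  have hP : (Finset.univ.filter fun p : F × F => p.1 ^ (q + 1) = p.2 ^ q + p.2).card
      = ∑ a : F, N (a ^ (q + 1)) := by
    simp only [hN, Finset.card_filter]
    rw [Fintype.sum_prod_type]
    simp only [eq_comm]
  rw [hP, Finset.sum_congr rfl (g := fun _ => q)]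
  · rw [Finset.sum_const, Finset.card_univ, hF, smul_eq_mul]; ring
  · intro a _
    apply hNeq
    simp only [hS, Finset.mem_filter, Finset.mem_univ, true_and]
    rw [pow_succ, mul_pow, hqq, mul_comm]
end

section
/- With P_1, …, P_n (n = q³) the rational points of the Hermitian curve and H_i as defined, one has H_i(P_i) = 1 and H_i(P_j) = 0 for j ≠ i. -/
open MvPolynomial

/-- The polynomial `H_i ∈ F[X,Y]` attached to the rational point `(α, β)` of the Hermitian
curve: `H = −∏_{a ∈ F, a ≠ α} (X − a) · ∏_{b ∈ F, b ≠ β, b^q + b = β^q + β} (Y − b)`. -/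
noncomputable def Hpoly (q : ℕ) {F : Type*} [Field F] [Fintype F] [DecidableEq F]
    (α β : F) : MvPolynomial (Fin 2) F :=
  -((∏ a ∈ Finset.univ.erase α, (X 0 - C a)) *
    ∏ b ∈ (Finset.univ.filter fun b : F => b ^ q + b = β ^ q + β).erase β, (X 1 - C b))

open Polynomial in
theorem prod_erase_aux {F : Type*} [Field F] [Fintype F] [DecidableEq F]
    (g : Polynomial F) (hg : g.Monic) (hd : g ∣ Polynomial.X ^ Fintype.card F - Polynomial.X)
    (x : F) (hx : g.eval x = 0) (S : Finset F) (hS : ∀ b, b ∈ S ↔ g.eval b = 0) :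
    ∏ b ∈ S.erase x, (x - b) = g.derivative.eval x := by
  have hne : (Polynomial.X ^ Fintype.card F - Polynomial.X : Polynomial F) ≠ 0 :=
    FiniteField.X_pow_card_sub_X_ne_zero _ Fintype.one_lt_card
  have hsp : (Polynomial.X ^ Fintype.card F - Polynomial.X : Polynomial F).Splits := by
    rw [Polynomial.splits_iff_card_roots, FiniteField.roots_X_pow_card_sub_X,
      FiniteField.X_pow_card_sub_X_natDegree_eq F Fintype.one_lt_card]
    rfl
  have hgs : g.Splits := hsp.of_dvd hne hd
  have hnd : g.roots.Nodup := by
    refine Multiset.nodup_of_le (Polynomial.roots.le_of_dvd hne hd) ?_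
    rw [FiniteField.roots_X_pow_card_sub_X]
    exact Finset.univ.nodup
  have hSv : S.val = g.roots := by
    refine (Multiset.Nodup.ext S.nodup hnd).2 fun b => ?_
    rw [Finset.mem_val, hS, Polynomial.mem_roots hg.ne_zero, Polynomial.IsRoot.def]
  rw [hgs.eval_root_derivative hg ((Polynomial.mem_roots hg.ne_zero).2 hx), ← hSv,
    ← Finset.erase_val]
  rfl

/-- With `P_1, …, P_n` (`n = q³`) the rational points of the Hermitian curve and `H_i` as
defined, one has `H_i(P_i) = 1` and `H_i(P_j) = 0` for `j ≠ i`. -/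
theorem stmt_2 (q : ℕ) (hq : IsPrimePow q) (F : Type*) [Field F] [Fintype F] [DecidableEq F]
    (hF : Fintype.card F = q ^ 2) (P : Fin (q ^ 3) → F × F)
    (hPinj : Function.Injective P)
    (hPcurve : ∀ i, (P i).1 ^ (q + 1) = (P i).2 ^ q + (P i).2)
    (hPsurj : ∀ a b : F, a ^ (q + 1) = b ^ q + b → ∃ i, P i = (a, b))
    (i j : Fin (q ^ 3)) :
    MvPolynomial.eval ![(P j).1, (P j).2] (Hpoly q (P i).1 (P i).2) =
      if j = i then 1 else 0 := by
  obtain ⟨p, k, hp, hk, hpk⟩ := hq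
  have : Fact p.Prime := ⟨hp.nat_prime⟩
  have hcard : Fintype.card F = p ^ (k * 2) := by rw [hF, ← hpk, pow_mul]
  have : CharP F p := charP_of_card_eq_prime_pow hcard
  have hq0 : (q : F) = 0 := by
    rw [← hpk, Nat.cast_pow, CharP.cast_eq_zero, zero_pow hk.ne']
  have hq1 : 1 < q := hpk ▸ Nat.one_lt_pow hk.ne' hp.nat_prime.one_lt
  by_cases hji : j = i
  · subst hji
    have h1 : ∏ a ∈ Finset.univ.erase (P j).1, ((P j).1 - a) = -1 := by
      rw [prod_erase_aux (Polynomial.X ^ Fintype.card F - Polynomial.X) ?_ dvd_rfl _ ?_ _ ?_]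
      · simp [hF, hq0, Polynomial.derivative_X_pow]
      · apply Polynomial.monic_X_pow_sub
        rw [Polynomial.degree_X]
        exact_mod_cast Fintype.one_lt_card
      · simp [FiniteField.pow_card]
      · simp [FiniteField.pow_card]
    have h2 : ∏ b ∈ (Finset.univ.filter fun b : F =>
        b ^ q + b = (P j).2 ^ q + (P j).2).erase (P j).2, ((P j).2 - b) = 1 := by
      have hc : ((P j).2 ^ q + (P j).2) ^ q = (P j).2 ^ q + (P j).2 := by
        have : (P j).2 ^ (q * q) = (P j).2 := by
          rw [← sq, ← hF, FiniteField.pow_card]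
        conv_lhs => rw [← hpk, add_pow_char_pow, hpk, ← pow_mul, this]
        ring
      generalize hcc : (P j).2 ^ q + (P j).2 = c at hc ⊢
      rw [prod_erase_aux (Polynomial.X ^ q - (Polynomial.C c - Polynomial.X)) ?_ ?_ _ ?_ _ ?_]
      · simp [hq0, Polynomial.derivative_X_pow]
      · apply Polynomial.monic_X_pow_sub
        refine (Polynomial.degree_sub_le _ _).trans_lt ?_
        rw [Polynomial.degree_X]
        refine max_lt (Polynomial.degree_C_le.trans_lt ?_) ?_
        · exact_mod_cast (by omega : 0 < q)
        · exact_mod_cast hq1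
      · set g : Polynomial F := Polynomial.X ^ q - (Polynomial.C c - Polynomial.X) with hg
        have : Polynomial.X ^ Fintype.card F - Polynomial.X = g ^ q - g := by
          have e : g ^ q = Polynomial.X ^ (q * q) - (Polynomial.C c - Polynomial.X ^ q) := by
            rw [hg]
            conv_lhs => rw [← hpk, sub_pow_char_pow, sub_pow_char_pow, hpk]
            rw [← Polynomial.C_pow, hc, ← pow_mul]
          rw [e, hg, hF, sq]
          ring
        rw [this]
        exact dvd_sub (dvd_pow_self _ (by omega)) dvd_rfl
      · simp [← hcc]
      · intro b
        simp only [Finset.mem_filter, Finset.mem_univ, true_and, Polynomial.eval_sub,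
          Polynomial.eval_pow, Polynomial.eval_X, Polynomial.eval_C]
        constructor <;> intro h <;> linear_combination h
    simp [Hpoly, MvPolynomial.eval_prod, h1, h2]
  · rw [if_neg hji]
    simp only [Hpoly, map_neg, map_mul, MvPolynomial.eval_prod, map_sub, MvPolynomial.eval_X,
      MvPolynomial.eval_C, neg_eq_zero, mul_eq_zero, Finset.prod_eq_zero_iff]
    by_cases hx : (P j).1 = (P i).1
    · right
      refine ⟨(P j).2, ?_, by simp⟩
      simp only [Finset.mem_erase, Finset.mem_filter, Finset.mem_univ, true_and]
      refine ⟨fun hy => hji (hPinj (Prod.ext hx hy)), ?_⟩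
      rw [← hPcurve, ← hPcurve, hx]
    · left
      exact ⟨(P j).1, by simp [hx], by simp⟩
end

section
/- With notation as in the context, for every v = (v_1, …, v_n) ∈ F^n and every 1 ≤ j ≤ n, one has H_v(P_j) = v_j; that is, the evaluation map sends h_v to v. -/
open MvPolynomial

theorem deriv_eval_of_dvd {F : Type*} [Field F] [Fintype F] [DecidableEq F]
    (f : Polynomial F) (hm : f.Monic)
    (hd : f ∣ Polynomial.X ^ Fintype.card F - Polynomial.X)
    (S : Finset F) (hS : ∀ b, b ∈ S ↔ f.eval b = 0) (r : F) (hr : r ∈ S) :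
    ∏ b ∈ S.erase r, (r - b) = f.derivative.eval r := by
  have h0 : (Polynomial.X ^ Fintype.card F - Polynomial.X : Polynomial F) ≠ 0 :=
    FiniteField.X_pow_card_sub_X_ne_zero F Fintype.one_lt_card
  have hs : (Polynomial.X ^ Fintype.card F - Polynomial.X : Polynomial F).Splits := by
    rw [Polynomial.splits_iff_card_roots, FiniteField.roots_X_pow_card_sub_X,
      ← Finset.card_def, Finset.card_univ,
      FiniteField.X_pow_card_sub_X_natDegree_eq _ Fintype.one_lt_card]
  have hnd : f.roots.Nodup := by
    refine Multiset.nodup_of_le (Polynomial.roots.le_of_dvd h0 hd) ?_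
    rw [FiniteField.roots_X_pow_card_sub_X]
    exact Finset.univ.nodup
  have hroots : f.roots = S.val := by
    refine (Multiset.Nodup.ext hnd S.nodup).2 fun b => ?_
    rw [Polynomial.mem_roots hm.ne_zero, Finset.mem_val, hS, Polynomial.IsRoot.def]
  have hf := (hs.of_dvd h0 hd).eq_prod_roots_of_monic hm
  rw [hroots] at hf
  rw [hf, Polynomial.eval_multiset_prod_X_sub_C_derivative (by simpa using hr)]
  rfl

theorem prod_univ_erase {F : Type*} [Field F] [Fintype F] [DecidableEq F] (r : F) :
    ∏ b ∈ Finset.univ.erase r, (r - b) = -1 := by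
  rw [deriv_eval_of_dvd (Polynomial.X ^ Fintype.card F - Polynomial.X) ?_ dvd_rfl
    Finset.univ ?_ r (Finset.mem_univ r)]
  · simp [Polynomial.derivative_X_pow]
  · apply Polynomial.monic_X_pow_sub
    rw [Polynomial.degree_X]
    exact_mod_cast Fintype.one_lt_card
  · intro b
    simp [FiniteField.pow_card]

theorem prod_fiber_erase (q : ℕ) (hq : IsPrimePow q) {F : Type*} [Field F] [Fintype F]
    [DecidableEq F] (hF : Fintype.card F = q ^ 2) (r : F) :
    ∏ b ∈ (Finset.univ.filter fun b : F => b ^ q + b = r ^ q + r).erase r, (r - b) = 1 := by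
  have hq1 := hq.one_lt
  have hq0 : (q : F) = 0 := by
    have := Nat.cast_card_eq_zero F
    rw [hF] at this
    push_cast at this
    exact pow_eq_zero_iff (two_ne_zero) |>.1 this
  obtain ⟨p, k, hp, hk, rfl⟩ := hq
  have hp' : p.Prime := hp.nat_prime
  have hp0 : (p : F) = 0 := by
    push_cast at hq0
    exact pow_eq_zero_iff hk.ne' |>.1 hq0
  haveI : Fact p.Prime := ⟨hp'⟩
  haveI : CharP F p := (CharP.charP_iff_prime_eq_zero hp').2 hp0
  set q := p ^ k with hqdef
  set c := r ^ q + r with hc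
  have hcq : c ^ q = c := by
    have : r ^ (q ^ 2) = r := by rw [← hF, FiniteField.pow_card]
    rw [hc, hqdef, add_pow_char_pow, ← hqdef, ← pow_mul, ← pow_two, this, add_comm]
  rw [deriv_eval_of_dvd (Polynomial.X ^ q + (Polynomial.X - Polynomial.C c)) ?_ ?_ _ ?_ r
    (by simp [hc])]
  · simp [Polynomial.derivative_X_pow, hq0]
  · apply Polynomial.monic_X_pow_add
    rw [Polynomial.degree_X_sub_C]
    exact_mod_cast hq1
  · have key : (Polynomial.X ^ Fintype.card F - Polynomial.X : Polynomial F) =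
      (Polynomial.X ^ q + (Polynomial.X - Polynomial.C c)) ^ q
        - (Polynomial.X ^ q + (Polynomial.X - Polynomial.C c)) := by
      conv_rhs => rw [hqdef, add_pow_char_pow, sub_pow_char_pow, ← hqdef, ← pow_mul, ← pow_two,
        ← Polynomial.C_pow, hcq]
      rw [hF]
      ring
    rw [key]
    exact dvd_sub (dvd_pow_self _ (by omega)) dvd_rfl
  · intro b
    simp [← add_sub_assoc, sub_eq_zero]

/-- For every `v = (v_1, …, v_n) ∈ F^n` and every `1 ≤ j ≤ n`, one has `H_v(P_j) = v_j`,
where `H_v = Σ_{i=1}^n v_i H_i`; that is, the evaluation map sends `h_v` to `v`. -/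
theorem stmt_3 (q : ℕ) (hq : IsPrimePow q) (F : Type*) [Field F] [Fintype F] [DecidableEq F]
    (hF : Fintype.card F = q ^ 2) (P : Fin (q ^ 3) → F × F)
    (hPinj : Function.Injective P)
    (hPcurve : ∀ i, (P i).1 ^ (q + 1) = (P i).2 ^ q + (P i).2)
    (hPsurj : ∀ a b : F, a ^ (q + 1) = b ^ q + b → ∃ i, P i = (a, b))
    (v : Fin (q ^ 3) → F) (j : Fin (q ^ 3)) :
    MvPolynomial.eval ![(P j).1, (P j).2]
        (∑ i, C (v i) * Hpoly q (P i).1 (P i).2) = v j := by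
  rw [map_sum, Finset.sum_eq_single j]
  · simp only [Hpoly, map_mul, map_neg, map_prod, map_sub, eval_C, eval_X, Matrix.cons_val_zero,
      Matrix.cons_val_one]
    rw [prod_univ_erase, prod_fiber_erase q hq hF]
    ring
  · intro i _ hij
    simp only [Hpoly, map_mul, map_neg, map_prod, map_sub, eval_C, eval_X, Matrix.cons_val_zero,
      Matrix.cons_val_one]
    by_cases h1 : (P j).1 = (P i).1
    · have h2 : (P j).2 ≠ (P i).2 := fun h2 => hij (hPinj (Prod.ext h1 h2)).symm
      rw [Finset.prod_eq_zero (s := Finset.erase _ (P i).2) (i := (P j).2) _ (sub_self _)]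
      · ring
      · simp [h2, ← hPcurve, h1]
    · rw [Finset.prod_eq_zero (s := Finset.erase _ (P i).1) (i := (P j).1) _ (sub_self _)]
      · ring
      · simp [h1]
  · simp
end

section
/- Let m be a positive integer and v ∈ F^n. Then the F-vector space F[X,Y,Z]/(⟨X^{q+1} − Y^q − Y⟩ + ⟨Z − H_v, X^{q²} − X⟩^m) has dimension n·m(m+1)/2, where n = q³; equivalently, dim_F R[z]/⟨z − h_v, η⟩^m = n·binom(m+1, 2). -/
open MvPolynomial

section helpers

open Polynomial in
theorem aux_mem_pow {A : Type*} [CommRing A] (η : A) (m : ℕ) (p : A[X]) :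
    p ∈ (Ideal.span {(Polynomial.X : A[X]), Polynomial.C η}) ^ m ↔
      ∀ j k, j + k = m → η ^ k ∣ p.coeff j := by
  constructor
  · induction m generalizing p with
    | zero =>
      intro _ j k h
      obtain rfl : k = 0 := by omega
      simp
    | succ m ih =>
      intro hp
      rw [pow_succ] at hp
      refine Submodule.mul_induction_on hp ?_ ?_
      · intro a ha b hb j k hjk
        obtain ⟨c, d, rfl⟩ := Ideal.mem_span_pair.1 hb
        have h1 := ih a ha
        have key : ∀ c : A[X], ∀ j k, j + k = m → η ^ k ∣ (a * c).coeff j := by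
          intro c j k hjk
          rw [Polynomial.coeff_mul]
          refine Finset.dvd_sum fun x hx => ?_
          have hx := Finset.HasAntidiagonal.mem_antidiagonal.1 hx
          exact Dvd.dvd.mul_right ((pow_dvd_pow η (by omega)).trans (h1 x.1 (m - x.1) (by omega))) _
        have e : a * (c * Polynomial.X + d * Polynomial.C η)
            = (a * c) * Polynomial.X + (a * d) * Polynomial.C η := by ring
        rw [e, Polynomial.coeff_add, Polynomial.coeff_mul_C]
        refine dvd_add ?_ ?_
        · cases j with
          | zero => simp
          | succ j =>
            rw [Polynomial.coeff_mul_X]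
            exact key c j k (by omega)
        · cases k with
          | zero => simp
          | succ k =>
            rw [pow_succ]
            exact mul_dvd_mul (key d j k (by omega)) dvd_rfl
      · intro a b ha hb j k hjk
        rw [Polynomial.coeff_add]
        exact dvd_add (ha j k hjk) (hb j k hjk)
  · intro h
    rw [p.as_sum_range_C_mul_X_pow]
    refine Ideal.sum_mem _ fun j _ => ?_
    have hX : (Polynomial.X : A[X]) ∈ Ideal.span {(Polynomial.X : A[X]), Polynomial.C η} :=
      Ideal.subset_span (by simp)
    have hC : (Polynomial.C η : A[X]) ∈ Ideal.span {(Polynomial.X : A[X]), Polynomial.C η} :=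
      Ideal.subset_span (by simp)
    rcases le_total m j with hj | hj
    · exact Ideal.mul_mem_left _ _ (Ideal.pow_le_pow_right hj (Ideal.pow_mem_pow hX j))
    · obtain ⟨k, hk⟩ := Nat.exists_eq_add_of_le hj
      obtain ⟨c, hc⟩ := h j k hk.symm
      rw [hc, hk, add_comm j k, pow_add, Polynomial.C_mul, Polynomial.C_pow, mul_right_comm]
      exact Ideal.mul_mem_right _ _
        (Ideal.mul_mem_mul (Ideal.pow_mem_pow hC k) (Ideal.pow_mem_pow hX j))

open Polynomial in
/-- coefficient map -/
noncomputable def auxMap (F : Type*) [Field F] (η : F[X]) (m : ℕ) :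
    F[X][X] →ₗ[F] (∀ j : Fin m, F[X] ⧸ Ideal.span {η ^ (m - j : ℕ)}) :=
  LinearMap.pi fun j =>
    ((Ideal.Quotient.mkₐ F (Ideal.span {η ^ (m - j : ℕ)})).toLinearMap).comp
      ((Polynomial.lcoeff F[X] (j : ℕ)).restrictScalars F)

open Polynomial in
theorem aux_finrank (F : Type*) [Field F] (η : F[X]) (hη : 0 < η.natDegree) (m : ℕ) :
    Module.finrank F
      (F[X][X] ⧸ (Ideal.span {(Polynomial.X : F[X][X]), Polynomial.C η}) ^ m)
      = η.natDegree * Nat.choose (m + 1) 2 := by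
  have hker : LinearMap.ker (auxMap F η m) =
      ((Ideal.span {(Polynomial.X : F[X][X]), Polynomial.C η}) ^ m).restrictScalars F := by
    ext p
    rw [Submodule.restrictScalars_mem, aux_mem_pow, LinearMap.mem_ker]
    constructor
    · intro h j k hjk
      rcases Nat.eq_zero_or_pos k with rfl | hk
      · simp
      have := congrFun h ⟨j, by omega⟩
      have h2 : (Ideal.Quotient.mk (Ideal.span {η ^ (m - j : ℕ)})) (p.coeff j) = 0 := this
      rw [Ideal.Quotient.eq_zero_iff_mem, Ideal.mem_span_singleton] at h2
      obtain rfl : k = m - j := by omega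
      exact h2
    · intro h
      funext j
      change (Ideal.Quotient.mk (Ideal.span {η ^ (m - j : ℕ)})) (p.coeff j) = 0
      rw [Ideal.Quotient.eq_zero_iff_mem, Ideal.mem_span_singleton]
      exact h _ _ (by omega)
  have hsurj : Function.Surjective (auxMap F η m) := by
    intro w
    choose u hu using fun j => Ideal.Quotient.mk_surjective (w j)
    refine ⟨∑ j : Fin m, Polynomial.C (u j) * Polynomial.X ^ (j : ℕ), ?_⟩
    funext i
    have hc : (∑ j : Fin m, Polynomial.C (u j) * Polynomial.X ^ (j : ℕ)).coeff (i : ℕ) = u i := by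
      rw [Polynomial.finsetSum_coeff]
      simp [Polynomial.coeff_X_pow, ← Fin.ext_iff]
    rw [← hu i, ← hc]
    rfl
  have e1 := LinearMap.quotKerEquivOfSurjective _ hsurj
  rw [hker] at e1
  have hfr : ∀ j : Fin m, Module.finrank F (F[X] ⧸ Ideal.span {η ^ (m - j : ℕ)})
      = (m - j : ℕ) * η.natDegree := by
    intro j
    rw [finrank_quotient_span_eq_natDegree, Polynomial.natDegree_pow]
  have : ∀ j : Fin m, Module.Finite F (F[X] ⧸ Ideal.span {η ^ (m - j : ℕ)}) := by
    intro j
    apply Module.finite_of_finrank_pos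
    rw [hfr]
    exact Nat.mul_pos (by omega) hη
  have e2 := e1.finrank_eq
  rw [Module.finrank_pi_fintype] at e2
  refine Eq.trans e2 ?_
  simp_rw [hfr]
  rw [← Finset.sum_mul, mul_comm]
  congr 1
  rw [Fin.sum_univ_eq_sum_range (fun j => m - j) m]
  clear this hfr e1 e2 hker hsurj
  induction m with
  | zero => simp
  | succ m ih =>
    rw [Finset.sum_range_succ', Nat.choose_succ_succ' (m + 1) 1, ← ih]
    simp [add_comm]

open Polynomial in
theorem aux_main0 (F : Type*) [Field F] (q : ℕ) (hq : 2 ≤ q) (m : ℕ) (hm : 1 ≤ m)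
    (H : MvPolynomial (Fin 2) F) (B : Type*) [CommRing B] [Algebra F B]
    (σ : F[X][X] →ₐ[F] B) (hσ : Function.Surjective σ)
    (hker : ∀ a, σ a = 0 ↔ a ∈ (Ideal.span {(Polynomial.X : F[X][X]),
      Polynomial.C (Polynomial.X ^ (q ^ 2) - Polynomial.X)}) ^ m)
    (hC : Module.finrank F B = q ^ 2 * Nat.choose (m + 1) 2) :
    Module.finrank F (MvPolynomial (Fin 3) F ⧸
      (Ideal.span {(MvPolynomial.X 0 : MvPolynomial (Fin 3) F) ^ (q + 1) - MvPolynomial.X 1 ^ q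
          - MvPolynomial.X 1}
        + (Ideal.span {MvPolynomial.X 2 - MvPolynomial.rename (Fin.castSucc : Fin 2 → Fin 3) H,
            (MvPolynomial.X 0 : MvPolynomial (Fin 3) F) ^ (q ^ 2) - MvPolynomial.X 0}) ^ m))
      = q ^ 3 * Nat.choose (m + 1) 2 := by
  set I : Ideal (MvPolynomial (Fin 3) F) :=
    (Ideal.span {(MvPolynomial.X 0 : MvPolynomial (Fin 3) F) ^ (q + 1) - MvPolynomial.X 1 ^ q
          - MvPolynomial.X 1}
        + (Ideal.span {MvPolynomial.X 2 - MvPolynomial.rename (Fin.castSucc : Fin 2 → Fin 3) H,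
            (MvPolynomial.X 0 : MvPolynomial (Fin 3) F) ^ (q ^ 2) - MvPolynomial.X 0}) ^ m) with hI
  let η : F[X] := Polynomial.X ^ (q ^ 2) - Polynomial.X
  have hq2 : 1 < q ^ 2 := Nat.one_lt_pow two_ne_zero hq
  let J : Ideal F[X][X] := Ideal.span {(Polynomial.X : F[X][X]), Polynomial.C η}
  change ∀ a, σ a = 0 ↔ a ∈ J ^ m at hker
  have hCpos : 0 < Module.finrank F B := by
    rw [hC]
    exact Nat.mul_pos (by omega) (Nat.choose_pos (by omega))
  have hnt : Nontrivial B := Module.nontrivial_of_finrank_pos hCpos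
  let x0 : B := σ (Polynomial.C Polynomial.X)
  let z0 : B := σ Polynomial.X
  let f : B[X] := Polynomial.X ^ q + (Polynomial.X - Polynomial.C (x0 ^ (q + 1)))
  have hdeg : (Polynomial.X - Polynomial.C (x0 ^ (q + 1)) : B[X]).degree < q := by
    rw [Polynomial.degree_X_sub_C]
    exact_mod_cast hq
  have hmonic : f.Monic := Polynomial.monic_X_pow_add hdeg
  have hfdeg : f.natDegree = q := by
    rw [Polynomial.natDegree_add_eq_left_of_degree_lt, Polynomial.natDegree_X_pow]
    rwa [Polynomial.degree_X_pow]
  let D := AdjoinRoot f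
  have hfree : Module.Free B D := Module.Free.of_basis (AdjoinRoot.powerBasis' hmonic).basis
  have hD : Module.finrank F D = q ^ 3 * Nat.choose (m + 1) 2 := by
    rw [← Module.finrank_mul_finrank F B D, hC, (AdjoinRoot.powerBasis' hmonic).finrank]
    rw [AdjoinRoot.powerBasis'_dim, hfdeg]
    ring
  rw [← hD]
  let x : D := AdjoinRoot.of f x0
  let z : D := AdjoinRoot.of f z0
  let y : D := AdjoinRoot.root f
  have hxy : x ^ (q + 1) - y ^ q - y = 0 := by
    have h := AdjoinRoot.eval₂_root f
    simp only [f, Polynomial.eval₂_add, Polynomial.eval₂_sub, Polynomial.eval₂_X,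
      Polynomial.eval₂_C, Polynomial.eval₂_pow, map_pow] at h
    change y ^ q + (y - x ^ (q + 1)) = 0 at h
    linear_combination -h
  let h0 : D := MvPolynomial.aeval ![x, y] H
  let φ : MvPolynomial (Fin 3) F →ₐ[F] D := MvPolynomial.aeval ![x, y, z + h0]
  have φ0 : φ (MvPolynomial.X 0) = x := by simp [φ]
  have φ1 : φ (MvPolynomial.X 1) = y := by simp [φ]
  have φ2 : φ (MvPolynomial.X 2) = z + h0 := by simp [φ]
  have φH : φ (MvPolynomial.rename (Fin.castSucc : Fin 2 → Fin 3) H) = h0 := by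
    simp only [φ, h0, MvPolynomial.aeval_rename]
    congr 2
    funext i
    fin_cases i <;> rfl
  let ρ : F[X][X] →+* D := (AdjoinRoot.of f).comp σ.toRingHom
  have hρ : ∀ a ∈ J ^ m, ρ a = 0 := by
    intro a ha
    simp [ρ, (hker a).2 ha]
  have hφI : ∀ a ∈ I, φ a = 0 := by
    suffices h : I ≤ RingHom.ker φ.toRingHom from fun a ha => h ha
    rw [hI, Submodule.add_eq_sup]
    refine sup_le ?_ ?_
    · rw [Ideal.span_le, Set.singleton_subset_iff]
      change φ _ = 0
      rw [map_sub, map_sub, map_pow, map_pow, φ0, φ1, hxy]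
    · have h1 : Ideal.map φ.toRingHom (Ideal.span {MvPolynomial.X 2 -
            MvPolynomial.rename (Fin.castSucc : Fin 2 → Fin 3) H,
            (MvPolynomial.X 0 : MvPolynomial (Fin 3) F) ^ (q ^ 2) - MvPolynomial.X 0})
          ≤ Ideal.map ρ J := by
        rw [Ideal.map_span, Ideal.span_le]
        rintro _ ⟨a, ha, rfl⟩
        rcases ha with rfl | rfl
        · have : ρ Polynomial.X ∈ Ideal.map ρ J :=
            Ideal.mem_map_of_mem _ (Ideal.subset_span (by simp))
          have e : φ (MvPolynomial.X 2 - MvPolynomial.rename (Fin.castSucc : Fin 2 → Fin 3) H)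
              = z := by
            rw [map_sub, φ2, φH]
            ring
          change φ _ ∈ Ideal.map ρ J
          rw [e]
          exact this
        · have : ρ (Polynomial.C η) ∈ Ideal.map ρ J :=
            Ideal.mem_map_of_mem _ (Ideal.subset_span (by simp))
          have e : φ ((MvPolynomial.X 0 : MvPolynomial (Fin 3) F) ^ (q ^ 2) - MvPolynomial.X 0)
              = ρ (Polynomial.C η) := by
            simp only [η, map_sub, map_pow, φ0]
            rfl
          change φ _ ∈ Ideal.map ρ J
          rw [e]
          exact this
      rw [RingHom.ker, ← Ideal.map_le_iff_le_comap, Ideal.map_pow]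
      refine (Ideal.pow_right_mono h1 m).trans ?_
      rw [← Ideal.map_pow, Ideal.map_le_iff_le_comap]
      exact fun a ha => hρ a ha
  let Φ : (MvPolynomial (Fin 3) F ⧸ I) →ₐ[F] D := Ideal.Quotient.liftₐ I φ hφI
  let Q := MvPolynomial (Fin 3) F ⧸ I
  let π : MvPolynomial (Fin 3) F →ₐ[F] Q := Ideal.Quotient.mkₐ F I
  have hπ : ∀ a ∈ I, π a = 0 := fun a ha => Ideal.Quotient.eq_zero_iff_mem.2 ha
  have hΦπ : ∀ a, Φ (π a) = φ a := fun a => rfl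
  let Hr := MvPolynomial.rename (Fin.castSucc : Fin 2 → Fin 3) H
  let g : F[X][X] →ₐ[F] MvPolynomial (Fin 3) F :=
    Polynomial.eval₂AlgHom (Polynomial.aeval (MvPolynomial.X 0))
      (MvPolynomial.X 2 - Hr) (fun _ => Commute.all _ _)
  have gX : g Polynomial.X = MvPolynomial.X 2 - Hr := by simp [g]
  have gC : ∀ p, g (Polynomial.C p) = Polynomial.aeval (MvPolynomial.X 0) p := by
    intro p; simp [g]
  have hg : ∀ a ∈ J ^ m, (π.comp g) a = 0 := by
    intro a ha
    refine hπ _ ?_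
    rw [hI, Submodule.add_eq_sup]
    refine Ideal.mem_sup_right ?_
    suffices h : Ideal.map g.toRingHom (J ^ m) ≤ _ from h (Ideal.mem_map_of_mem _ ha)
    rw [Ideal.map_pow]
    refine Ideal.pow_right_mono ?_ m
    rw [Ideal.map_span, Ideal.span_le]
    rintro _ ⟨b, hb, rfl⟩
    rcases hb with rfl | rfl
    · change g _ ∈ Ideal.span _
      rw [gX]
      exact Ideal.subset_span (by simp [Hr])
    · change g _ ∈ Ideal.span _
      rw [gC]
      exact Ideal.subset_span (by simp [η])
  let ψ0 : B →ₐ[F] Q := (Ideal.Quotient.liftₐ (RingHom.ker σ) (π.comp g)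
    (fun a ha => hg a ((hker a).1 ha))).comp
      (Ideal.quotientKerAlgEquivOfSurjective hσ).symm.toAlgHom
  have ψ0mk : ∀ a, ψ0 (σ a) = π (g a) := by
    intro a
    have : (Ideal.quotientKerAlgEquivOfSurjective hσ).symm (σ a) = Ideal.Quotient.mk _ a := by
      rw [AlgEquiv.symm_apply_eq]
      rfl
    change Ideal.Quotient.liftₐ (RingHom.ker σ) (π.comp g)
      (fun a ha => hg a ((hker a).1 ha))
      ((Ideal.quotientKerAlgEquivOfSurjective hσ).symm (σ a)) = _
    rw [this]
    rfl
  have ψ0x : ψ0 x0 = π (MvPolynomial.X 0) := by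
    rw [ψ0mk, gC, Polynomial.aeval_X]
  have ψ0z : ψ0 z0 = π (MvPolynomial.X 2 - Hr) := by
    rw [ψ0mk, gX]
  have hev : f.eval₂ (ψ0 : B →+* Q) (π (MvPolynomial.X 1)) = 0 := by
    simp only [f, Polynomial.eval₂_add, Polynomial.eval₂_sub, Polynomial.eval₂_X,
      Polynomial.eval₂_C, Polynomial.eval₂_pow, RingHom.coe_coe, map_pow, ψ0x]
    have h : π ((MvPolynomial.X 0 : MvPolynomial (Fin 3) F) ^ (q + 1) - MvPolynomial.X 1 ^ q
          - MvPolynomial.X 1) = 0 := by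
      refine hπ _ ?_
      rw [hI, Submodule.add_eq_sup]
      exact Ideal.mem_sup_left (Ideal.subset_span rfl)
    simp only [map_sub, map_pow] at h
    linear_combination -h
  let Ψ : D →ₐ[F] Q := AdjoinRoot.liftAlgHom f ψ0 (π (MvPolynomial.X 1)) hev
  have Ψof : ∀ b, Ψ (AdjoinRoot.of f b) = ψ0 b := fun b => AdjoinRoot.liftAlgHom_of ..
  have Ψy : Ψ y = π (MvPolynomial.X 1) := AdjoinRoot.liftAlgHom_root ..
  have Ψx : Ψ x = π (MvPolynomial.X 0) := by rw [Ψof, ψ0x]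
  have Ψz : Ψ z = π (MvPolynomial.X 2 - Hr) := by rw [Ψof, ψ0z]
  have Ψh : Ψ h0 = π Hr := by
    have : (Ψ.comp (MvPolynomial.aeval ![x, y])) =
        π.comp (MvPolynomial.rename (Fin.castSucc : Fin 2 → Fin 3)) := by
      apply MvPolynomial.algHom_ext
      intro i
      fin_cases i
      · simpa using Ψx
      · simpa using Ψy
    exact congrArg (fun k => k H) this
  have inj : Ψ.comp φ = π := by
    apply MvPolynomial.algHom_ext
    intro i
    fin_cases i
    · change Ψ (φ (MvPolynomial.X 0)) = _
      rw [φ0, Ψx]; rfl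
    · change Ψ (φ (MvPolynomial.X 1)) = _
      rw [φ1, Ψy]; rfl
    · change Ψ (φ (MvPolynomial.X 2)) = π (MvPolynomial.X 2)
      rw [φ2, map_add, Ψz, Ψh, map_sub]
      ring
  have hΦinj : Function.Injective Φ := by
    apply Function.LeftInverse.injective (g := Ψ)
    intro a
    obtain ⟨a, rfl⟩ := Ideal.Quotient.mk_surjective a
    exact congrArg (fun k => k a) inj
  have hsub : ∀ p : F[X], AdjoinRoot.of f (σ (Polynomial.C p)) ∈ φ.range := by
    intro p
    refine ⟨Polynomial.aeval (MvPolynomial.X 0) p, ?_⟩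
    change φ (Polynomial.aeval (MvPolynomial.X 0) p) = _
    rw [← Polynomial.aeval_algHom_apply, φ0]
    induction p using Polynomial.induction_on' with
    | add p r hp hr => simp only [map_add, hp, hr]
    | monomial n a =>
      rw [← Polynomial.C_mul_X_pow_eq_monomial]
      simp only [map_mul, map_pow, Polynomial.aeval_X, Polynomial.aeval_C]
      rw [show (Polynomial.C (Polynomial.C a) : F[X][X]) = algebraMap F F[X][X] a from rfl,
        AlgHom.commutes]
      rfl
  have hΦsurj : Function.Surjective Φ := by
    suffices h : ∀ d : D, d ∈ φ.range by
      intro d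
      obtain ⟨a, ha⟩ := h d
      exact ⟨π a, ha⟩
    have hyr : y ∈ φ.range := ⟨_, φ1⟩
    have hzr : z ∈ φ.range := ⟨MvPolynomial.X 2 - Hr, by
      change φ _ = _
      rw [map_sub, φ2, φH]; ring⟩
    have hB : ∀ b : B, AdjoinRoot.of f b ∈ φ.range := by
      intro b
      obtain ⟨b, rfl⟩ := hσ b
      induction b using Polynomial.induction_on' with
      | add p r hp hr =>
        rw [map_add, map_add]
        exact add_mem hp hr
      | monomial n a =>
        rw [← Polynomial.C_mul_X_pow_eq_monomial, map_mul, map_mul, map_pow, map_pow]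
        exact mul_mem (hsub a) (pow_mem hzr n)
    intro d
    obtain ⟨p, rfl⟩ := AdjoinRoot.mk_surjective d
    induction p using Polynomial.induction_on' with
    | add p r hp hr =>
      rw [map_add]
      exact add_mem hp hr
    | monomial n a =>
      rw [← Polynomial.C_mul_X_pow_eq_monomial, map_mul, map_pow]
      exact mul_mem (hB a) (pow_mem hyr n)
  exact (LinearEquiv.ofBijective Φ.toLinearMap ⟨hΦinj, hΦsurj⟩).finrank_eq

open Polynomial in
theorem aux_main (F : Type*) [Field F] (q : ℕ) (hq : 2 ≤ q) (m : ℕ) (hm : 1 ≤ m)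
    (H : MvPolynomial (Fin 2) F) :
    Module.finrank F (MvPolynomial (Fin 3) F ⧸
      (Ideal.span {(MvPolynomial.X 0 : MvPolynomial (Fin 3) F) ^ (q + 1) - MvPolynomial.X 1 ^ q
          - MvPolynomial.X 1}
        + (Ideal.span {MvPolynomial.X 2 - MvPolynomial.rename (Fin.castSucc : Fin 2 → Fin 3) H,
            (MvPolynomial.X 0 : MvPolynomial (Fin 3) F) ^ (q ^ 2) - MvPolynomial.X 0}) ^ m))
      = q ^ 3 * Nat.choose (m + 1) 2 := by
  have hq2 : 1 < q ^ 2 := Nat.one_lt_pow two_ne_zero hq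
  have hη : (Polynomial.X ^ (q ^ 2) - Polynomial.X : F[X]).natDegree = q ^ 2 :=
    FiniteField.X_pow_card_sub_X_natDegree_eq F hq2
  have hC := aux_finrank F (Polynomial.X ^ (q ^ 2) - Polynomial.X) (by rw [hη]; omega) m
  rw [hη] at hC
  have key := aux_main0 F q hq m hm H
  generalize (Ideal.span {(Polynomial.X : F[X][X]),
      Polynomial.C (Polynomial.X ^ (q ^ 2) - Polynomial.X)}) ^ m = K at hC key
  have hs : Function.Surjective (Ideal.Quotient.mkₐ F K) := Ideal.Quotient.mkₐ_surjective F K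
  have hk : ∀ a, Ideal.Quotient.mkₐ F K a = 0 ↔ a ∈ K := fun a => Ideal.Quotient.eq_zero_iff_mem
  exact key (F[X][X] ⧸ K) (Ideal.Quotient.mkₐ F K) hs hk hC

end helpers

/-- Let `m` be a positive integer and `v ∈ F^n`. Then the `F`-vector space
`F[X,Y,Z]/(⟨X^{q+1} − Y^q − Y⟩ + ⟨Z − H_v, X^{q²} − X⟩^m)` has dimension
`n·m(m+1)/2`, where `n = q³`; i.e. `dim_F R[z]/⟨z − h_v, η⟩^m = n·binom(m+1,2)`. -/
theorem stmt_6 (q : ℕ) (hq : IsPrimePow q) (F : Type*) [Field F] [Fintype F] [DecidableEq F]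
    (hF : Fintype.card F = q ^ 2)
    (m : ℕ) (hm : 1 ≤ m)
    (P : Fin (q ^ 3) → F × F)
    (hPinj : Function.Injective P)
    (hPcurve : ∀ i, (P i).1 ^ (q + 1) = (P i).2 ^ q + (P i).2)
    (hPsurj : ∀ a b : F, a ^ (q + 1) = b ^ q + b → ∃ i, P i = (a, b))
    (v : Fin (q ^ 3) → F) :
    Module.finrank F (MvPolynomial (Fin 3) F ⧸
      (Ideal.span {(X 0 : MvPolynomial (Fin 3) F) ^ (q + 1) - X 1 ^ q - X 1}
        + (Ideal.span {X 2 - MvPolynomial.rename (Fin.castSucc : Fin 2 → Fin 3)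
              (∑ i, C (v i) * Hpoly q (P i).1 (P i).2),
            (X 0 : MvPolynomial (Fin 3) F) ^ (q ^ 2) - X 0}) ^ m))
      = q ^ 3 * Nat.choose (m + 1) 2 := by
  exact aux_main F q hq.two_le m hm _
end

section
/- Let m be a positive integer, v ∈ F^n, and M ∈ F[X,Y] with residue class μ in R. Let t = #{i : 1 ≤ i ≤ n, M(P_i) ≠ v_i} (the Hamming distance between v and ev(μ)). Then the F-vector space F[X,Y,Z]/(⟨X^{q+1} − Y^q − Y⟩ + ⟨Z − H_v, X^{q²} − X⟩^m + ⟨Z − M⟩) has dimension m(n − t). -/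
open MvPolynomial

section abstractPart

variable {F : Type*} [Field F] {R : Type*} [CommRing R] [Algebra F R]

lemma aux_pow_le (J : Ideal R) (u : R) (hu : u ∈ J) (hJ : J ≤ Ideal.span {u} ⊔ J ^ 2) (k : ℕ) :
    J ^ k ≤ Ideal.span {u ^ k} ⊔ J ^ (k + 1) := by
  have hu' : Ideal.span {u} ≤ J := by simpa [Ideal.span_le] using hu
  induction k with
  | zero => simp
  | succ k ih =>
    have hk : Ideal.span {u ^ k} ≤ J ^ k := by
      rw [← Ideal.span_singleton_pow]; exact Ideal.pow_right_mono hu' k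
    calc J ^ (k + 1) = J ^ k * J := pow_succ _ _
      _ ≤ (Ideal.span {u ^ k} ⊔ J ^ (k + 1)) * (Ideal.span {u} ⊔ J ^ 2) := Ideal.mul_mono ih hJ
      _ ≤ Ideal.span {u ^ (k + 1)} ⊔ J ^ (k + 1 + 1) := by
        rw [Ideal.sup_mul, Ideal.mul_sup, Ideal.mul_sup]
        refine sup_le (sup_le ?_ ?_) (sup_le ?_ ?_)
        · rw [Ideal.span_singleton_mul_span_singleton, ← pow_succ]
          exact le_sup_left
        · refine le_trans (Ideal.mul_mono_left hk) ?_
          rw [← pow_add]; exact le_sup_right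
        · refine le_trans (Ideal.mul_mono_right hu') ?_
          rw [← pow_succ]; exact le_sup_right
        · rw [← pow_add]
          exact le_trans (Ideal.pow_le_pow_right (by omega)) le_sup_right

lemma aux_upper (J : Ideal R) (u : R) (hu : u ∈ J) (hJ : J ≤ Ideal.span {u} ⊔ J ^ 2)
    (s : ℕ) (hs : Module.finrank F (R ⧸ J) ≤ s) (hfin : ∀ k, Module.Finite F (R ⧸ J ^ k)) (m : ℕ) :
    Module.finrank F (R ⧸ J ^ m) ≤ m * s := by
  induction m with
  | zero =>
    have : Subsingleton (R ⧸ J ^ 0) := by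
      rw [Ideal.Quotient.subsingleton_iff]; simp
    rw [Module.finrank_zero_of_subsingleton]; simp
  | succ k ih =>
    have hle : J ^ (k + 1) ≤ J ^ k := Ideal.pow_le_pow_right (by omega)
    let f : (R ⧸ J ^ (k + 1)) →ₗ[F] (R ⧸ J ^ k) := (Ideal.Quotient.factorₐ F hle).toLinearMap
    have hf := LinearMap.finrank_range_add_finrank_ker f
    have h1 : Module.finrank F (LinearMap.range f) ≤ Module.finrank F (R ⧸ J ^ k) := by
      have := hfin k
      exact Submodule.finrank_le _
    have hfJ : Module.Finite F (R ⧸ J) := by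
      have := hfin 1
      rwa [pow_one] at this
    let g0 : R →ₗ[R] (R ⧸ J ^ (k + 1)) := LinearMap.toSpanSingleton R _ (Ideal.Quotient.mk _ (u ^ k))
    have hg0 : J ≤ LinearMap.ker g0 := by
      intro x hx
      rw [LinearMap.mem_ker]
      change x • Ideal.Quotient.mk (J ^ (k+1)) (u ^ k) = 0
      rw [Algebra.smul_def, Ideal.Quotient.algebraMap_eq, ← map_mul, Ideal.Quotient.eq_zero_iff_mem,
        pow_succ, mul_comm x]
      exact Ideal.mul_mem_mul (Ideal.pow_mem_pow hu k) hx
    let g : (R ⧸ J) →ₗ[F] (R ⧸ J ^ (k + 1)) := (Submodule.liftQ J g0 hg0).restrictScalars F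
    have h2 : LinearMap.ker f ≤ LinearMap.range g := by
      intro x hx
      obtain ⟨x, rfl⟩ := Ideal.Quotient.mk_surjective x
      rw [LinearMap.mem_ker] at hx
      have hx' : Ideal.Quotient.mk (J ^ k) x = 0 := hx
      rw [Ideal.Quotient.eq_zero_iff_mem] at hx'
      obtain ⟨y, hy, z, hz, rfl⟩ := Submodule.mem_sup.1 (aux_pow_le J u hu hJ k hx')
      obtain ⟨a, rfl⟩ := Ideal.mem_span_singleton'.1 hy
      refine ⟨Ideal.Quotient.mk _ a, ?_⟩
      change a • Ideal.Quotient.mk (J ^ (k+1)) (u ^ k) = _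
      rw [Algebra.smul_def, Ideal.Quotient.algebraMap_eq, ← map_mul, map_add,
        Ideal.Quotient.eq_zero_iff_mem.2 hz, add_zero]
    have h3 : Module.finrank F (LinearMap.ker f) ≤ Module.finrank F (R ⧸ J) :=
      (Submodule.finrank_mono h2).trans (LinearMap.finrank_range_le g)
    rw [Nat.succ_mul]
    omega

variable {ι : Type*} [Fintype ι]

lemma aux_one (u : R) (ev : R →ₐ[F] (ι → F)) (hev : Function.Surjective ev)
    (hker : ∀ x, ev x = 0 ↔ x ∈ Ideal.span {u}) (f : R) :
    u ∈ Ideal.span {f, u} ∧ Ideal.span {f, u} ≤ Ideal.span {u} ⊔ Ideal.span {f, u} ^ 2 ∧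
    Module.finrank F (R ⧸ Ideal.span {f, u}) ≤ Nat.card {i // ev f i = 0} := by
  classical
  obtain ⟨g, hg⟩ := hev (fun i => (ev f i)⁻¹)
  have hfm : f ∈ Ideal.span {f, u} := Ideal.subset_span (by simp)
  have hum : u ∈ Ideal.span {f, u} := Ideal.subset_span (by simp)
  have huz : ev u = 0 := (hker u).2 (Ideal.mem_span_singleton_self u)
  refine ⟨hum, ?_, ?_⟩
  · rw [Ideal.span_le]
    rintro x (rfl | rfl)
    · have h1 : x - g * (x * x) ∈ Ideal.span {u} := by
        rw [← hker]
        ext i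
        simp only [map_sub, map_mul, hg, Pi.sub_apply, Pi.mul_apply, Pi.zero_apply]
        by_cases h : ev x i = 0
        · simp [h]
        · field_simp; simp
      have h2 : g * (x * x) ∈ Ideal.span {x, u} ^ 2 := by
        rw [pow_two]
        exact Ideal.mul_mem_left _ _ (Ideal.mul_mem_mul hfm hfm)
      have := Submodule.add_mem_sup h1 h2
      simpa using this
    · exact Ideal.mem_sup_left (Ideal.mem_span_singleton_self _)
  · let φ : R →ₐ[F] ({i // ev f i = 0} → F) :=
      AlgHom.pi (fun i => (Pi.evalAlgHom F (fun _ : ι => F) i.1).comp ev)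
    have hφ : ∀ x i, φ x i = ev x i.1 := fun _ _ => rfl
    have hle : RingHom.ker φ ≤ Ideal.span {f, u} := by
      intro x hx
      have hx' : ∀ i, ev f i = 0 → ev x i = 0 := fun i hi => by
        rw [← hφ x ⟨i, hi⟩, RingHom.mem_ker.1 hx]; rfl
      have h1 : x - (x * g) * f ∈ Ideal.span {u} := by
        rw [← hker]
        ext i
        simp only [map_sub, map_mul, hg, Pi.sub_apply, Pi.mul_apply, Pi.zero_apply]
        by_cases h : ev f i = 0
        · simp [h, hx' i h]
        · field_simp; simp
      have h2 : x - (x * g) * f ∈ Ideal.span {f, u} :=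
        Ideal.span_mono (by simp) h1
      have := Ideal.add_mem _ h2 (Ideal.mul_mem_left _ (x * g) hfm)
      simpa using this
    have hinj : Function.Injective (Ideal.kerLiftAlg φ) := Ideal.kerLiftAlg_injective φ
    have hfin : Module.Finite F (R ⧸ RingHom.ker φ) :=
      Module.Finite.of_injective (Ideal.kerLiftAlg φ).toLinearMap hinj
    calc Module.finrank F (R ⧸ Ideal.span {f, u}) ≤ Module.finrank F (R ⧸ RingHom.ker φ) :=
          LinearMap.finrank_le_finrank_of_surjective (f := (Ideal.Quotient.factorₐ F hle).toLinearMap)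
            (Ideal.Quotient.factor_surjective hle)
      _ ≤ Module.finrank F ({i // ev f i = 0} → F) :=
          LinearMap.finrank_le_finrank_of_injective (f := (Ideal.kerLiftAlg φ).toLinearMap) hinj
      _ = _ := by rw [Module.finrank_pi, Nat.card_eq_fintype_card]

theorem aux_main_s7 (u : R) (ev : R →ₐ[F] (ι → F)) (hev : Function.Surjective ev)
    (hker : ∀ x, ev x = 0 ↔ x ∈ Ideal.span {u})
    (hfin : ∀ k, Module.Finite F (R ⧸ Ideal.span {u ^ k})) (m : ℕ)
    (hdim : Module.finrank F (R ⧸ Ideal.span {u ^ m}) = m * Fintype.card ι) (f : R) :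
    Module.finrank F (R ⧸ Ideal.span {f, u} ^ m) = m * Nat.card {i // ev f i = 0} := by
  classical
  obtain ⟨g, hg⟩ := hev (fun i => (ev f i)⁻¹)
  obtain ⟨f', hf'⟩ := hev (fun i => if ev f i = 0 then 1 else 0)
  have hfinJ : ∀ (h : R) (k : ℕ), Module.Finite F (R ⧸ Ideal.span {h, u} ^ k) := by
    intro h k
    have := hfin k
    have hle : Ideal.span {u ^ k} ≤ Ideal.span {h, u} ^ k := by
      rw [← Ideal.span_singleton_pow]
      exact Ideal.pow_right_mono (Ideal.span_mono (by simp)) k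
    exact Module.Finite.of_surjective (Ideal.Quotient.factorₐ F hle).toLinearMap
      (Ideal.Quotient.factor_surjective hle)
  have hup : ∀ h : R, Module.finrank F (R ⧸ Ideal.span {h, u} ^ m)
      ≤ m * Nat.card {i // ev h i = 0} := fun h => by
    obtain ⟨h1, h2, h3⟩ := aux_one u ev hev hker h
    exact aux_upper _ u h1 h2 _ h3 (hfinJ h) m
  have hcard : Nat.card {i // ev f i = 0} + Nat.card {i // ev f' i = 0} = Fintype.card ι := by
    have : ∀ i, ev f' i = 0 ↔ ¬ ev f i = 0 := by
      intro i; rw [hf']; by_cases h : ev f i = 0 <;> simp [h]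
    simp_rw [this]
    rw [Nat.card_eq_fintype_card, Nat.card_eq_fintype_card, Fintype.card_subtype_compl]
    have := Fintype.card_subtype_le (fun i => ev f i = 0)
    omega
  set J := Ideal.span {f, u} with hJ
  set J' := Ideal.span {f', u} with hJ'
  have hfm : f ∈ J := Ideal.subset_span (by simp)
  have hum : u ∈ J := Ideal.subset_span (by simp)
  have hfm' : f' ∈ J' := Ideal.subset_span (by simp)
  have hcop : IsCoprime J J' := by
    rw [Ideal.isCoprime_iff_sup_eq, Ideal.eq_top_iff_one]
    have h1 : 1 - g * f - f' ∈ Ideal.span {u} := by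
      rw [← hker]
      ext i
      simp only [map_sub, map_mul, map_one, hg, hf', Pi.sub_apply, Pi.mul_apply, Pi.zero_apply,
        Pi.one_apply]
      by_cases h : ev f i = 0
      · simp [h]
      · simp [h]
    have h2 : 1 - g * f - f' ∈ J := Ideal.span_mono (by simp) h1
    have h3 : 1 - f' ∈ J := by
      have := Ideal.add_mem _ h2 (Ideal.mul_mem_left _ g hfm)
      convert this using 1; ring
    have := Submodule.add_mem_sup h3 hfm'
    simpa using this
  have hmul : J * J' ≤ Ideal.span {u} := by
    rw [hJ, hJ', Ideal.span_mul_span', Ideal.span_le]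
    rintro x ⟨a, ha, b, hb, rfl⟩
    have huz : ev u = 0 := (hker u).2 (Ideal.mem_span_singleton_self u)
    change a * b ∈ Ideal.span {u}
    rw [← hker, map_mul]
    rcases ha with rfl | rfl
    · rcases hb with rfl | rfl
      · ext i
        by_cases h : ev a i = 0 <;> simp [hf', h]
      · rw [huz, mul_zero]
    · rw [huz, zero_mul]
  have hcopm : IsCoprime (J ^ m) (J' ^ m) := hcop.pow
  have hle : J ^ m ⊓ J' ^ m ≤ Ideal.span {u ^ m} := by
    rw [← Ideal.mul_eq_inf_of_isCoprime hcopm, ← mul_pow, ← Ideal.span_singleton_pow]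
    exact Ideal.pow_right_mono hmul m
  have := hfinJ f m
  have := hfinJ f' m
  let e : (R ⧸ J ^ m ⊓ J' ^ m) ≃ₐ[F] (R ⧸ J ^ m) × (R ⧸ J' ^ m) :=
    AlgEquiv.ofRingEquiv (f := Ideal.quotientInfEquivQuotientProd _ _ hcopm) (fun r => rfl)
  have hfi : Module.Finite F (R ⧸ J ^ m ⊓ J' ^ m) := Module.Finite.equiv e.symm.toLinearEquiv
  have h1 := e.toLinearEquiv.finrank_eq
  rw [Module.finrank_prod] at h1
  have h2 : Module.finrank F (R ⧸ Ideal.span {u ^ m}) ≤ Module.finrank F (R ⧸ J ^ m ⊓ J' ^ m) :=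
    LinearMap.finrank_le_finrank_of_surjective (f := (Ideal.Quotient.factorₐ F hle).toLinearMap)
            (Ideal.Quotient.factor_surjective hle)
  have h3 : Module.finrank F (R ⧸ J ^ m) ≤ _ := hup f
  have h4 : Module.finrank F (R ⧸ J' ^ m) ≤ _ := hup f'
  rw [hdim, ← hcard, mul_add] at h2
  omega

end abstractPart

section curvePart

variable {F : Type*} [Field F]

lemma adj_quot (G : Polynomial (Polynomial F)) (hG : G.Monic) (p : Polynomial F) (hp : p.Monic) :
    Module.Finite F (AdjoinRoot G ⧸ Ideal.span {AdjoinRoot.of G p}) ∧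
    (0 < p.natDegree → Module.finrank F (AdjoinRoot G ⧸ Ideal.span {AdjoinRoot.of G p})
      = p.natDegree * G.natDegree) := by
  let K := Polynomial F ⧸ Ideal.span {p}
  let G' : Polynomial K := G.map (Ideal.Quotient.mk (Ideal.span {p}))
  have hG' : G'.Monic := hG.map _
  have hmap : Ideal.map (AdjoinRoot.of G) (Ideal.span {p}) = Ideal.span {AdjoinRoot.of G p} := by
    rw [Ideal.map_span, Set.image_singleton]
  rw [← hmap]
  let e : (AdjoinRoot G ⧸ Ideal.map (AdjoinRoot.of G) (Ideal.span {p})) ≃ₐ[F] AdjoinRoot G' :=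
    (AdjoinRoot.quotEquivQuotMap G (Ideal.span {p})).restrictScalars F
  have hfK : Module.Finite F K := hp.finite_quotient
  have hfA : Module.Finite K (AdjoinRoot G') := hG'.finite_adjoinRoot
  have hfrA : Module.Free K (AdjoinRoot G') := hG'.free_adjoinRoot
  have hfF : Module.Finite F (AdjoinRoot G') := Module.Finite.trans K _
  refine ⟨Module.Finite.equiv e.symm.toLinearEquiv, fun hpos => ?_⟩
  have hK : Nontrivial K := by
    apply Ideal.Quotient.nontrivial_iff.2
    rw [Ne, Ideal.span_singleton_eq_top]
    exact fun h => by
      have := Polynomial.natDegree_eq_zero_of_isUnit h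
      omega
  rw [e.toLinearEquiv.finrank_eq, ← Module.finrank_mul_finrank F K (AdjoinRoot G'),
    (AdjoinRoot.powerBasis' hG').finrank, AdjoinRoot.powerBasis'_dim, hG.natDegree_map]
  congr 1
  exact finrank_quotient_span_eq_natDegree

/-- product of differences over the other roots -/
lemma prod_erase [DecidableEq F] (p : Polynomial F) (hp : p.Monic) (T : Finset F)
    (hT : ∀ b ∈ T, p.eval b = 0) (hcard : p.natDegree ≤ T.card) (b : F) (hb : b ∈ T) :
    ∏ c ∈ T.erase b, (b - c) = p.derivative.eval b := by
  have hp0 : p ≠ 0 := hp.ne_zero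
  have hle : T.val ≤ p.roots := by
    rw [Multiset.le_iff_subset T.nodup]
    intro x hx
    exact (Polynomial.mem_roots hp0).2 (hT x hx)
  have heq : T.val = p.roots := by
    apply Multiset.eq_of_le_of_card_le hle
    exact (Polynomial.card_roots' p).trans hcard
  have h1 : p = ∏ c ∈ T, (Polynomial.X - Polynomial.C c) := by
    rw [← Polynomial.prod_multiset_X_sub_C_of_monic_of_roots_card_eq hp, ← heq]
    · rfl
    · rw [← heq]
      have := Multiset.card_le_card hle
      exact le_antisymm (this.trans (Polynomial.card_roots' p)) hcard
  rw [h1, ← Finset.mul_prod_erase T _ hb, Polynomial.derivative_mul]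
  simp [Polynomial.eval_prod]

lemma prod_univ [Fintype F] [DecidableEq F] (a : F) :
    ∏ c ∈ Finset.univ.erase a, (a - c) = -1 := by
  have h1 : 1 < Fintype.card F := Fintype.one_lt_card
  rw [prod_erase (Polynomial.X ^ Fintype.card F - Polynomial.X) ?_ _ ?_ ?_ a (Finset.mem_univ a)]
  · simp [Polynomial.derivative_X_pow]
  · exact Polynomial.monic_X_pow_sub (by rw [Polynomial.degree_X]; exact_mod_cast h1)
  · intro b _; simp [FiniteField.pow_card]
  · rw [FiniteField.X_pow_card_sub_X_natDegree_eq F h1, Finset.card_univ]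

lemma fiber_monic {S : Type*} [CommRing S] [Nontrivial S] {q : ℕ} (hq : 1 < q) (c : S) :
    (Polynomial.X ^ q + Polynomial.X - Polynomial.C c : Polynomial S).Monic ∧
    (Polynomial.X ^ q + Polynomial.X - Polynomial.C c : Polynomial S).natDegree = q := by
  have h : (Polynomial.X ^ q + Polynomial.X - Polynomial.C c : Polynomial S)
    = Polynomial.X ^ q + (Polynomial.X - Polynomial.C c) := by ring
  rw [h]
  constructor
  · exact Polynomial.monic_X_pow_add (by rw [Polynomial.degree_X_sub_C]; exact_mod_cast hq)
  · rw [Polynomial.natDegree_add_eq_left_of_natDegree_lt] <;> simp [hq]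

lemma fiber_le [Fintype F] [DecidableEq F] {q : ℕ} (hq : 1 < q) (c : F) :
    (Finset.univ.filter fun b : F => b ^ q + b = c).card ≤ q := by
  obtain ⟨hm, hd⟩ := fiber_monic hq c
  have : (Finset.univ.filter fun b : F => b ^ q + b = c).val ≤
      (Polynomial.X ^ q + Polynomial.X - Polynomial.C c : Polynomial F).roots := by
    rw [Multiset.le_iff_subset (Finset.nodup _)]
    intro x hx
    rw [Polynomial.mem_roots hm.ne_zero]
    have hx' : x ^ q + x = c := by simpa using hx
    simp [hx']
  exact (Multiset.card_le_card this).trans ((Polynomial.card_roots' _).trans hd.le)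

lemma fiber_card [Fintype F] [DecidableEq F] {q : ℕ} (hq : 1 < q)
    (hF : Fintype.card F = q ^ 2) (P : Fin (q ^ 3) → F × F)
    (hPinj : Function.Injective P)
    (hPcurve : ∀ i, (P i).1 ^ (q + 1) = (P i).2 ^ q + (P i).2) (a : F) :
    q ≤ (Finset.univ.filter fun b : F => b ^ q + b = a ^ (q + 1)).card := by
  by_contra hlt
  push Not at hlt
  have h1 : q ^ 3 = ∑ a : F, (Finset.univ.filter fun i => (P i).1 = a).card := by
    rw [← Finset.card_eq_sum_card_fiberwise (s := Finset.univ) (t := Finset.univ)]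
    · simp
    · intro x _; simp
  have h2 : ∀ a : F, (Finset.univ.filter fun i => (P i).1 = a).card ≤
      (Finset.univ.filter fun b : F => b ^ q + b = a ^ (q + 1)).card := by
    intro a
    apply Finset.card_le_card_of_injOn (fun i => (P i).2)
    · intro i hi
      have hi' : (P i).1 = a := by simpa using hi
      have := hPcurve i
      rw [hi'] at this
      simp [this]
    · intro i hi j hj hij
      have hi' : (P i).1 = a := by simpa using hi
      have hj' : (P j).1 = a := by simpa using hj
      exact hPinj (Prod.ext (hi'.trans hj'.symm) hij)
  have h3 : ∑ a : F, (Finset.univ.filter fun i => (P i).1 = a).card < ∑ _a : F, q := by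
    apply Finset.sum_lt_sum
    · intro b _; exact (h2 b).trans (fiber_le hq _)
    · exact ⟨a, Finset.mem_univ a, (h2 a).trans_lt hlt⟩
  rw [← h1, Finset.sum_const, Finset.card_univ, hF, smul_eq_mul, ← pow_succ] at h3
  exact lt_irrefl _ h3

lemma cast_q [Fintype F] {q : ℕ} (hF : Fintype.card F = q ^ 2) : (q : F) = 0 := by
  have := Nat.cast_card_eq_zero F
  rw [hF, Nat.cast_pow] at this
  exact pow_eq_zero_iff (two_ne_zero) |>.1 this

lemma Hpoly_eval [Fintype F] [DecidableEq F] {q : ℕ} (hq : 1 < q)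
    (hF : Fintype.card F = q ^ 2) (P : Fin (q ^ 3) → F × F)
    (hPinj : Function.Injective P)
    (hPcurve : ∀ i, (P i).1 ^ (q + 1) = (P i).2 ^ q + (P i).2) (i j : Fin (q ^ 3)) :
    MvPolynomial.eval ![(P j).1, (P j).2] (Hpoly q (P i).1 (P i).2) = if i = j then 1 else 0 := by
  have hform : MvPolynomial.eval ![(P j).1, (P j).2] (Hpoly q (P i).1 (P i).2) =
     -((∏ a ∈ Finset.univ.erase (P i).1, ((P j).1 - a)) *
    ∏ b ∈ (Finset.univ.filter fun b : F => b ^ q + b = (P i).2 ^ q + (P i).2).erase (P i).2,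
      ((P j).2 - b)) := by
    simp [Hpoly]
  rw [hform]
  split_ifs with h
  · subst h
    rw [prod_univ, prod_erase (Polynomial.X ^ q + Polynomial.X - Polynomial.C ((P i).2 ^ q + (P i).2))
      (fiber_monic hq _).1 _ ?_ ?_ _ (by simp)]
    · rw [Polynomial.derivative_sub, Polynomial.derivative_C]
      simp [Polynomial.derivative_X_pow, cast_q hF]
    · intro b hb
      have : b ^ q + b = (P i).2 ^ q + (P i).2 := by simpa using hb
      simp [this]
    · rw [(fiber_monic hq _).2, ← hPcurve]
      exact fiber_card hq hF P hPinj hPcurve _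
  · rw [neg_eq_zero, mul_eq_zero]
    by_cases h1 : (P j).1 = (P i).1
    · right
      apply Finset.prod_eq_zero (i := (P j).2) _ (sub_self _)
      rw [Finset.mem_erase]
      refine ⟨fun h2 => h (hPinj (Prod.ext h1.symm h2.symm)), ?_⟩
      have := hPcurve j
      rw [h1, hPcurve i] at this
      simp [this]
    · left
      exact Finset.prod_eq_zero (i := (P j).1) (by simp [h1]) (sub_self _)

end curvePart

lemma liftAlg_of {F T : Type*} [Field F] [CommRing T] [Algebra F T] (G : Polynomial (Polynomial F))
    (a b : T) (h : G.eval₂ (Polynomial.aeval a : Polynomial F →ₐ[F] T) b = 0) :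
    AdjoinRoot.liftAlgHom G (Polynomial.aeval a) b h (AdjoinRoot.of G Polynomial.X) = a :=
  (AdjoinRoot.lift_of (f := G) (i := ((Polynomial.aeval a : Polynomial F →ₐ[F] T) :
    Polynomial F →+* T)) h).trans (Polynomial.aeval_X a)

lemma liftAlg_root {F T : Type*} [Field F] [CommRing T] [Algebra F T]
    (G : Polynomial (Polynomial F))
    (a b : T) (h : G.eval₂ (Polynomial.aeval a : Polynomial F →ₐ[F] T) b = 0) :
    AdjoinRoot.liftAlgHom G (Polynomial.aeval a) b h (AdjoinRoot.root G) = b :=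
  AdjoinRoot.lift_root (f := G) (i := ((Polynomial.aeval a : Polynomial F →ₐ[F] T) :
    Polynomial F →+* T)) h

/-- Let `m` be a positive integer, `v ∈ F^n`, and `M ∈ F[X,Y]` with residue class `μ` in `R`.
Let `t = #{i : M(P_i) ≠ v_i}` (the Hamming distance between `v` and `ev(μ)`). Then the
`F`-vector space `F[X,Y,Z]/(⟨X^{q+1} − Y^q − Y⟩ + ⟨Z − H_v, X^{q²} − X⟩^m + ⟨Z − M⟩)` has
dimension `m(n − t)`. -/
theorem stmt_7 (q : ℕ) (hq : IsPrimePow q) (F : Type*) [Field F] [Fintype F] [DecidableEq F]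
    (hF : Fintype.card F = q ^ 2)
    (m : ℕ) (hm : 1 ≤ m)
    (P : Fin (q ^ 3) → F × F)
    (hPinj : Function.Injective P)
    (hPcurve : ∀ i, (P i).1 ^ (q + 1) = (P i).2 ^ q + (P i).2)
    (hPsurj : ∀ a b : F, a ^ (q + 1) = b ^ q + b → ∃ i, P i = (a, b))
    (v : Fin (q ^ 3) → F) (M : MvPolynomial (Fin 2) F) (t : ℕ)
    (ht : t = (Finset.univ.filter fun i : Fin (q ^ 3) =>
      MvPolynomial.eval ![(P i).1, (P i).2] M ≠ v i).card) :
    Module.finrank F (MvPolynomial (Fin 3) F ⧸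
      (Ideal.span {(X 0 : MvPolynomial (Fin 3) F) ^ (q + 1) - X 1 ^ q - X 1}
        + (Ideal.span {X 2 - MvPolynomial.rename (Fin.castSucc : Fin 2 → Fin 3)
              (∑ i, C (v i) * Hpoly q (P i).1 (P i).2),
            (X 0 : MvPolynomial (Fin 3) F) ^ (q ^ 2) - X 0}) ^ m
        + Ideal.span {X 2 - MvPolynomial.rename (Fin.castSucc : Fin 2 → Fin 3) M}))
      = m * (q ^ 3 - t) := by
  classical
  have hq1 : 1 < q := hq.one_lt
  let G : Polynomial (Polynomial F) :=
    Polynomial.X ^ q + Polynomial.X - Polynomial.C (Polynomial.X ^ (q + 1))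
  obtain ⟨hGm, hGd⟩ := fiber_monic hq1 (Polynomial.X ^ (q + 1) : Polynomial F)
  let p : Polynomial F := Polynomial.X ^ (q ^ 2) - Polynomial.X
  have hq2 : 1 < q ^ 2 := Nat.one_lt_pow two_ne_zero hq1
  have hpm : p.Monic :=
    Polynomial.monic_X_pow_sub (by rw [Polynomial.degree_X]; exact_mod_cast hq2)
  have hpd : p.natDegree = q ^ 2 := FiniteField.X_pow_card_sub_X_natDegree_eq F hq2
  let A := AdjoinRoot G
  let x : A := AdjoinRoot.of G Polynomial.X
  let y : A := AdjoinRoot.root G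
  let u : A := AdjoinRoot.of G p
  have hxy : x ^ (q + 1) - y ^ q - y = 0 := by
    have h := AdjoinRoot.eval₂_root G
    simp only [G, Polynomial.eval₂_sub, Polynomial.eval₂_add, Polynomial.eval₂_pow,
      Polynomial.eval₂_X, Polynomial.eval₂_C, map_pow] at h
    have h' : y ^ q + y - x ^ (q + 1) = 0 := h
    linear_combination -h'
  have hu : u = x ^ (q ^ 2) - x := by simp [u, p, x]
  -- evaluation
  let ev1 : Fin (q ^ 3) → (A →ₐ[F] F) := fun i =>
    AdjoinRoot.liftAlgHom G (Polynomial.aeval (P i).1) (P i).2 (by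
      simp only [G, Polynomial.eval₂_sub, Polynomial.eval₂_add, Polynomial.eval₂_pow,
        Polynomial.eval₂_X, Polynomial.eval₂_C, map_pow, RingHom.coe_coe, Polynomial.aeval_X]
      rw [hPcurve, sub_self])
  have hev1x : ∀ i, ev1 i x = (P i).1 := fun i =>
    liftAlg_of G _ _ _
  have hev1y : ∀ i, ev1 i y = (P i).2 := fun i =>
    liftAlg_root G _ _ _
  let ev : A →ₐ[F] (Fin (q ^ 3) → F) := AlgHom.pi ev1
  have hevi : ∀ a i, ev a i = ev1 i a := fun _ _ => rfl
  let θ : MvPolynomial (Fin 2) F →ₐ[F] A := MvPolynomial.aeval ![x, y]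
  have hθ : ∀ N i, ev1 i (θ N) = MvPolynomial.eval ![(P i).1, (P i).2] N := by
    intro N i
    have : (ev1 i).comp θ = MvPolynomial.aeval ![(P i).1, (P i).2] := by
      ext k
      fin_cases k
      · simp [θ, hev1x]
      · simp [θ, hev1y]
    have h2 := DFunLike.congr_fun this N
    rw [← MvPolynomial.coe_aeval_eq_eval]
    exact h2
  let H : (Fin (q ^ 3) → F) → MvPolynomial (Fin 2) F := fun w =>
    ∑ i, C (w i) * Hpoly q (P i).1 (P i).2
  have hH : ∀ w i, MvPolynomial.eval ![(P i).1, (P i).2] (H w) = w i := by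
    intro w i
    simp only [H, map_sum, map_mul, MvPolynomial.eval_C,
      Hpoly_eval hq1 hF P hPinj hPcurve]
    simp
  have hevs : Function.Surjective ev := fun w => ⟨θ (H w), by
    ext i; rw [hevi, hθ, hH]⟩
  have hfin : ∀ k, Module.Finite F (A ⧸ Ideal.span {u ^ k}) := fun k => by
    have := (adj_quot G hGm (p ^ k) (hpm.pow k)).1
    rwa [map_pow] at this
  have hdim : ∀ k, 1 ≤ k → Module.finrank F (A ⧸ Ideal.span {u ^ k})
      = k * Fintype.card (Fin (q ^ 3)) := fun k hk => by
    have := (adj_quot G hGm (p ^ k) (hpm.pow k)).2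
    rw [map_pow, hpm.natDegree_pow, hpd] at this
    rw [this (by positivity), hGd, Fintype.card_fin]
    ring
  have hevu : ev u = 0 := by
    ext i
    rw [hevi, hu, map_sub, map_pow, hev1x, ← hF, FiniteField.pow_card, sub_self]; rfl
  have hker : ∀ a, ev a = 0 ↔ a ∈ Ideal.span {u} := by
    have hle : ∀ a ∈ Ideal.span {u}, ev a = 0 := by
      intro a ha
      obtain ⟨b, rfl⟩ := Ideal.mem_span_singleton'.1 ha
      rw [map_mul, hevu, mul_zero]
    intro a
    refine ⟨fun ha => ?_, hle a⟩
    let l : (A ⧸ Ideal.span {u}) →ₐ[F] (Fin (q ^ 3) → F) := Ideal.Quotient.liftₐ _ ev hle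
    have hls : Function.Surjective l := fun w => by
      obtain ⟨b, hb⟩ := hevs w
      exact ⟨Ideal.Quotient.mk _ b, hb⟩
    have hf1 := hfin 1
    have hd1 := hdim 1 le_rfl
    rw [pow_one] at hf1 hd1
    have hinj : Function.Injective l.toLinearMap :=
      (LinearMap.injective_iff_surjective_of_finrank_eq_finrank (by
        rw [hd1, Module.finrank_pi, one_mul])).2 hls
    rw [← Ideal.Quotient.eq_zero_iff_mem]
    apply hinj
    rw [map_zero]
    exact ha
  have key := aux_main_s7 u ev hevs hker hfin m (hdim m hm) (θ M - θ (H v))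
  have hcard : Nat.card {i // ev (θ M - θ (H v)) i = 0} = q ^ 3 - t := by
    rw [Nat.card_eq_fintype_card, Fintype.card_subtype, ht]
    have h1 := Finset.card_filter_add_card_filter_not (s := (Finset.univ : Finset (Fin (q ^ 3))))
      (fun i => MvPolynomial.eval ![(P i).1, (P i).2] M = v i)
    have h2 : ∀ i, ev (θ M - θ (H v)) i = 0 ↔ MvPolynomial.eval ![(P i).1, (P i).2] M = v i := by
      intro i
      rw [hevi, map_sub, hθ, hθ, hH, sub_eq_zero]
    simp_rw [h2]
    rw [Finset.card_univ, Fintype.card_fin] at h1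
    simp only [ne_eq]
    omega
  rw [hcard] at key
  rw [← key]
  -- the presentation
  let ψ : MvPolynomial (Fin 3) F →ₐ[F] A := MvPolynomial.aeval ![x, y, θ M]
  have hψ0 : ψ (X 0) = x := by simp [ψ]
  have hψ1 : ψ (X 1) = y := by simp [ψ]
  have hψ2 : ψ (X 2) = θ M := by simp [ψ]
  have hψr : ∀ N, ψ (MvPolynomial.rename (Fin.castSucc : Fin 2 → Fin 3) N) = θ N := by
    intro N
    simp only [ψ, θ, MvPolynomial.aeval_rename]
    congr 2
    ext k
    fin_cases k <;> rfl
  let c : MvPolynomial (Fin 3) F := X 0 ^ (q + 1) - X 1 ^ q - X 1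
  let d : MvPolynomial (Fin 3) F := X 2 - MvPolynomial.rename (Fin.castSucc : Fin 2 → Fin 3) M
  let I2 : Ideal (MvPolynomial (Fin 3) F) :=
    Ideal.span {X 2 - MvPolynomial.rename (Fin.castSucc : Fin 2 → Fin 3) (H v),
      (X 0 : MvPolynomial (Fin 3) F) ^ (q ^ 2) - X 0}
  let K : Ideal (MvPolynomial (Fin 3) F) := Ideal.span {c} ⊔ Ideal.span {d}
  let B := MvPolynomial (Fin 3) F ⧸ K
  have hcK : Ideal.Quotient.mk K c = 0 := Ideal.Quotient.eq_zero_iff_mem.2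
    (Ideal.mem_sup_left (Ideal.mem_span_singleton_self c))
  have hdK : Ideal.Quotient.mk K d = 0 := Ideal.Quotient.eq_zero_iff_mem.2
    (Ideal.mem_sup_right (Ideal.mem_span_singleton_self d))
  let π : MvPolynomial (Fin 3) F →ₐ[F] B := Ideal.Quotient.mkₐ F K
  have hπc : π (X 0) ^ (q + 1) - π (X 1) ^ q - π (X 1) = 0 := by
    have h : π c = 0 := hcK
    simpa [c] using h
  let χ : A →ₐ[F] B := AdjoinRoot.liftAlgHom G (Polynomial.aeval (π (X 0))) (π (X 1)) (by
    simp only [G, Polynomial.eval₂_sub, Polynomial.eval₂_add, Polynomial.eval₂_pow,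
      Polynomial.eval₂_X, Polynomial.eval₂_C, map_pow, RingHom.coe_coe, Polynomial.aeval_X]
    linear_combination -hπc)
  have hχx : χ x = π (X 0) := liftAlg_of G _ _ _
  have hχy : χ y = π (X 1) := liftAlg_root G _ _ _
  have hχθ : ∀ N, χ (θ N) = π (MvPolynomial.rename (Fin.castSucc : Fin 2 → Fin 3) N) := by
    intro N
    have : χ.comp θ = π.comp (MvPolynomial.rename (Fin.castSucc : Fin 2 → Fin 3)) := by
      apply MvPolynomial.algHom_ext
      intro k
      fin_cases k
      · simp [θ, hχx]
      · simp [θ, hχy]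
    exact DFunLike.congr_fun this N
  have hχψ : χ.comp ψ = π := by
    apply MvPolynomial.algHom_ext
    intro k
    fin_cases k
    · simp [hψ0, hχx]
    · simp [hψ1, hχy]
    · have h : π d = 0 := hdK
      simp only [d, map_sub, sub_eq_zero] at h
      simp [hψ2, hχθ, h]
  have hkerψ : RingHom.ker ψ = K := by
    apply le_antisymm
    · intro a ha
      rw [RingHom.mem_ker] at ha
      have h := DFunLike.congr_fun hχψ a
      rw [AlgHom.comp_apply, ha, map_zero] at h
      exact Ideal.Quotient.eq_zero_iff_mem.1 h.symm
    · refine sup_le ?_ ?_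
      · rw [Ideal.span_singleton_le_iff_mem, RingHom.mem_ker]
        simp only [c, map_sub, map_pow, hψ0, hψ1, hxy]
      · rw [Ideal.span_singleton_le_iff_mem, RingHom.mem_ker]
        simp only [d, map_sub, hψ2, hψr, sub_self]
  have hψs : Function.Surjective ψ := by
    intro a
    obtain ⟨g, rfl⟩ := AdjoinRoot.mk_surjective a
    have hC : ∀ r : Polynomial F, ∃ b, ψ b = AdjoinRoot.of G r := by
      intro r
      refine ⟨Polynomial.aeval (X 0) r, ?_⟩
      rw [← Polynomial.aeval_algHom_apply, hψ0]
      induction r using Polynomial.induction_on' with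
      | add r s hr hs => rw [map_add, map_add, hr, hs]
      | monomial n r =>
        rw [Polynomial.aeval_monomial, ← Polynomial.C_mul_X_pow_eq_monomial, map_mul, map_pow]
        rfl
    induction g using Polynomial.induction_on' with
    | add r s hr hs =>
      obtain ⟨b, hb⟩ := hr
      obtain ⟨b', hb'⟩ := hs
      exact ⟨b + b', by rw [map_add, map_add, hb, hb']⟩
    | monomial n r =>
      obtain ⟨b, hb⟩ := hC r
      refine ⟨b * X 1 ^ n, ?_⟩
      rw [map_mul, map_pow, hb, hψ1, ← Polynomial.C_mul_X_pow_eq_monomial, map_mul, map_pow]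
      rfl
  have hmapI2 : Ideal.map ψ I2 = Ideal.span {θ M - θ (H v), u} := by
    rw [Ideal.map_span, Set.image_pair]
    simp only [map_sub, map_pow, hψ0, hψ2, hψr, hu]
  let ω : MvPolynomial (Fin 3) F →ₐ[F] (A ⧸ Ideal.span {θ M - θ (H v), u} ^ m) :=
    (Ideal.Quotient.mkₐ F _).comp ψ
  have hωs : Function.Surjective ω := (Ideal.Quotient.mkₐ_surjective F _).comp hψs
  have hkerω : RingHom.ker ω = Ideal.span {c} + I2 ^ m + Ideal.span {d} := by
    have h1 : RingHom.ker ω = Ideal.comap ψ (Ideal.map ψ (I2 ^ m)) := by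
      rw [Ideal.map_pow, hmapI2]
      ext a
      rw [RingHom.mem_ker, Ideal.mem_comap]
      exact Ideal.Quotient.eq_zero_iff_mem
    rw [h1, Ideal.comap_map_of_surjective' ψ hψs, hkerψ]
    simp only [K, Submodule.add_eq_sup]
    ac_rfl
  exact ((Ideal.quotientEquivAlgOfEq F hkerω.symm).trans
    (Ideal.quotientKerAlgEquivOfSurjective hωs)).toLinearEquiv.finrank_eq
end

section
/- Let ψ be a nonzero element of R, written uniquely as ψ = Σ c_{ij} x^i y^j with c_{ij} ∈ F, i ≥ 0, 0 ≤ j ≤ q − 1. Then the F-vector space R/ψR has dimension max{q·i + (q+1)·j : c_{ij} ≠ 0} (this maximum equals the pole order −v_{P∞}(ψ) of ψ at the point at infinity of the Hermitian curve). -/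
set_option synthInstance.maxHeartbeats 1000000
set_option maxHeartbeats 1000000

open MvPolynomial

namespace Herm

def wt (q : ℕ) (p : ℕ × Fin q) : ℕ := q * p.1 + (q + 1) * (p.2 : ℕ)

lemma wt_inj (q : ℕ) {p r : ℕ × Fin q} (h : wt q p = wt q r) : p = r := by
  obtain ⟨i, j, hj⟩ := p
  obtain ⟨k, l, hl⟩ := r
  simp only [wt] at h
  have h1 : (q * i + (q + 1) * j) % q = j := by
    rw [show q * i + (q + 1) * j = j + q * (i + j) by ring, Nat.add_mul_mod_self_left,
      Nat.mod_eq_of_lt hj]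
  have h2 : (q * k + (q + 1) * l) % q = l := by
    rw [show q * k + (q + 1) * l = l + q * (k + l) by ring, Nat.add_mul_mod_self_left,
      Nat.mod_eq_of_lt hl]
  have h3 : j = l := by rw [← h1, ← h2, h]
  subst h3
  have : q * i = q * k := by omega
  have := Nat.eq_of_mul_eq_mul_left (by omega) this
  subst this
  rfl

/-- index of the leading monomial of a product -/
def mi (q : ℕ) (p r : ℕ × Fin q) : ℕ × Fin q :=
  if h : (p.2 : ℕ) + r.2 < q then (p.1 + r.1, ⟨p.2 + r.2, h⟩)
  else (p.1 + r.1 + (q + 1), ⟨p.2 + r.2 - q, by have := p.2.2; have := r.2.2; omega⟩)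

lemma wt_mi (q : ℕ) (p r : ℕ × Fin q) : wt q (mi q p r) = wt q p + wt q r := by
  unfold mi wt
  split_ifs with h
  · simp only; ring
  · simp only
    obtain ⟨d, hd⟩ := Nat.exists_eq_add_of_le (not_lt.mp h)
    have : (p.2 : ℕ) + r.2 - q = d := by omega
    rw [this]
    have h2 : (q + 1) * ((p.2 : ℕ) + r.2) = (q + 1) * (q + d) := by rw [hd]
    nlinarith

/-- complement of the image of `mi p` -/
def T (q : ℕ) (p : ℕ × Fin q) : Finset (ℕ × Fin q) :=
  (Finset.univ : Finset (Fin q)).biUnion fun j =>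
    (Finset.range (p.1 + if j < p.2 then q + 1 else 0)).map
      ⟨fun i => (i, j), fun a b h => by simpa using h⟩

lemma mem_T (q : ℕ) (p t : ℕ × Fin q) :
    t ∈ T q p ↔ t.1 < p.1 + if t.2 < p.2 then q + 1 else 0 := by
  obtain ⟨i, j⟩ := t
  simp only [T, Finset.mem_biUnion, Finset.mem_univ, true_and, Finset.mem_map, Finset.mem_range]
  constructor
  · rintro ⟨_, _, h, h2⟩
    cases h2; exact h
  · intro h; exact ⟨j, i, h, rfl⟩

lemma card_T (q : ℕ) (p : ℕ × Fin q) : (T q p).card = wt q p := by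
  rw [T, Finset.card_biUnion]
  · simp only [Finset.card_map, Finset.card_range, Finset.sum_add_distrib, Finset.sum_const,
      Finset.card_univ, Fintype.card_fin, smul_eq_mul, wt]
    rw [← Finset.sum_filter, Finset.sum_const, smul_eq_mul]
    have : (Finset.univ.filter fun j : Fin q => j < p.2).card = p.2 := by
      rw [show (Finset.univ.filter fun j : Fin q => j < p.2) = Finset.Iio p.2 by ext; simp]
      simp
    rw [this]; ring
  · intro a _ b _ hab
    rw [Function.onFun, Finset.disjoint_left]
    intro t h1 h2
    simp only [Finset.mem_map] at h1 h2
    obtain ⟨_, _, rfl⟩ := h1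
    obtain ⟨_, _, h⟩ := h2
    exact hab (congrArg Prod.snd h).symm

lemma mi_not_mem_T (q : ℕ) (p r : ℕ × Fin q) : mi q p r ∉ T q p := by
  rw [mem_T]
  have := p.2.2
  have := r.2.2
  unfold mi
  split_ifs with h h1 h1 <;> simp only [Fin.lt_def] at * <;> omega

lemma exists_mi (q : ℕ) (p t : ℕ × Fin q) (h : t ∉ T q p) : ∃ r, mi q p r = t := by
  rw [mem_T] at h
  obtain ⟨i, j, hj⟩ := t
  obtain ⟨k, l, hl⟩ := p
  simp only [Fin.mk_lt_mk, not_lt] at h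
  split_ifs at h with h1
  · refine ⟨(i - k - (q + 1), ⟨j + q - l, by omega⟩), ?_⟩
    unfold mi
    rw [dif_neg (by simp only; omega)]
    ext <;> simp only <;> omega
  · refine ⟨(i - k, ⟨j - l, by omega⟩), ?_⟩
    unfold mi
    rw [dif_pos (by simp only; omega)]
    ext <;> simp only <;> omega

section main
variable {q : ℕ} {F R : Type*} [Field F] [CommRing R] [Algebra F R] (x y : R)

def e (x y : R) (p : ℕ × Fin q) : R := x ^ p.1 * y ^ (p.2 : ℕ)

variable (q F) in
def V (N : ℕ) : Submodule F R :=
  Submodule.span F {r | ∃ i j : ℕ, r = x ^ i * y ^ j ∧ q * i + (q + 1) * j < N}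

lemma V_mono {M N : ℕ} (h : M ≤ N) : V q F x y M ≤ V q F x y N := by
  apply Submodule.span_mono
  rintro r ⟨i, j, hr, hl⟩
  exact ⟨i, j, hr, by omega⟩

lemma e_mem (p : ℕ × Fin q) {N : ℕ} (h : wt q p < N) : e x y p ∈ V q F x y N :=
  Submodule.subset_span ⟨_, _, rfl, h⟩

lemma mul_V {M N : ℕ} {a b : R} (ha : a ∈ V q F x y M) (hb : b ∈ V q F x y (N + 1)) :
    a * b ∈ V q F x y (M + N) := by
  have h : V q F x y M * V q F x y (N + 1) ≤ V q F x y (M + N) := by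
    unfold V
    rw [Submodule.span_mul_span]
    apply Submodule.span_mono
    rintro _ ⟨_, ⟨i, j, rfl, h1⟩, _, ⟨k, l, rfl, h2⟩, rfl⟩
    refine ⟨i + k, j + l, by ring, ?_⟩
    rw [mul_add, mul_add]; omega
  exact h (Submodule.mul_mem_mul ha hb)

lemma V_le (hq : 2 ≤ q) (hxy : x ^ (q + 1) = y ^ q + y) (N : ℕ) :
    V q F x y N ≤ Submodule.span F {r | ∃ p : ℕ × Fin q, r = e x y p ∧ wt q p < N} := by
  unfold V
  rw [Submodule.span_le]
  rintro _ ⟨i, j, rfl, h⟩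
  induction j using Nat.strong_induction_on generalizing i with
  | _ j ih =>
    by_cases hj : j < q
    · exact Submodule.subset_span ⟨(i, ⟨j, hj⟩), rfl, h⟩
    · obtain ⟨d, rfl⟩ := Nat.exists_eq_add_of_le (not_lt.mp hj)
      have : x ^ i * y ^ (q + d) = x ^ (i + (q + 1)) * y ^ d - x ^ i * y ^ (d + 1) := by
        rw [pow_add x i, hxy]; ring
      rw [this]
      apply Submodule.sub_mem
      · apply ih _ (by omega); nlinarith
      · apply ih _ (by omega); nlinarith

lemma e_mul (hq : 2 ≤ q) (hxy : x ^ (q + 1) = y ^ q + y) (p r : ℕ × Fin q) :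
    e x y p * e x y r - e x y (mi q p r) ∈ V q F x y (wt q p + wt q r) := by
  unfold mi
  split_ifs with h
  · have : e x y p * e x y r - e x y (p.1 + r.1, (⟨p.2 + r.2, h⟩ : Fin q)) = 0 := by
      simp only [e]; ring
    rw [this]; exact zero_mem _
  · obtain ⟨d, hd⟩ := Nat.exists_eq_add_of_le (not_lt.mp h)
    have h1 : (p.2 : ℕ) + r.2 - q = d := by omega
    have h2 : (q + 1) * ((p.2 : ℕ) + r.2) = (q + 1) * (q + d) := by rw [hd]
    have : x ^ p.1 * y ^ (p.2 : ℕ) * (x ^ r.1 * y ^ (r.2 : ℕ))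
        - x ^ (p.1 + r.1 + (q + 1)) * y ^ d = - (x ^ (p.1 + r.1) * y ^ (d + 1)) := by
      have : x ^ p.1 * y ^ (p.2 : ℕ) * (x ^ r.1 * y ^ (r.2 : ℕ))
        = x ^ (p.1 + r.1) * y ^ (q + d) := by rw [← hd]; ring
      rw [this, pow_add x (p.1 + r.1), hxy]; ring
    simp only [e, h1]
    rw [this]
    apply Submodule.neg_mem
    refine Submodule.subset_span ⟨_, _, rfl, ?_⟩
    unfold wt
    nlinarith

/-- leading term decomposition -/
lemma top (c : (ℕ × Fin q) →₀ F) (hc : c ≠ 0) : ∃ p, c p ≠ 0 ∧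
    wt q p = c.support.sup (wt q) ∧
    (∑ t ∈ c.support, c t • e x y t) - c p • e x y p ∈ V q F x y (wt q p) := by
  classical
  obtain ⟨p, hp, h⟩ := Finset.exists_mem_eq_sup c.support
    (Finsupp.support_nonempty_iff.mpr hc) (wt q)
  refine ⟨p, Finsupp.mem_support_iff.mp hp, h.symm, ?_⟩
  rw [← Finset.add_sum_erase _ _ hp, add_sub_cancel_left]
  apply Submodule.sum_mem
  intro t ht
  apply Submodule.smul_mem
  apply e_mem
  have h1 : wt q t ≤ wt q p := h ▸ Finset.le_sup (f := wt q) (Finset.mem_of_mem_erase ht)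
  refine lt_of_le_of_ne h1 fun h2 => Finset.ne_of_mem_erase ht (wt_inj q h2)

lemma mul_top (hq : 2 ≤ q) (hxy : x ^ (q + 1) = y ^ q + y) {p r : ℕ × Fin q} {a b : R} {α β : F}
    (ha : a - α • e x y p ∈ V q F x y (wt q p)) (hb : b - β • e x y r ∈ V q F x y (wt q r)) :
    a * b - (α * β) • e x y (mi q p r) ∈ V q F x y (wt q (mi q p r)) := by
  have hb' : b ∈ V q F x y (wt q r + 1) := by
    rw [← sub_add_cancel b (β • e x y r)]
    exact add_mem (V_mono x y (by omega) hb) (Submodule.smul_mem _ _ (e_mem x y r (by omega)))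
  have h1 := mul_V x y ha hb'
  have h2 := mul_V x y hb (Submodule.smul_mem _ α (e_mem (F := F) x y p (Nat.lt_succ_self _)))
  have h3 := Submodule.smul_mem _ (α * β) (e_mul (F := F) x y hq hxy p r)
  rw [wt_mi]
  rw [add_comm] at h2
  convert add_mem (add_mem h1 h2) h3 using 1
  simp only [Algebra.smul_def, map_mul]
  ring

theorem main (hq : 2 ≤ q) (hxy : x ^ (q + 1) = y ^ q + y)
    (hspan : ∀ r : R, ∃ N, r ∈ V q F x y N)
    (coef : (ℕ × Fin q) → R →ₗ[F] F)
    (hcoef : ∀ p t, coef p (e x y t) = if p = t then 1 else 0)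
    (c : (ℕ × Fin q) →₀ F) (hc : c ≠ 0) :
    Module.finrank F (R ⧸ Ideal.span {∑ t ∈ c.support, c t • e x y t})
      = c.support.sup (wt q) := by
  classical
  have hcV : ∀ N, ∀ r ∈ V q F x y N, ∀ p, N ≤ wt q p → coef p r = 0 := by
    intro N r hr p hp
    have : Submodule.span F {r | ∃ p : ℕ × Fin q, r = e x y p ∧ wt q p < N}
        ≤ LinearMap.ker (coef p) := by
      rw [Submodule.span_le]
      rintro _ ⟨t, rfl, ht⟩
      simp only [SetLike.mem_coe, LinearMap.mem_ker, hcoef]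
      rw [if_neg]
      rintro rfl
      omega
    exact this (V_le x y hq hxy N hr)
  obtain ⟨p, hcp, hwp, hp⟩ := top x y c hc
  rw [← hwp]
  set ψ := ∑ t ∈ c.support, c t • e x y t with hψ
  let I := Ideal.span {ψ}
  let π : R →ₗ[F] R ⧸ I := (Ideal.Quotient.mkₐ F I).toLinearMap
  let v : T q p → R ⧸ I := fun t => π (e x y t.1)
  have hall : ∀ N, ∀ r ∈ V q F x y N, π r ∈ Submodule.span F (Set.range v) := by
    intro N
    induction N using Nat.strong_induction_on with
    | _ N ih =>
      intro r hr
      have : Submodule.span F {r | ∃ p : ℕ × Fin q, r = e x y p ∧ wt q p < N}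
          ≤ (Submodule.span F (Set.range v)).comap π := by
        rw [Submodule.span_le]
        rintro _ ⟨t, rfl, ht⟩
        simp only [SetLike.mem_coe, Submodule.mem_comap]
        by_cases htT : t ∈ T q p
        · exact Submodule.subset_span ⟨⟨t, htT⟩, rfl⟩
        · obtain ⟨r, rfl⟩ := exists_mi q p t htT
          have h1 := mul_top (b := e x y r) (β := (1 : F)) (r := r) x y hq hxy hp (by simp)
          have h2 := ih _ ht _ h1
          have h3 : π (ψ * e x y r) = 0 :=
            Ideal.Quotient.eq_zero_iff_mem.mpr
              (Ideal.mul_mem_right _ _ (Ideal.subset_span rfl))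
          rw [map_sub, h3, zero_sub, map_smul, mul_one] at h2
          have h4 := Submodule.smul_mem _ (-(c p)⁻¹) h2
          simpa [smul_smul, hcp] using h4
      exact this (V_le x y hq hxy N hr)
  have hsp : ⊤ ≤ Submodule.span F (Set.range v) := by
    intro z _
    obtain ⟨r, rfl⟩ := Ideal.Quotient.mk_surjective z
    obtain ⟨N, hN⟩ := hspan r
    exact hall N r hN
  have hli : LinearIndependent F v := by
    rw [Fintype.linearIndependent_iff]
    intro g hg
    have h0 : π (∑ t, g t • e x y t.1) = 0 := by
      rw [map_sum, ← hg]; simp [v]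
    have h1 : (∑ t, g t • e x y t.1) ∈ I := Ideal.Quotient.eq_zero_iff_mem.mp h0
    obtain ⟨r, hr⟩ := Ideal.mem_span_singleton'.mp h1
    have hco : ∀ s, coef s (∑ t, g t • e x y t.1) = if h : s ∈ T q p then g ⟨s, h⟩ else 0 := by
      intro s
      simp only [map_sum, map_smul, hcoef, smul_eq_mul, mul_ite, mul_one, mul_zero]
      split_ifs with h
      · rw [Finset.sum_eq_single ⟨s, h⟩]
        · simp
        · rintro ⟨b, hb⟩ _ hne
          rw [if_neg]; rintro rfl; exact hne rfl
        · simp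
      · apply Finset.sum_eq_zero
        rintro ⟨b, hb⟩ _
        rw [if_neg]; rintro rfl; exact h hb
    have hd : ∃ d : (ℕ × Fin q) →₀ F, r = ∑ t ∈ d.support, d t • e x y t := by
      obtain ⟨N, hN⟩ := hspan r
      have h2 : r ∈ Submodule.span F (Set.range (e (q := q) x y)) := by
        refine Submodule.span_mono ?_ (V_le x y hq hxy N hN)
        rintro _ ⟨t, rfl, _⟩
        exact ⟨t, rfl⟩
      obtain ⟨d, hd⟩ := (Finsupp.mem_span_range_iff_exists_finsupp).mp h2
      exact ⟨d, hd.symm⟩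
    obtain ⟨d, rfl⟩ := hd
    by_cases hd0 : d = 0
    · subst hd0
      intro t
      have := hco t.1
      rw [← hr] at this
      simpa using this.symm
    · exfalso
      obtain ⟨p1, hdp, -, hp1⟩ := top x y d hd0
      have h3 := mul_top x y hq hxy hp hp1
      have h4 := hcV _ _ h3 (mi q p p1) le_rfl
      rw [mul_comm ψ, hr, map_sub, hco, dif_neg (mi_not_mem_T q p p1), map_smul, hcoef] at h4
      simp [hcp, hdp] at h4
  rw [Module.finrank_eq_card_basis (Module.Basis.mk hli hsp)]
  rw [Fintype.card_coe, card_T]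
end main

end Herm

namespace Herm
open Polynomial in
/-- the defining polynomial over `F[x]` -/
noncomputable def g (q : ℕ) (F : Type*) [Field F] : F[X][X] :=
  Polynomial.X ^ q + (Polynomial.X - Polynomial.C (Polynomial.X ^ (q + 1)))

lemma g_aux (q : ℕ) (hq : 2 ≤ q) (F : Type*) [Field F] :
    (Polynomial.X - Polynomial.C (Polynomial.X ^ (q + 1)) :
      Polynomial (Polynomial F)).degree < q := by
  rw [Polynomial.degree_X_sub_C]
  exact_mod_cast hq

lemma g_monic (q : ℕ) (hq : 2 ≤ q) (F : Type*) [Field F] : (g q F).Monic :=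
  Polynomial.monic_X_pow_add (g_aux q hq F)

lemma g_degree (q : ℕ) (hq : 2 ≤ q) (F : Type*) [Field F] : (g q F).degree = q := by
  unfold g
  rw [Polynomial.degree_add_eq_left_of_degree_lt]
  · simp
  · rw [Polynomial.degree_X_pow]; exact g_aux q hq F

lemma exists_coef (q : ℕ) (hq : 2 ≤ q) (F : Type*) [Field F] (I : Ideal (MvPolynomial (Fin 2) F))
    (hI : I = Ideal.span {(X 0 : MvPolynomial (Fin 2) F) ^ (q + 1) - X 1 ^ q - X 1}) :
    ∃ coef : (ℕ × Fin q) → (MvPolynomial (Fin 2) F ⧸ I) →ₗ[F] F,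
      ∀ p t, coef p (e (Ideal.Quotient.mk I (X 0)) (Ideal.Quotient.mk I (X 1)) t)
        = if p = t then 1 else 0 := by
  let ev : MvPolynomial (Fin 2) F →ₐ[F] AdjoinRoot (g q F) :=
    aeval ![AdjoinRoot.of (g q F) Polynomial.X, AdjoinRoot.root (g q F)]
  have hev : ∀ a ∈ I, ev a = 0 := by
    intro a ha
    rw [hI, Ideal.mem_span_singleton'] at ha
    obtain ⟨b, rfl⟩ := ha
    have h0 : AdjoinRoot.mk (g q F) (g q F) = 0 := AdjoinRoot.mk_self
    have h1 : AdjoinRoot.root (g q F) ^ q + (AdjoinRoot.root (g q F)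
        - AdjoinRoot.of (g q F) Polynomial.X ^ (q + 1)) = 0 := by
      conv_rhs => rw [← h0]
      conv_rhs => arg 2; rw [g]
      simp only [map_add, map_sub, map_pow, AdjoinRoot.mk_X, AdjoinRoot.mk_C]
    have h2 : ev ((X 0 : MvPolynomial (Fin 2) F) ^ (q + 1) - X 1 ^ q - X 1) = 0 := by
      simp only [ev, map_sub, map_pow, aeval_X, Matrix.cons_val_zero, Matrix.cons_val_one]
      linear_combination -h1
    rw [map_mul, h2, mul_zero]
  let φ := Ideal.Quotient.liftₐ I ev hev
  refine ⟨fun p => (Polynomial.lcoeff F p.1) ∘ₗ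
    ((Polynomial.lcoeff (Polynomial F) p.2).restrictScalars F) ∘ₗ
    ((AdjoinRoot.modByMonicHom (g_monic q hq F)).restrictScalars F) ∘ₗ φ.toLinearMap, ?_⟩
  intro p t
  have h1 : φ (e (Ideal.Quotient.mk I (X 0)) (Ideal.Quotient.mk I (X 1)) t)
      = AdjoinRoot.mk (g q F) (Polynomial.C (Polynomial.X ^ t.1) * Polynomial.X ^ (t.2 : ℕ)) := by
    have : e (Ideal.Quotient.mk I (X 0)) (Ideal.Quotient.mk I (X 1)) t
      = Ideal.Quotient.mk I (X 0 ^ t.1 * X 1 ^ (t.2 : ℕ)) := by simp [e]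
    rw [this]
    change ev _ = _
    simp [ev]
  simp only [LinearMap.comp_apply, AlgHom.toLinearMap_apply, h1, LinearMap.restrictScalars_apply,
    AdjoinRoot.modByMonicHom_mk, Polynomial.lcoeff_apply]
  rw [(Polynomial.modByMonic_eq_self_iff (g_monic q hq F)).mpr]
  · rw [Polynomial.coeff_C_mul, Polynomial.coeff_X_pow]
    obtain ⟨i, j⟩ := p
    obtain ⟨k, l⟩ := t
    by_cases h : j = l
    · subst h
      simp [Polynomial.coeff_X_pow]
    · have : (j : ℕ) ≠ l := fun h' => h (Fin.ext h')
      simp [h, this]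
  · rw [g_degree q hq]
    refine lt_of_le_of_lt (Polynomial.degree_C_mul_X_pow_le _ _) ?_
    exact_mod_cast t.2.2

lemma V_span (q : ℕ) (F : Type*) [Field F] (I : Ideal (MvPolynomial (Fin 2) F))
    (r : MvPolynomial (Fin 2) F ⧸ I) :
    ∃ N, r ∈ V q F (Ideal.Quotient.mk I (X 0)) (Ideal.Quotient.mk I (X 1)) N := by
  obtain ⟨f, rfl⟩ := Ideal.Quotient.mk_surjective r
  induction f using MvPolynomial.induction_on' with
  | monomial u a =>
    refine ⟨q * u 0 + (q + 1) * u 1 + 1, ?_⟩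
    have : Ideal.Quotient.mk I (monomial u a)
        = a • (Ideal.Quotient.mk I (X 0) ^ u 0 * Ideal.Quotient.mk I (X 1) ^ u 1) := by
      rw [monomial_eq, Finsupp.prod_fintype _ _ (by simp), Fin.prod_univ_two, ← smul_eq_C_mul]
      rw [← map_pow, ← map_pow, ← map_mul]
      rfl
    rw [this]
    exact Submodule.smul_mem _ _ (Submodule.subset_span ⟨_, _, rfl, by omega⟩)
  | add f g hf hg =>
    obtain ⟨M, hM⟩ := hf
    obtain ⟨N, hN⟩ := hg
    refine ⟨max M N, ?_⟩
    rw [map_add]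
    exact add_mem (V_mono _ _ (le_max_left _ _) hM) (V_mono _ _ (le_max_right _ _) hN)

end Herm

/-- Let `ψ` be a nonzero element of `R = F[X,Y]/⟨X^{q+1} − Y^q − Y⟩`, written (uniquely) as
`ψ = Σ c_{ij} x^i y^j` with `c_{ij} ∈ F`, `i ≥ 0`, `0 ≤ j ≤ q − 1`. Then the `F`-vector
space `R/ψR` has dimension `max{q·i + (q+1)·j : c_{ij} ≠ 0}` (this maximum equals the pole
order `−v_{P∞}(ψ)` of `ψ` at the point at infinity of the Hermitian curve). -/
theorem stmt_8 (q : ℕ) (hq : IsPrimePow q) (F : Type*) [Field F] [Fintype F]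
    (hF : Fintype.card F = q ^ 2) (c : (ℕ × Fin q) →₀ F) (hc : c ≠ 0) :
    Module.finrank F
      ((MvPolynomial (Fin 2) F ⧸
          Ideal.span {(X 0 : MvPolynomial (Fin 2) F) ^ (q + 1) - X 1 ^ q - X 1}) ⧸
        Ideal.span {Ideal.Quotient.mk
          (Ideal.span {(X 0 : MvPolynomial (Fin 2) F) ^ (q + 1) - X 1 ^ q - X 1})
          (∑ p ∈ c.support, C (c p) * X 0 ^ p.1 * X 1 ^ (p.2 : ℕ))})
      = c.support.sup (fun p => q * p.1 + (q + 1) * (p.2 : ℕ)) := by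
  have hq2 : 2 ≤ q := hq.two_le
  set I := Ideal.span {(X 0 : MvPolynomial (Fin 2) F) ^ (q + 1) - X 1 ^ q - X 1} with hI
  obtain ⟨coef, hcoef⟩ := Herm.exists_coef q hq2 F I hI
  have hxy : Ideal.Quotient.mk I (X 0) ^ (q + 1)
      = Ideal.Quotient.mk I (X 1) ^ q + Ideal.Quotient.mk I (X 1) := by
    rw [← map_pow, ← map_pow, ← map_add, Ideal.Quotient.eq, hI, ← sub_sub]
    exact Ideal.subset_span rfl
  have key := Herm.main _ _ hq2 hxy (Herm.V_span q F I) coef hcoef c hc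
  have hψ : Ideal.Quotient.mk I (∑ p ∈ c.support, C (c p) * X 0 ^ p.1 * X 1 ^ (p.2 : ℕ))
      = ∑ t ∈ c.support, c t • Herm.e (Ideal.Quotient.mk I (X 0)) (Ideal.Quotient.mk I (X 1)) t := by
    rw [map_sum]
    refine Finset.sum_congr rfl fun t _ => ?_
    rw [mul_assoc, ← smul_eq_C_mul, Herm.e, ← map_pow, ← map_pow, ← map_mul]
    rfl
  rw [hψ]
  exact key
end

section
/- Let u be a positive integer with u < n = q³. If μ ∈ R is nonzero with deg_u(μ) ≤ u (i.e., μ ∈ L(uP∞)), then the number of points P_i (1 ≤ i ≤ n) with μ(P_i) = 0 is at most u. Consequently the evaluation map is injective on L(uP∞), and the Hermitian code C_u = ev(L(uP∞)) has minimum distance at least n − u. -/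
open MvPolynomial

/-- The `F`-linear combination of the monomials `X^i Y^j` (`0 ≤ j ≤ q−1`) of `F[X,Y]`
with coefficient family `c`; these monomials represent the canonical `F`-basis of `R`. -/
noncomputable def monoSum2 {q : ℕ} {F : Type*} [Field F] (c : (ℕ × Fin q) →₀ F) :
    MvPolynomial (Fin 2) F :=
  ∑ p ∈ c.support, C (c p) * X 0 ^ p.1 * X 1 ^ (p.2 : ℕ)


/-- Every monomial function restricted to the zero set lies in the span of the footprint. -/
lemma footprint_mem {F : Type*} [Field F] {ι : Type*} (q : ℕ) (hq : 1 < q)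
    (x y : ι → F) (hcurve : ∀ i, x i ^ (q + 1) = y i ^ q + y i)
    (c : (ℕ × Fin q) →₀ F)
    (hz : ∀ i, ∑ p ∈ c.support, c p * x i ^ p.1 * y i ^ (p.2 : ℕ) = 0)
    (m : ℕ × Fin q) (hm : m ∈ c.support)
    (hmax : ∀ p ∈ c.support, p ≠ m →
      q * p.1 + (q + 1) * (p.2 : ℕ) < q * m.1 + (q + 1) * (m.2 : ℕ))
    (W : Submodule F (ι → F))
    (hW1 : ∀ i j, j < (m.2 : ℕ) → i < m.1 + q + 1 → x ^ i * y ^ j ∈ W)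
    (hW2 : ∀ i j, (m.2 : ℕ) ≤ j → j < q → i < m.1 → x ^ i * y ^ j ∈ W) :
    ∀ w j i, q * i + (q + 1) * j = w → x ^ i * y ^ j ∈ W := by
  have hcm : c m ≠ 0 := Finsupp.mem_support_iff.mp hm
  have hcur : ∀ k, x k ^ q * x k = y k ^ q + y k := fun k => by rw [← pow_succ, hcurve]
  intro w
  induction w using Nat.strong_induction_on with
  | _ w ihw =>
  -- reduction of multiples of the leading monomial
  have red : ∀ i j, q * (i + m.1) + (q + 1) * (j + m.2) = w →
      x ^ (i + m.1) * y ^ (j + (m.2 : ℕ)) ∈ W := by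
    intro i j hw
    have e : x ^ (i + m.1) * y ^ (j + (m.2 : ℕ)) =
        ∑ p ∈ c.support.erase m, (-(c m)⁻¹ * c p) • (x ^ (i + p.1) * y ^ (j + (p.2 : ℕ))) := by
      funext k
      have h := hz k
      rw [← Finset.add_sum_erase _ _ hm] at h
      have h2 : x k ^ m.1 * y k ^ (m.2 : ℕ) =
          -(c m)⁻¹ * ∑ p ∈ c.support.erase m, c p * x k ^ p.1 * y k ^ (p.2 : ℕ) := by
        have h3 := eq_neg_of_add_eq_zero_right h
        rw [h3]
        field_simp
      simp only [Pi.mul_apply, Pi.pow_apply, Finset.sum_apply, Pi.smul_apply, smul_eq_mul]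
      calc x k ^ (i + m.1) * y k ^ (j + (m.2 : ℕ))
          = x k ^ i * y k ^ j * (x k ^ m.1 * y k ^ (m.2 : ℕ)) := by ring
        _ = _ := by
          rw [h2, Finset.mul_sum, Finset.mul_sum]
          refine Finset.sum_congr rfl fun p _ => ?_
          ring
    rw [e]
    refine Submodule.sum_mem _ fun p hp => Submodule.smul_mem _ _ ?_
    obtain ⟨hp1, hp2⟩ := Finset.mem_erase.mp hp
    have := hmax p hp2 hp1
    refine ihw (q * (i + p.1) + (q + 1) * (j + (p.2 : ℕ))) ?_ _ _ rfl
    nlinarith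
  intro j
  induction j using Nat.strong_induction_on with
  | _ j ihj =>
  intro i hw
  by_cases hjq : q ≤ j
  · obtain ⟨t, rfl⟩ := Nat.exists_eq_add_of_le hjq
    have e : x ^ i * y ^ (q + t) = x ^ (i + q + 1) * y ^ t - x ^ i * y ^ (t + 1) := by
      funext k
      simp only [Pi.mul_apply, Pi.pow_apply, Pi.sub_apply]
      linear_combination (-x k ^ i * y k ^ t) * hcur k
    rw [e]
    refine Submodule.sub_mem _ (ihj t (by omega) _ ?_) ?_
    · rw [← hw]; ring
    · refine ihw (q * i + (q + 1) * (t + 1)) ?_ _ _ rfl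
      nlinarith
  · push Not at hjq
    by_cases hb : (m.2 : ℕ) ≤ j
    · by_cases ha : m.1 ≤ i
      · obtain ⟨t, rfl⟩ := Nat.exists_eq_add_of_le' hb
        obtain ⟨s, rfl⟩ := Nat.exists_eq_add_of_le' ha
        exact red s t hw
      · exact hW2 i j hb hjq (by omega)
    · by_cases ha : m.1 + q + 1 ≤ i
      · obtain ⟨s, rfl⟩ := Nat.exists_eq_add_of_le' ha
        obtain ⟨t, ht⟩ := Nat.exists_eq_add_of_le' (show (m.2 : ℕ) ≤ j + q by have := m.2.2; omega)
        have e : x ^ (s + (m.1 + q + 1)) * y ^ j =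
            x ^ (s + m.1) * y ^ (t + (m.2 : ℕ)) + x ^ (s + m.1) * y ^ (j + 1) := by
          rw [← ht]
          funext k
          simp only [Pi.mul_apply, Pi.pow_apply, Pi.add_apply]
          linear_combination (x k ^ (s + m.1) * y k ^ j) * hcur k
        rw [e]
        refine Submodule.add_mem _ (red s t ?_) ?_
        · rw [← ht, ← hw]; ring
        · refine ihw (q * (s + m.1) + (q + 1) * (j + 1)) ?_ _ _ rfl
          nlinarith
      · exact hW1 i j (by omega) (by omega)

lemma zeros_le {F : Type*} [Field F] [Fintype F] {ι : Type*} [Fintype ι] (q : ℕ) (hq : 1 < q)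
    (x y : ι → F) (hinj : Function.Injective fun i => (x i, y i))
    (hcurve : ∀ i, x i ^ (q + 1) = y i ^ q + y i)
    (c : (ℕ × Fin q) →₀ F) (hc : c ≠ 0)
    (hz : ∀ i, ∑ p ∈ c.support, c p * x i ^ p.1 * y i ^ (p.2 : ℕ) = 0)
    (u : ℕ) (hu : ∀ p ∈ c.support, q * p.1 + (q + 1) * (p.2 : ℕ) ≤ u) :
    Fintype.card ι ≤ u := by
  classical
  obtain ⟨m, hm, hmax⟩ := Finset.exists_max_image c.support
    (fun p => q * p.1 + (q + 1) * (p.2 : ℕ)) (Finsupp.support_nonempty_iff.mpr hc)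
  have hmax' : ∀ p ∈ c.support, p ≠ m →
      q * p.1 + (q + 1) * (p.2 : ℕ) < q * m.1 + (q + 1) * (m.2 : ℕ) := by
    intro p hp hne
    refine lt_of_le_of_ne (hmax p hp) fun h => hne ?_
    have h2 : (p.2 : ℕ) = m.2 := by
      have h3 := congrArg (· % q) h
      have e : ∀ a b : ℕ, q * a + (q + 1) * b = b + q * (a + b) := fun a b => by ring
      simp only [e, Nat.add_mul_mod_self_left] at h3
      rwa [Nat.mod_eq_of_lt p.2.2, Nat.mod_eq_of_lt m.2.2] at h3
    have h1 : p.1 = m.1 := by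
      rw [h2] at h
      exact Nat.eq_of_mul_eq_mul_left (by omega) (Nat.add_right_cancel h)
    exact Prod.ext h1 (Fin.ext h2)
  let B : Finset (ℕ × ℕ) := (Finset.range (m.1 + q + 1) ×ˢ Finset.range m.2) ∪
    (Finset.range m.1 ×ˢ Finset.Ico (m.2 : ℕ) q)
  let S : Finset (ι → F) := B.image fun p => x ^ p.1 * y ^ p.2
  let W : Submodule F (ι → F) := Submodule.span F (S : Set (ι → F))
  have hS : ∀ i j, (i, j) ∈ B → x ^ i * y ^ j ∈ W := fun i j h =>
    Submodule.subset_span (Finset.mem_coe.mpr (Finset.mem_image.mpr ⟨(i, j), h, rfl⟩))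
  have hall := footprint_mem q hq x y hcurve c hz m hm hmax' W
    (fun i j h1 h2 => hS i j (by simp [B]; omega))
    (fun i j h1 h2 h3 => hS i j (by simp [B]; omega))
  have htop : W = ⊤ := by
    rw [eq_top_iff]
    intro g _
    let pt : ι → (Fin 2 → F) := fun i => ![x i, y i]
    have hpt : Function.Injective pt := fun i j h => hinj (by
      have h0 := congrFun h 0
      have h1 := congrFun h 1
      simp [pt] at h0 h1
      simp [h0, h1])
    have hsurj : (Function.extend pt g 0) ∈
        (MvPolynomial.restrictDegree (Fin 2) F (Fintype.card F - 1)).map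
          (MvPolynomial.evalₗ F (Fin 2)) := by
      rw [MvPolynomial.map_restrict_dom_evalₗ]; trivial
    obtain ⟨p, -, hp⟩ := Submodule.mem_map.mp hsurj
    have hg : g = ∑ d ∈ p.support, p.coeff d • (x ^ (d 0) * y ^ (d 1)) := by
      funext i
      have h := congrFun hp (pt i)
      rw [hpt.extend_apply] at h
      rw [← h, MvPolynomial.evalₗ_apply, MvPolynomial.eval_eq']
      simp [pt, Finset.sum_apply, Fin.prod_univ_two]
    rw [hg]
    exact Submodule.sum_mem _ fun d _ => Submodule.smul_mem _ _ (hall _ _ _ rfl)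
  have h1 : Module.finrank F W ≤ S.card := finrank_span_finset_le_card S
  rw [htop, finrank_top, Module.finrank_fintype_fun_eq_card] at h1
  have h2 : S.card ≤ B.card := Finset.card_image_le
  have h3 : B.card ≤ (m.1 + q + 1) * m.2 + m.1 * (q - m.2) :=
    (Finset.card_union_le _ _).trans (by simp)
  have h4 : (m.1 + q + 1) * m.2 + m.1 * (q - m.2) = q * m.1 + (q + 1) * (m.2 : ℕ) := by
    obtain ⟨t, ht⟩ := Nat.exists_eq_add_of_le m.2.2.le
    have : q - (m.2 : ℕ) = t := by omega
    rw [this]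
    calc (m.1 + q + 1) * (m.2 : ℕ) + m.1 * t = ((m.2 : ℕ) + t) * m.1 + (q + 1) * (m.2 : ℕ) := by ring
      _ = _ := by rw [← ht]
  have := hu m hm
  omega

lemma eval_monoSum2 {q : ℕ} {F : Type*} [Field F] (c : (ℕ × Fin q) →₀ F) (a b : F) :
    MvPolynomial.eval ![a, b] (monoSum2 c) = c.sum fun p r => r * a ^ p.1 * b ^ (p.2 : ℕ) := by
  simp [monoSum2, Finsupp.sum]

lemma eval_monoSum2_sub {q : ℕ} {F : Type*} [Field F] (c₁ c₂ : (ℕ × Fin q) →₀ F) (a b : F) :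
    MvPolynomial.eval ![a, b] (monoSum2 (c₁ - c₂)) =
      MvPolynomial.eval ![a, b] (monoSum2 c₁) - MvPolynomial.eval ![a, b] (monoSum2 c₂) := by
  simp only [eval_monoSum2]
  exact Finsupp.sum_sub_index fun p r s => by ring

/-- Let `u < n = q³`. If `μ ∈ R` is nonzero with `deg_u(μ) ≤ u` (i.e. `μ ∈ L(uP∞)`), then
`μ` vanishes at most at `u` of the points `P_i`. Consequently the evaluation map is
injective on `L(uP∞)`, and the Hermitian code `C_u = ev(L(uP∞))` has minimum distance at
least `n − u`. -/
theorem stmt_10 (q : ℕ) (hq : IsPrimePow q) (F : Type*) [Field F] [Fintype F] [DecidableEq F]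
    (hF : Fintype.card F = q ^ 2)
    (u : ℕ) (hu : 1 ≤ u) (hun : u < q ^ 3)
    (P : Fin (q ^ 3) → F × F)
    (hPinj : Function.Injective P)
    (hPcurve : ∀ i, (P i).1 ^ (q + 1) = (P i).2 ^ q + (P i).2)
    (hPsurj : ∀ a b : F, a ^ (q + 1) = b ^ q + b → ∃ i, P i = (a, b)) :
    -- a nonzero element of `L(uP∞)` vanishes at no more than `u` rational points
    (∀ c : (ℕ × Fin q) →₀ F, c ≠ 0 →
      (∀ p ∈ c.support, q * p.1 + (q + 1) * (p.2 : ℕ) ≤ u) →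
      (Finset.univ.filter fun i : Fin (q ^ 3) =>
        MvPolynomial.eval ![(P i).1, (P i).2] (monoSum2 c) = 0).card ≤ u) ∧
    -- the evaluation map is injective on `L(uP∞)`
    (∀ c₁ c₂ : (ℕ × Fin q) →₀ F,
      (∀ p ∈ c₁.support, q * p.1 + (q + 1) * (p.2 : ℕ) ≤ u) →
      (∀ p ∈ c₂.support, q * p.1 + (q + 1) * (p.2 : ℕ) ≤ u) →
      (∀ i : Fin (q ^ 3), MvPolynomial.eval ![(P i).1, (P i).2] (monoSum2 c₁) =
        MvPolynomial.eval ![(P i).1, (P i).2] (monoSum2 c₂)) → c₁ = c₂) ∧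
    -- minimum distance of the Hermitian code `C_u` is at least `n − u`
    (∀ c₁ c₂ : (ℕ × Fin q) →₀ F, c₁ ≠ c₂ →
      (∀ p ∈ c₁.support, q * p.1 + (q + 1) * (p.2 : ℕ) ≤ u) →
      (∀ p ∈ c₂.support, q * p.1 + (q + 1) * (p.2 : ℕ) ≤ u) →
      q ^ 3 - u ≤ (Finset.univ.filter fun i : Fin (q ^ 3) =>
        MvPolynomial.eval ![(P i).1, (P i).2] (monoSum2 c₁) ≠
          MvPolynomial.eval ![(P i).1, (P i).2] (monoSum2 c₂)).card) := by
  have hq1 : 1 < q := hq.one_lt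
  have main : ∀ c : (ℕ × Fin q) →₀ F, c ≠ 0 →
      (∀ p ∈ c.support, q * p.1 + (q + 1) * (p.2 : ℕ) ≤ u) →
      (Finset.univ.filter fun i : Fin (q ^ 3) =>
        MvPolynomial.eval ![(P i).1, (P i).2] (monoSum2 c) = 0).card ≤ u := by
    intro c hc hcu
    rw [← Fintype.card_coe]
    refine zeros_le q hq1 (fun i => (P i.1).1) (fun i => (P i.1).2) ?_ (fun i => hPcurve i.1)
      c hc ?_ u hcu
    · intro i j h
      exact Subtype.ext (hPinj h)
    · intro i
      have := (Finset.mem_filter.mp i.2).2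
      rwa [eval_monoSum2] at this
  have hsub : ∀ c₁ c₂ : (ℕ × Fin q) →₀ F, c₁ ≠ c₂ →
      (∀ p ∈ c₁.support, q * p.1 + (q + 1) * (p.2 : ℕ) ≤ u) →
      (∀ p ∈ c₂.support, q * p.1 + (q + 1) * (p.2 : ℕ) ≤ u) →
      (Finset.univ.filter fun i : Fin (q ^ 3) =>
        MvPolynomial.eval ![(P i).1, (P i).2] (monoSum2 c₁) =
          MvPolynomial.eval ![(P i).1, (P i).2] (monoSum2 c₂)).card ≤ u := by
    intro c₁ c₂ hne h₁ h₂
    have h := main (c₁ - c₂) (sub_ne_zero.mpr hne) (fun p hp => by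
      classical
      rcases Finset.mem_union.mp (Finsupp.support_sub hp) with h | h
      · exact h₁ p h
      · exact h₂ p h)
    simpa only [eval_monoSum2_sub, sub_eq_zero] using h
  refine ⟨main, ?_, ?_⟩
  · intro c₁ c₂ h₁ h₂ heq
    by_contra hne
    have h := hsub c₁ c₂ hne h₁ h₂
    rw [Finset.filter_true_of_mem (fun i _ => heq i), Finset.card_univ, Fintype.card_fin] at h
    omega
  · intro c₁ c₂ hne h₁ h₂
    have h := hsub c₁ c₂ hne h₁ h₂
    have h2 := Finset.card_filter_add_card_filter_not (s := (Finset.univ : Finset (Fin (q ^ 3))))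
      (fun i => MvPolynomial.eval ![(P i).1, (P i).2] (monoSum2 c₁) =
          MvPolynomial.eval ![(P i).1, (P i).2] (monoSum2 c₂))
    rw [Finset.card_univ, Fintype.card_fin] at h2
    rw [tsub_le_iff_right]
    refine h2.symm.le.trans ?_
    rw [add_comm]
    refine Nat.add_le_add (le_of_eq ?_) h
    congr 1
end

section
/- Let m and l be positive integers and v ∈ F^n. Let R[z]_l = {f ∈ R[z] : deg_z(f) ≤ l} and I_{v,m,l} = I_{v,m} ∩ R[z]_l, where I_{v,m} = ⟨z − h_v, η⟩^m. Then, as a module over R, I_{v,m,l} is generated by G_0, G_1, …, G_l, where G_i = (z − h_v)^i η^{m−i} for 0 ≤ i ≤ m and G_i = z^{i−m}(z − h_v)^m for m < i ≤ l. -/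
set_option synthInstance.maxHeartbeats 1000000
set_option maxHeartbeats 1000000

open MvPolynomial

namespace Aux11
open Polynomial

variable {R : Type*} [CommRing R]

lemma coeff_dvd (h η : R) (m : ℕ) : ∀ f : Polynomial R,
    f ∈ (Ideal.span {Polynomial.X - Polynomial.C h, Polynomial.C η} : Ideal (Polynomial R)) ^ m →
    ∀ i, η ^ (m - i) ∣ (taylor h f).coeff i := by
  induction m with
  | zero => intro f _ i; simp
  | succ m ih =>
    intro f hf
    rw [pow_succ] at hf
    refine Submodule.mul_induction_on hf ?_ ?_
    · intro a ha b hb i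
      rw [taylor_mul, Polynomial.coeff_mul]
      refine Finset.dvd_sum fun x hx => ?_
      have hx' : x.1 + x.2 = i := Finset.HasAntidiagonal.mem_antidiagonal.mp hx
      have h1 := ih a ha x.1
      have h2 : η ^ (1 - x.2) ∣ (taylor h b).coeff x.2 := by
        rcases Nat.eq_zero_or_pos x.2 with h0 | h0
        · obtain ⟨u, w, huw⟩ := Ideal.mem_span_pair.mp hb
          rw [h0, taylor_coeff_zero, ← huw]
          simp
        · have : 1 - x.2 = 0 := by omega
          simp [this]
      refine dvd_trans ?_ (mul_dvd_mul h1 h2)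
      rw [← pow_add]
      exact pow_dvd_pow _ (by omega)
    · intro a b ha hb i
      rw [map_add, Polynomial.coeff_add]
      exact dvd_add (ha i) (hb i)

theorem main (h η : R) (m l : ℕ) :
    Submodule.restrictScalars R
        ((Ideal.span {Polynomial.X - Polynomial.C h, Polynomial.C η} :
          Ideal (Polynomial R)) ^ m) ⊓
      Polynomial.degreeLE R (l : ℕ) =
    Submodule.span R (Set.range fun i : Fin (l + 1) =>
      if (i : ℕ) ≤ m then
        (Polynomial.X - Polynomial.C h) ^ (i : ℕ) * Polynomial.C (η ^ (m - (i : ℕ)))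
      else
        Polynomial.X ^ ((i : ℕ) - m) * (Polynomial.X - Polynomial.C h) ^ m) := by
  have hX : (Polynomial.X - Polynomial.C h) ∈ (Ideal.span {Polynomial.X - Polynomial.C h, Polynomial.C η} :
          Ideal (Polynomial R)) := Ideal.subset_span (by simp)
  have hE : (Polynomial.C η) ∈ (Ideal.span {Polynomial.X - Polynomial.C h, Polynomial.C η} :
          Ideal (Polynomial R)) := Ideal.subset_span (by simp)
  have hdeg : ∀ k : ℕ, ((Polynomial.X - Polynomial.C h) ^ k).natDegree ≤ k := fun k =>
    (natDegree_pow_le_of_le k (natDegree_X_sub_C_le h)).trans (by simp)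
  apply le_antisymm
  · rintro f ⟨hf, hd⟩
    have hc := coeff_dvd h η m f hf
    have hd' : f.natDegree ≤ l := natDegree_le_of_degree_le (mem_degreeLE.mp hd)
    have hG : ∀ i (hi : i < l + 1), _ := fun i hi => Submodule.subset_span (R := R)
      (Set.mem_range_self (f := fun i : Fin (l + 1) =>
      if (i : ℕ) ≤ m then
        (Polynomial.X - Polynomial.C h) ^ (i : ℕ) * Polynomial.C (η ^ (m - (i : ℕ)))
      else
        Polynomial.X ^ ((i : ℕ) - m) * (Polynomial.X - Polynomial.C h) ^ m) ⟨i, hi⟩)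
    rw [← sum_taylor_eq f h, Polynomial.sum_def]
    refine Submodule.sum_mem _ fun i hi => ?_
    have hil : i < l + 1 := by
      have := le_natDegree_of_mem_supp i hi
      rw [natDegree_taylor] at this
      omega
    by_cases him : i ≤ m
    · obtain ⟨c, hc⟩ := hc i
      have h1 := hG i hil
      simp only [him, if_true] at h1
      have h2 := Submodule.smul_mem _ c h1
      convert h2 using 1
      rw [hc, Polynomial.smul_eq_C_mul, Polynomial.C_mul]; ring
    · rw [← Polynomial.smul_eq_C_mul]
      refine Submodule.smul_mem _ _ ?_
      have e : (Polynomial.X - Polynomial.C h) ^ i =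
          ∑ j ∈ Finset.range (i - m + 1), ((Polynomial.X - Polynomial.C h) ^ (i - m)).coeff j •
            (Polynomial.X ^ j * (Polynomial.X - Polynomial.C h) ^ m) := by
        conv_lhs => rw [← Nat.sub_add_cancel (le_of_not_ge him), pow_add,
          as_sum_range_C_mul_X_pow' ((Polynomial.X - Polynomial.C h) ^ (i - m))
            (Nat.lt_succ_of_le (hdeg (i - m))), Finset.sum_mul]
        refine Finset.sum_congr rfl fun j _ => ?_
        rw [Polynomial.smul_eq_C_mul, mul_assoc]
      rw [e]
      refine Submodule.sum_mem _ fun j hj => Submodule.smul_mem _ _ ?_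
      have hj' := Finset.mem_range.mp hj
      have h1 := hG (m + j) (by omega)
      rcases Nat.eq_zero_or_pos j with h0 | h0
      · subst h0; simpa using h1
      · have : ¬ (m + j ≤ m) := by omega
        simpa only [SetLike.mem_coe, this, if_false, Nat.add_sub_cancel_left] using h1
  · rw [Submodule.span_le]
    rintro _ ⟨i, rfl⟩
    have hi := i.2
    by_cases him : (i : ℕ) ≤ m
    · simp only [him, if_true]
      refine ⟨?_, ?_⟩
      · have := Ideal.mul_mem_mul (Ideal.pow_mem_pow hX i) (Ideal.pow_mem_pow hE (m - i))
        rw [← pow_add, Nat.add_sub_cancel' him, ← Polynomial.C_pow] at this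
        exact this
      · refine mem_degreeLE.mpr (degree_le_of_natDegree_le ?_)
        refine natDegree_mul_le.trans ?_
        have := hdeg i
        rw [natDegree_C]; omega
    · simp only [him, if_false]
      refine ⟨Ideal.mul_mem_left _ _ (Ideal.pow_mem_pow hX m), ?_⟩
      refine mem_degreeLE.mpr (degree_le_of_natDegree_le ?_)
      refine natDegree_mul_le.trans ?_
      have := hdeg m
      have := natDegree_X_pow_le (R := R) ((i : ℕ) - m)
      omega

end Aux11

/-- Let `m`, `l` be positive integers and `v ∈ F^n`. Then `I_{v,m,l} = I_{v,m} ∩ R[z]_l`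
(`I_{v,m} = ⟨z − h_v, η⟩^m`, `R[z]_l` the polynomials of `z`-degree at most `l`), as a
module over `R`, is generated by `G_0, …, G_l`, where `G_i = (z − h_v)^i η^{m−i}` for
`0 ≤ i ≤ m` and `G_i = z^{i−m}(z − h_v)^m` for `m < i ≤ l`. -/
theorem stmt_11 (q : ℕ) (hq : IsPrimePow q) (F : Type*) [Field F] [Fintype F] [DecidableEq F]
    (hF : Fintype.card F = q ^ 2)
    (m l : ℕ) (hm : 1 ≤ m) (hl : 1 ≤ l)
    (P : Fin (q ^ 3) → F × F)
    (hPinj : Function.Injective P)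
    (hPcurve : ∀ i, (P i).1 ^ (q + 1) = (P i).2 ^ q + (P i).2)
    (hPsurj : ∀ a b : F, a ^ (q + 1) = b ^ q + b → ∃ i, P i = (a, b))
    (v : Fin (q ^ 3) → F)
    -- `R`, `h_v`, `η`
    (R : Type*) [CommRing R] (mk : MvPolynomial (Fin 2) F →+* R)
    (hmk : Function.Surjective mk)
    (hker : RingHom.ker mk =
      Ideal.span {(X 0 : MvPolynomial (Fin 2) F) ^ (q + 1) - X 1 ^ q - X 1})
    (hv η : R)
    (hhv : hv = mk (∑ i, C (v i) * Hpoly q (P i).1 (P i).2))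
    (hη : η = mk ((X 0 : MvPolynomial (Fin 2) F) ^ (q ^ 2) - X 0)) :
    Submodule.restrictScalars R
        ((Ideal.span {Polynomial.X - Polynomial.C hv, Polynomial.C η} :
          Ideal (Polynomial R)) ^ m) ⊓
      Polynomial.degreeLE R (l : ℕ) =
    Submodule.span R (Set.range fun i : Fin (l + 1) =>
      if (i : ℕ) ≤ m then
        (Polynomial.X - Polynomial.C hv) ^ (i : ℕ) * Polynomial.C (η ^ (m - (i : ℕ)))
      else
        Polynomial.X ^ ((i : ℕ) - m) * (Polynomial.X - Polynomial.C hv) ^ m) := by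
  exact Aux11.main hv η m l
end

section
/- Let u, m be positive integers and v ∈ F^n. For each integer i ≥ 0 let C(i) = #{(a,b,c) ∈ ℕ³ : 0 ≤ b ≤ q−1, q·a + (q+1)·b + u·c = i}, the number of monomials of R[z] of u-weighted degree i. Let N = n·m(m+1)/2 + 1 and let w be the smallest integer with Σ_{i=0}^w C(i) ≥ N, and set l = ⌊w/u⌋. Then there exists a nonzero f ∈ I_{v,m} = ⟨z − h_v, η⟩^m with deg_u(f) ≤ w and deg_z(f) ≤ l. -/
set_option synthInstance.maxHeartbeats 1000000
set_option maxHeartbeats 1000000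

open MvPolynomial

/-- The coordinate ring `R = F[X,Y]/⟨X^{q+1} − Y^q − Y⟩` of the Hermitian curve. -/
abbrev HermR (q : ℕ) (F : Type*) [Field F] :=
  MvPolynomial (Fin 2) F ⧸
    Ideal.span {(X 0 : MvPolynomial (Fin 2) F) ^ (q + 1) - X 1 ^ q - X 1}

/-- The quotient map `F[X,Y] → R`. -/
noncomputable def mkR (q : ℕ) (F : Type*) [Field F] :
    MvPolynomial (Fin 2) F →+* HermR q F :=
  Ideal.Quotient.mk _

/-- `C(i)`: the number of monomials `x^a y^b z^c` (`0 ≤ b ≤ q−1`) of `R[z]` of `u`-weighted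
degree exactly `i`. -/
def Cnt (q u i : ℕ) : ℕ :=
  ((Finset.range (i + 1) ×ˢ Finset.range (i + 1) ×ˢ Finset.range (i + 1)).filter
    fun p => p.2.1 ≤ q - 1 ∧ q * p.1 + (q + 1) * p.2.1 + u * p.2.2 = i).card

noncomputable def gPoly (q : ℕ) (F : Type*) [Field F] : Polynomial (Polynomial F) :=
  Polynomial.X ^ q + (Polynomial.X - Polynomial.C (Polynomial.X ^ (q + 1)))

lemma gPoly_deg_aux (q : ℕ) (hq : 2 ≤ q) (F : Type*) [Field F] :
    (Polynomial.X - Polynomial.C (Polynomial.X ^ (q + 1)) : Polynomial (Polynomial F)).degree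
      < (q : ℕ) := by
  rw [Polynomial.degree_X_sub_C]
  exact_mod_cast hq

lemma gPoly_monic (q : ℕ) (hq : 2 ≤ q) (F : Type*) [Field F] : (gPoly q F).Monic :=
  Polynomial.monic_X_pow_add (gPoly_deg_aux q hq F)

lemma gPoly_natDegree (q : ℕ) (hq : 2 ≤ q) (F : Type*) [Field F] : (gPoly q F).natDegree = q := by
  apply Polynomial.natDegree_eq_of_degree_eq_some
  unfold gPoly
  rw [Polynomial.degree_add_eq_left_of_degree_lt, Polynomial.degree_X_pow]
  rw [Polynomial.degree_X_pow]
  exact gPoly_deg_aux q hq F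

abbrev HA (q : ℕ) (F : Type*) [Field F] := AdjoinRoot (gPoly q F)

noncomputable def psi (q : ℕ) (F : Type*) [Field F] : HermR q F →ₐ[F] HA q F :=
  Ideal.Quotient.liftₐ _ (MvPolynomial.aeval
    ![AdjoinRoot.of (gPoly q F) Polynomial.X, AdjoinRoot.root (gPoly q F)]) (by
    intro a ha
    obtain ⟨c, rfl⟩ := Ideal.mem_span_singleton.mp ha
    rw [map_mul]
    refine mul_eq_zero_of_left ?_ _
    have h : AdjoinRoot.mk (gPoly q F) (gPoly q F) = 0 := AdjoinRoot.mk_self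
    conv at h => lhs; arg 2; rw [gPoly]
    simp only [map_add, map_sub, map_pow, AdjoinRoot.mk_X, AdjoinRoot.mk_C] at h
    simp only [map_sub, map_pow, aeval_X]
    simp only [Matrix.cons_val_zero, Matrix.cons_val_one]
    linear_combination -h)

noncomputable def evx (q : ℕ) (F : Type*) [Field F] : Polynomial F →ₐ[F] HermR q F :=
  Polynomial.aeval (mkR q F (X 0))

lemma hermR_rel (q : ℕ) (F : Type*) [Field F] :
    mkR q F (X 0) ^ (q + 1) - mkR q F (X 1) ^ q - mkR q F (X 1) = 0 := by
  rw [← map_pow, ← map_pow, ← map_sub, ← map_sub]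
  exact Ideal.Quotient.eq_zero_iff_mem.mpr (Ideal.subset_span rfl)

lemma psi_mkR_mon (q : ℕ) (F : Type*) [Field F] (a b : ℕ) :
    psi q F (mkR q F (X 0 ^ a * X 1 ^ b)) =
      AdjoinRoot.of (gPoly q F) (Polynomial.X ^ a) * AdjoinRoot.root (gPoly q F) ^ b := by
  have : psi q F (mkR q F (X 0 ^ a * X 1 ^ b)) = MvPolynomial.aeval
    ![AdjoinRoot.of (gPoly q F) Polynomial.X, AdjoinRoot.root (gPoly q F)] 
      (X 0 ^ a * X 1 ^ b : MvPolynomial (Fin 2) F) := rfl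
  rw [this]
  simp

noncomputable def phi (q : ℕ) (F : Type*) [Field F] : HA q F →+* HermR q F :=
  AdjoinRoot.lift (evx q F).toRingHom (mkR q F (X 1)) (by
    have := hermR_rel q F
    simp only [gPoly, Polynomial.eval₂_add, Polynomial.eval₂_sub, Polynomial.eval₂_X_pow,
      Polynomial.eval₂_X, Polynomial.eval₂_C]
    have h2 : (evx q F).toRingHom (Polynomial.X ^ (q + 1)) = mkR q F (X 0) ^ (q + 1) := by
      simp [evx]
    rw [h2]
    linear_combination -this)

lemma phi_surj (q : ℕ) (F : Type*) [Field F] : Function.Surjective (phi q F) := by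
  intro r
  obtain ⟨p, rfl⟩ := Ideal.Quotient.mk_surjective r
  change ∃ a, _ = mkR q F p
  induction p using MvPolynomial.induction_on with
  | C a =>
    refine ⟨AdjoinRoot.of _ (Polynomial.C a), ?_⟩
    simp [phi, evx]
    rfl
  | add p q hp hq =>
    obtain ⟨a, ha⟩ := hp
    obtain ⟨b, hb⟩ := hq
    exact ⟨a + b, by simp [ha, hb]⟩
  | mul_X p i hp =>
    obtain ⟨a, ha⟩ := hp
    fin_cases i
    · exact ⟨a * AdjoinRoot.of _ Polynomial.X, by rw [map_mul, ha]; simp [phi, evx]⟩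
    · exact ⟨a * AdjoinRoot.root _, by rw [map_mul, ha]; simp [phi, evx]⟩

lemma hermR_span (q : ℕ) (hq : 2 ≤ q) (F : Type*) [Field F] (r : HermR q F) :
    ∃ p : Fin q → Polynomial F, r = ∑ b, evx q F (p b) * mkR q F (X 1) ^ (b : ℕ) := by
  obtain ⟨s, rfl⟩ := phi_surj q F r
  obtain ⟨t, rfl⟩ := AdjoinRoot.mk_surjective s
  have hmon := gPoly_monic q hq F
  have h1 : AdjoinRoot.mk (gPoly q F) t = AdjoinRoot.mk (gPoly q F) (t %ₘ gPoly q F) := by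
    rw [AdjoinRoot.mk_eq_mk]
    exact ⟨t /ₘ gPoly q F, by
      rw [sub_eq_iff_eq_add, add_comm, Polynomial.modByMonic_add_div]⟩
  have h2 : (t %ₘ gPoly q F).natDegree < q := by
    have := Polynomial.natDegree_modByMonic_lt t hmon (by
      intro h
      have := gPoly_natDegree q hq F
      rw [h] at this
      simp at this; omega)
    rwa [gPoly_natDegree q hq F] at this
  refine ⟨fun b => (t %ₘ gPoly q F).coeff b, ?_⟩
  rw [h1]
  set T := t %ₘ gPoly q F
  rw [phi, AdjoinRoot.lift_mk, Polynomial.eval₂_eq_sum_range' _ h2]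
  exact Finset.sum_range fun b => evx q F (T.coeff b) * mkR q F (X 1) ^ b

noncomputable def etaR (q : ℕ) (F : Type*) [Field F] : HermR q F :=
  mkR q F ((X 0 : MvPolynomial (Fin 2) F) ^ (q ^ 2) - X 0)

noncomputable def quotMap (q : ℕ) (F : Type*) [Field F] (j : ℕ) :
    (Fin q → Polynomial.degreeLT F (q ^ 2 * j)) →ₗ[F] (HermR q F ⧸ Ideal.span {etaR q F ^ j}) where
  toFun p := Ideal.Quotient.mk _ (∑ b, evx q F (p b) * mkR q F (X 1) ^ (b : ℕ))
  map_add' p p' := by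
    rw [← map_add, ← Finset.sum_add_distrib]
    simp [add_mul]
  map_smul' c p := by
    simp only [Pi.smul_apply, SetLike.val_smul, map_smul, smul_mul_assoc, RingHom.id_apply, ← Finset.smul_sum]
    rfl

lemma quotMap_surj (q : ℕ) (hq : 2 ≤ q) (F : Type*) [Field F] (j : ℕ) :
    Function.Surjective (quotMap q F j) := by
  intro r
  obtain ⟨r, rfl⟩ := Ideal.Quotient.mk_surjective r
  obtain ⟨p, rfl⟩ := hermR_span q hq F r
  have hdeg : (Polynomial.X : Polynomial F).degree < ((q ^ 2 : ℕ) : WithBot ℕ) := by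
    rw [Polynomial.degree_X]
    have : 1 < q ^ 2 := by nlinarith
    exact_mod_cast this
  set e : Polynomial F := Polynomial.X ^ (q ^ 2) - Polynomial.X with he
  have hem : e.Monic := Polynomial.monic_X_pow_sub hdeg
  have hed : e.degree = (q ^ 2 : ℕ) := by
    rw [he, Polynomial.degree_sub_eq_left_of_degree_lt, Polynomial.degree_X_pow]
    rwa [Polynomial.degree_X_pow]
  have hejm : (e ^ j).Monic := hem.pow j
  have hejd : (e ^ j).degree = (q ^ 2 * j : ℕ) := by
    rw [Polynomial.degree_pow, hed]
    simp [mul_comm]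
  refine ⟨fun b => ⟨p b %ₘ (e ^ j), ?_⟩, ?_⟩
  · rw [Polynomial.mem_degreeLT, ← hejd]
    exact Polynomial.degree_modByMonic_lt _ hejm
  · change Ideal.Quotient.mk _ _ = Ideal.Quotient.mk _ _
    rw [map_sum, map_sum]
    refine Finset.sum_congr rfl fun b _ => ?_
    rw [map_mul, map_mul]
    congr 1
    symm
    rw [Ideal.Quotient.mk_eq_mk_iff_sub_mem, ← map_sub, Ideal.mem_span_singleton]
    refine ⟨evx q F (p b /ₘ e ^ j), ?_⟩
    have : etaR q F ^ j = evx q F (e ^ j) := by simp [etaR, evx, he]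
    rw [this, ← map_mul]
    congr 1
    dsimp only
    rw [sub_eq_iff_eq_add, add_comm, Polynomial.modByMonic_add_div]

lemma quot_finite (q : ℕ) (hq : 2 ≤ q) (F : Type*) [Field F] (j : ℕ) :
    Module.Finite F (HermR q F ⧸ Ideal.span {etaR q F ^ j}) :=
  have : Module.Finite F (Polynomial.degreeLT F (q ^ 2 * j)) :=
    Module.Finite.equiv (Polynomial.degreeLTEquiv F (q ^ 2 * j)).symm
  Module.Finite.of_surjective _ (quotMap_surj q hq F j)

lemma quot_finrank (q : ℕ) (hq : 2 ≤ q) (F : Type*) [Field F] (j : ℕ) :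
    Module.finrank F (HermR q F ⧸ Ideal.span {etaR q F ^ j}) ≤ q ^ 3 * j := by
  have : Module.Finite F (Polynomial.degreeLT F (q ^ 2 * j)) :=
    Module.Finite.equiv (Polynomial.degreeLTEquiv F (q ^ 2 * j)).symm
  refine (LinearMap.finrank_le_finrank_of_surjective (quotMap_surj q hq F j)).trans ?_
  rw [Module.finrank_pi_fintype]
  simp only [(Polynomial.degreeLTEquiv F (q ^ 2 * j)).finrank_eq, Module.finrank_fin_fun]
  simp
  apply le_of_eq
  ring

noncomputable def bigBasis (q : ℕ) (hq : 2 ≤ q) (F : Type*) [Field F] :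
    Module.Basis ((ℕ × Fin (gPoly q F).natDegree) × ℕ) F (Polynomial (HA q F)) :=
  ((Polynomial.basisMonomials F).smulTower
    (AdjoinRoot.powerBasisAux' (gPoly_monic q hq F))).smulTower
      (Polynomial.basisMonomials (HA q F))

lemma bigBasis_apply (q : ℕ) (hq : 2 ≤ q) (F : Type*) [Field F]
    (a : ℕ) (b : Fin (gPoly q F).natDegree) (c : ℕ) :
    bigBasis q hq F ((a, b), c) = Polynomial.C (AdjoinRoot.of (gPoly q F) (Polynomial.X ^ a) *
      AdjoinRoot.root (gPoly q F) ^ (b : ℕ)) * Polynomial.X ^ c := by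
  have hb : (AdjoinRoot.powerBasisAux' (gPoly_monic q hq F)) b =
      AdjoinRoot.root (gPoly q F) ^ (b : ℕ) := by
    have := (AdjoinRoot.powerBasis' (gPoly_monic q hq F)).basis_eq_pow b
    exact this
  rw [bigBasis, Module.Basis.smulTower_apply, Module.Basis.smulTower_apply, hb]
  simp only [Polynomial.coe_basisMonomials]
  rw [Polynomial.smul_monomial, Polynomial.monomial_one_right_eq_X_pow, ← Polynomial.C_mul_X_pow_eq_monomial, smul_eq_mul, mul_one, Algebra.smul_def]
  rfl

noncomputable def monR (q : ℕ) (F : Type*) [Field F] (t : ℕ × ℕ × ℕ) : Polynomial (HermR q F) :=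
  Polynomial.C (mkR q F (X 0 ^ t.1 * X 1 ^ t.2.1)) * Polynomial.X ^ t.2.2

lemma monR_li (q : ℕ) (hq : 2 ≤ q) (F : Type*) [Field F] (T : Finset (ℕ × ℕ × ℕ))
    (hT : ∀ t ∈ T, t.2.1 < q) : LinearIndependent F (fun t : T => monR q F t) := by
  apply LinearIndependent.of_comp (Polynomial.mapAlgHom (psi q F)).toLinearMap
  let f : T → (ℕ × Fin (gPoly q F).natDegree) × ℕ := fun t =>
    ((t.1.1, ⟨t.1.2.1, by rw [gPoly_natDegree q hq F]; exact hT _ t.2⟩), t.1.2.2)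
  have hf : Function.Injective f := by
    rintro ⟨⟨a, b, c⟩, h⟩ ⟨⟨a', b', c'⟩, h'⟩ hh
    simp [f] at hh
    simp; tauto
  have key : ∀ t : T, bigBasis q hq F (f t) =
      (Polynomial.mapAlgHom (psi q F)).toLinearMap (monR q F t) := by
    intro t
    symm
    change Polynomial.map _ _ = bigBasis q hq F (f t)
    rw [bigBasis_apply]
    change Polynomial.map _ (Polynomial.C _ * Polynomial.X ^ _) = _
    rw [Polynomial.map_mul, Polynomial.map_C, Polynomial.map_pow, Polynomial.map_X]
    rw [← psi_mkR_mon]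
    rfl
  have h := (bigBasis q hq F).linearIndependent.comp f hf
  have e : (bigBasis q hq F : _ → Polynomial (HA q F)) ∘ f =
      (Polynomial.mapAlgHom (psi q F)).toLinearMap ∘ fun t : T => monR q F t := funext key
  rw [e] at h
  exact h

noncomputable def PhiMap (q : ℕ) (F : Type*) [Field F] (m : ℕ) (h : HermR q F) (k : Fin m) :
    Polynomial (HermR q F) →ₗ[F] (HermR q F ⧸ Ideal.span {etaR q F ^ (m - (k : ℕ))}) :=
  (Ideal.Quotient.mkₐ F (Ideal.span {etaR q F ^ (m - (k : ℕ))})).toLinearMap ∘ₗ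
      ((Polynomial.lcoeff (HermR q F) k) ∘ₗ (Polynomial.taylor h)).restrictScalars F

lemma pow_mix {A : Type*} [CommRing A] (I : Ideal A) (x y : A) (hx : x ∈ I) (hy : y ∈ I)
    {k m : ℕ} (hk : k ≤ m) (c : A) : y ^ (m - k) * c * x ^ k ∈ I ^ m := by
  have h5 := Ideal.mul_mem_mul (Ideal.pow_mem_pow hy (m - k)) (Ideal.pow_mem_pow hx k)
  rw [← pow_add I, Nat.sub_add_cancel hk] at h5
  have h6 := Ideal.mul_mem_left _ c h5
  convert h6 using 1
  ring

lemma taylor_mem {S : Type*} [CommRing S] (h η : S) (m : ℕ) (f : Polynomial S)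
    (hf : ∀ k < m, (Polynomial.taylor h f).coeff k ∈ Ideal.span {η ^ (m - k)}) :
    f ∈ (Ideal.span {Polynomial.X - Polynomial.C h, Polynomial.C η}) ^ m := by
  have hs := Polynomial.sum_taylor_eq f h
  rw [← hs, Polynomial.sum_def]
  set I := Ideal.span {Polynomial.X - Polynomial.C h, Polynomial.C (η)} with hI
  have h1 : Polynomial.X - Polynomial.C h ∈ I := Ideal.subset_span (by simp)
  have h2 : Polynomial.C (η) ∈ I := Ideal.subset_span (by simp)
  refine Ideal.sum_mem _ fun k _ => ?_
  by_cases hk : k < m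
  · have h4 := hf k hk
    obtain ⟨r, hr⟩ := Ideal.mem_span_singleton.mp h4
    rw [hr, Polynomial.C_mul, Polynomial.C_pow]
    exact pow_mix I _ _ h1 h2 hk.le _
  · exact Ideal.mul_mem_left _ _ (Ideal.pow_le_pow_right (not_lt.mp hk) (Ideal.pow_mem_pow h1 k))

lemma PhiMap_ker (q : ℕ) (F : Type*) [Field F] (m : ℕ) (h : HermR q F) (f : Polynomial (HermR q F))
    (hf : ∀ k, PhiMap q F m h k f = 0) :
    f ∈ (Ideal.span {Polynomial.X - Polynomial.C h, Polynomial.C (etaR q F)}) ^ m := by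
  refine taylor_mem h (etaR q F) m f fun k hk => ?_
  exact Ideal.Quotient.eq_zero_iff_mem.mp (hf ⟨k, hk⟩)

lemma exists_ker {K : Type*} [Field K] {m : ℕ} (Q : Fin m → Type*) [∀ k, AddCommGroup (Q k)]
    [∀ k, Module K (Q k)] [∀ k, Module.Finite K (Q k)] (d : Fin m → ℕ)
    (hd : ∀ k, Module.finrank K (Q k) ≤ d k) {T : Type*} [Fintype T]
    (Φ : ∀ k, (T → K) →ₗ[K] Q k) (h : ∑ k, d k < Fintype.card T) :
    ∃ c : T → K, c ≠ 0 ∧ ∀ k, Φ k c = 0 := by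
  have hlt : Module.finrank K ((k : Fin m) → Q k) < Module.finrank K (T → K) := by
    rw [Module.finrank_pi_fintype, Module.finrank_fintype_fun_eq_card]
    exact (Finset.sum_le_sum fun k _ => hd k).trans_lt h
  have hker := LinearMap.ker_ne_bot_of_finrank_lt (f := LinearMap.pi Φ) hlt
  obtain ⟨c, hc, hc0⟩ := (Submodule.ne_bot_iff _).mp hker
  exact ⟨c, hc0, fun k => congrFun (LinearMap.mem_ker.mp hc) k⟩

lemma target_sum (q m : ℕ) :
    ∑ k : Fin m, q ^ 3 * (m - (k : ℕ)) = q ^ 3 * (m * (m + 1) / 2) := by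
  rw [← Finset.mul_sum]
  congr 1
  rw [← Finset.sum_range fun k => m - k]
  have := Finset.sum_range_reflect (fun k => k + 1) m
  have h2 : ∑ k ∈ Finset.range m, (m - k) = ∑ j ∈ Finset.range m, (m - 1 - j + 1) :=
    Finset.sum_congr rfl fun k hk => by
      have := Finset.mem_range.mp hk
      omega
  rw [h2, this]
  have h3 := Finset.sum_range_id_mul_two (m + 1)
  rw [Finset.sum_range_succ'] at h3
  simp only [add_zero, Nat.add_sub_cancel] at h3
  rw [mul_comm m, ← h3]
  simp

def TSet (q u w : ℕ) : Finset (ℕ × ℕ × ℕ) :=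
  (Finset.range (w + 1) ×ˢ Finset.range (w + 1) ×ˢ Finset.range (w + 1)).filter
    fun p => p.2.1 ≤ q - 1 ∧ q * p.1 + (q + 1) * p.2.1 + u * p.2.2 ≤ w

lemma TSet_card (q u w : ℕ) : ∑ i ∈ Finset.range (w + 1), Cnt q u i ≤ (TSet q u w).card := by
  unfold Cnt
  rw [← Finset.card_biUnion]
  · apply Finset.card_le_card
    intro p
    simp only [Finset.mem_biUnion, TSet, Finset.mem_filter, Finset.mem_product, Finset.mem_range]
    rintro ⟨i, hi, ⟨h1, h2, h3⟩, h4, h5⟩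
    refine ⟨⟨by omega, by omega, by omega⟩, h4, by omega⟩
  · intro i _ j _ hij
    rw [Function.onFun, Finset.disjoint_left]
    intro p hp hp'
    simp only [Finset.mem_filter] at hp hp'
    exact hij (hp.2.2.symm.trans hp'.2.2)

/-- Let `N = n·m(m+1)/2 + 1`, let `w` be the smallest integer with `Σ_{i=0}^w C(i) ≥ N`,
and `l = ⌊w/u⌋`. Then there exists a nonzero `f ∈ I_{v,m} = ⟨z − h_v, η⟩^m` with
`deg_u(f) ≤ w` and `deg_z(f) ≤ l`. -/
theorem stmt_14 (q : ℕ) (hq : IsPrimePow q) (F : Type*) [Field F] [Fintype F] [DecidableEq F]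
    (hF : Fintype.card F = q ^ 2)
    (u m : ℕ) (hu : 1 ≤ u) (hm : 1 ≤ m)
    (P : Fin (q ^ 3) → F × F)
    (hPinj : Function.Injective P)
    (hPcurve : ∀ i, (P i).1 ^ (q + 1) = (P i).2 ^ q + (P i).2)
    (hPsurj : ∀ a b : F, a ^ (q + 1) = b ^ q + b → ∃ i, P i = (a, b))
    (v : Fin (q ^ 3) → F)
    (w : ℕ)
    (hw : q ^ 3 * (m * (m + 1) / 2) + 1 ≤ ∑ i ∈ Finset.range (w + 1), Cnt q u i)
    (hwmin : ∀ w' < w, ∑ i ∈ Finset.range (w' + 1), Cnt q u i < q ^ 3 * (m * (m + 1) / 2) + 1) :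
    ∃ f : Polynomial (HermR q F), f ≠ 0 ∧
      f ∈ (Ideal.span
          { Polynomial.X - Polynomial.C (mkR q F (∑ i, C (v i) * Hpoly q (P i).1 (P i).2)),
            Polynomial.C (mkR q F ((X 0 : MvPolynomial (Fin 2) F) ^ (q ^ 2) - X 0)) }) ^ m ∧
      f ∈ Submodule.span F {g : Polynomial (HermR q F) | ∃ a b c : ℕ, b ≤ q - 1 ∧
        q * a + (q + 1) * b + u * c ≤ w ∧
        g = Polynomial.C (mkR q F (X 0 ^ a * X 1 ^ b)) * Polynomial.X ^ c} ∧
      f.degree ≤ (w / u : ℕ) := by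

  have hq2 : 2 ≤ q := hq.two_le
  set h := mkR q F (∑ i, C (v i) * Hpoly q (P i).1 (P i).2) with hh
  have := fun k : Fin m => quot_finite q hq2 F (m - (k : ℕ))
  let T := TSet q u w
  have hTm : ∀ t ∈ T, t.2.1 ≤ q - 1 ∧ q * t.1 + (q + 1) * t.2.1 + u * t.2.2 ≤ w := fun t ht =>
    (Finset.mem_filter.mp ht).2
  have hli := monR_li q hq2 F T fun t ht => by have := (hTm t ht).1; omega
  let L : (T → F) →ₗ[F] Polynomial (HermR q F) :=
    Fintype.linearCombination F (fun t : T => monR q F t)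
  have h2 : (∑ i ∈ Finset.range (w + 1), Cnt q u i) ≤ T.card := TSet_card q u w
  obtain ⟨c, hc0, hc⟩ := exists_ker
    (fun k : Fin m => HermR q F ⧸ Ideal.span {etaR q F ^ (m - (k : ℕ))})
    (fun k => q ^ 3 * (m - (k : ℕ))) (fun k => quot_finrank q hq2 F _)
    (T := T) (fun k => PhiMap q F m h k ∘ₗ L) (by
      rw [target_sum, Fintype.card_coe]
      omega)
  have hspan : L c = ∑ t : T, c t • monR q F t := Fintype.linearCombination_apply ..
  refine ⟨L c, ?_, ?_, ?_, ?_⟩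
  · intro h0
    apply hc0
    rw [hspan] at h0
    exact funext (Fintype.linearIndependent_iff.mp hli c h0)
  · exact PhiMap_ker q F m h (L c) hc
  · rw [hspan]
    refine Submodule.sum_mem _ fun t _ => Submodule.smul_mem _ _ (Submodule.subset_span ?_)
    exact ⟨t.1.1, t.1.2.1, t.1.2.2, (hTm t.1 t.2).1, (hTm t.1 t.2).2, rfl⟩
  · rw [hspan]
    refine (Polynomial.degree_sum_le _ _).trans (Finset.sup_le fun t _ => ?_)
    refine (Polynomial.degree_smul_le _ _).trans ((Polynomial.degree_C_mul_X_pow_le _ _).trans ?_)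
    have h1 := (hTm t.1 t.2).2
    have : t.1.2.2 ≤ w / u := by
      rw [Nat.le_div_iff_mul_le (by omega), mul_comm]
      omega
    exact_mod_cast this
end

section
/- In the setting of the context, assume a_{ss} ≠ 0, a_{rs} ≠ 0, and d := deg(a_{rs}) − deg(a_{ss}) ≥ 0; let c = LC(a_{rs})·LC(a_{ss})^{−1} and b_{rj} = a_{rj} − c·x^d·a_{sj} for 1 ≤ j ≤ r. Then: (A1) deg_u(b_{rr} e_r) = deg_u(a_{rr} e_r); (A2) deg_u(b_{rs} e_s) < deg_u(a_{rs} e_s); (A3) deg_u(b_{rj} e_j) < deg_u(a_{rs} e_s) for s < j < r; (A4) deg_u(b_{rj} e_j) ≤ deg_u(a_{rs} e_s) for j < s. Moreover, for g = Σ_j b_{rj} e_j, deg_u(LT(g)) − deg_u(b_{rr} e_r) ≤ deg_u(LT(g_r)) − deg_u(a_{rr} e_r), with equality only if ind(LT(g)) < ind(LT(g_r)). -/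
open scoped Classical

/-- `deg_u(a·e_j) = u_x·deg(a) + u_j` for nonzero `a ∈ k[x]`, and `−∞` (`⊥`) for `a = 0`. -/
noncomputable def degu {k : Type*} [Field k] (ux : ℕ) (u : ℕ → ℕ)
    (a : Polynomial k) (j : ℕ) : WithBot ℕ :=
  if a = 0 then ⊥ else ((ux * a.natDegree + u j : ℕ) : WithBot ℕ)

/-- `deg_u(LT(g))` for `g = Σ_{j=1}^r b_j e_j`: the maximum of `deg_u(b_j e_j)`. -/
noncomputable def degLT {k : Type*} [Field k] (ux : ℕ) (u : ℕ → ℕ) (r : ℕ)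
    (b : ℕ → Polynomial k) : WithBot ℕ :=
  (Finset.Icc 1 r).sup fun j => degu ux u (b j) j

/-- `ind(LT(g))` for `g = Σ_{j=1}^r b_j e_j`: the largest index attaining the maximum. -/
noncomputable def indLT {k : Type*} [Field k] (ux : ℕ) (u : ℕ → ℕ) (r : ℕ)
    (b : ℕ → Polynomial k) : ℕ :=
  (((Finset.Icc 1 r).filter fun j => degu ux u (b j) j = degLT ux u r b).sup id)

theorem degu_lt_iff_aux {k : Type*} [Field k] (ux : ℕ) (hux : 0 < ux) (u : ℕ → ℕ)
    (p q : Polynomial k) (j : ℕ) : degu ux u p j < degu ux u q j ↔ p.degree < q.degree := by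
  unfold degu
  by_cases hp : p = 0 <;> by_cases hq : q = 0
  · simp [hp, hq]
  · simp [hp, hq, bot_lt_iff_ne_bot, Polynomial.degree_eq_bot]
    exact WithBot.coe_ne_bot
  · simp [hp, hq]
  · rw [if_neg hp, if_neg hq, Polynomial.degree_eq_natDegree hp, Polynomial.degree_eq_natDegree hq,
      Nat.cast_lt, Nat.cast_lt, Nat.add_lt_add_iff_right]
    exact Nat.mul_lt_mul_left hux

theorem degu_mul_aux {k : Type*} [Field k] (ux : ℕ) (u : ℕ → ℕ)
    (p : Polynomial k) (c : k) (hc : c ≠ 0) (d : ℕ) (j : ℕ) :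
    degu ux u (Polynomial.C c * Polynomial.X ^ d * p) j
      = ((ux * d : ℕ) : WithBot ℕ) + degu ux u p j := by
  unfold degu
  by_cases hp : p = 0
  · simp [hp]
  · have h1 : Polynomial.C c * Polynomial.X ^ d ≠ 0 := by simp [hc]
    rw [if_neg hp, if_neg (mul_ne_zero h1 hp), Polynomial.natDegree_mul h1 hp,
      Polynomial.natDegree_C_mul_X_pow d c hc, ← Nat.cast_add]
    congr 1
    ring

theorem degu_sub_le_aux {k : Type*} [Field k] (ux : ℕ) (hux : 0 < ux) (u : ℕ → ℕ)
    (p q : Polynomial k) (j : ℕ) :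
    degu ux u (p - q) j ≤ max (degu ux u p j) (degu ux u q j) := by
  by_contra! h
  rw [max_lt_iff, degu_lt_iff_aux ux hux, degu_lt_iff_aux ux hux] at h
  exact absurd (Polynomial.degree_sub_le p q) (not_le.2 (max_lt h.1 h.2))

theorem degu_sub_eq_aux {k : Type*} [Field k] (ux : ℕ) (hux : 0 < ux) (u : ℕ → ℕ)
    (p q : Polynomial k) (j : ℕ) (h : degu ux u q j < degu ux u p j) :
    degu ux u (p - q) j = degu ux u p j := by
  rw [degu_lt_iff_aux ux hux] at h
  have := Polynomial.degree_sub_eq_left_of_degree_lt h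
  apply le_antisymm <;> by_contra! h' <;> rw [degu_lt_iff_aux ux hux] at h' <;> simp [this] at h'

theorem wb_sum_aux (f : ℕ → WithBot ℕ) (S : Finset ℕ) (h : ⊥ < ∑ i ∈ S, f i) :
    ∀ i ∈ S, f i ≠ ⊥ := by
  intro i hi hf
  rw [← Finset.add_sum_erase S f hi, hf, WithBot.bot_add] at h
  exact lt_irrefl _ h

/-- Proposition 4 (case `d ≥ 0`): the one-step update `g = g_r − c·x^d·g_s` satisfies
(A1)–(A4), and `deg_u(LT(g)) − deg_u(b_{rr} e_r) ≤ deg_u(LT(g_r)) − deg_u(a_{rr} e_r)`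
(stated additively), with equality only if `ind(LT(g)) < ind(LT(g_r))`. -/
theorem stmt_15 (k : Type*) [Field k] (m : ℕ) (hm : 1 ≤ m)
    (ux : ℕ) (hux : 0 < ux) (u : ℕ → ℕ) (hupos : ∀ i, 0 < u i)
    (r s : ℕ) (hs : 1 ≤ s) (hsr : s < r) (hrm : r ≤ m)
    (a : ℕ → ℕ → Polynomial k)
    -- (E1)
    (hE1 : ∀ j, s < j → j ≤ r → degu ux u (a s j) j < degu ux u (a s s) s)
    (hE1' : ∀ j', 1 ≤ j' → j' < s → degu ux u (a s j') j' ≤ degu ux u (a s s) s)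
    -- (E2)
    (hE2 : ∀ j, s < j → j ≤ r → degu ux u (a r j) j < degu ux u (a r s) s)
    (hE2' : ∀ j', 1 ≤ j' → j' < s → degu ux u (a r j') j' ≤ degu ux u (a r s) s)
    -- (E3)
    (hE3 : ∀ π : ℕ → ℕ, Set.BijOn π (Set.Icc 1 r) (Set.Icc 1 r) →
      (∃ i ∈ Set.Icc 1 r, π i ≠ i) →
      ∑ i ∈ Finset.Icc 1 r, degu ux u (a i (π i)) (π i) <
        ∑ i ∈ Finset.Icc 1 r, degu ux u (a i i) i)
    (hass : a s s ≠ 0) (hars : a r s ≠ 0)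
    (hd : (a s s).natDegree ≤ (a r s).natDegree)
    (d : ℕ) (hdd : d = (a r s).natDegree - (a s s).natDegree)
    (c : k) (hc : c = (a r s).leadingCoeff * (a s s).leadingCoeff⁻¹)
    (b : ℕ → Polynomial k)
    (hb : ∀ j, b j = a r j - Polynomial.C c * Polynomial.X ^ d * a s j) :
    -- (A1)
    degu ux u (b r) r = degu ux u (a r r) r ∧
    -- (A2)
    degu ux u (b s) s < degu ux u (a r s) s ∧
    -- (A3)
    (∀ j, s < j → j < r → degu ux u (b j) j < degu ux u (a r s) s) ∧
    -- (A4)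
    (∀ j, 1 ≤ j → j < s → degu ux u (b j) j ≤ degu ux u (a r s) s) ∧
    -- final claim, stated additively
    degLT ux u r b + degu ux u (a r r) r ≤ degLT ux u r (a r) + degu ux u (b r) r ∧
    (degLT ux u r b + degu ux u (a r r) r = degLT ux u r (a r) + degu ux u (b r) r →
      indLT ux u r b < indLT ux u r (a r)) := by
  have hc0 : c ≠ 0 := by
    rw [hc]
    exact mul_ne_zero (Polynomial.leadingCoeff_ne_zero.2 hars)
      (inv_ne_zero (Polynomial.leadingCoeff_ne_zero.2 hass))
  have hmul := fun j => degu_mul_aux ux u (a s j) c hc0 d j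
  -- the swap
  have hsw := hE3 (Equiv.swap s r) (by
    refine ⟨?_, (Equiv.injective _).injOn, ?_⟩
    · intro i hi
      rw [Equiv.swap_apply_def]
      simp only [Set.mem_Icc] at *
      split_ifs <;> omega
    · intro i hi
      refine ⟨Equiv.swap s r i, ?_, by simp⟩
      rw [Equiv.swap_apply_def]
      simp only [Set.mem_Icc] at *
      split_ifs <;> omega) ⟨s, by simp; omega, by simp; omega⟩
  have hne := wb_sum_aux _ _ (lt_of_le_of_lt bot_le hsw)
  have hsI : s ∈ Finset.Icc 1 r := by simp; omega
  have hrI : r ∈ (Finset.Icc 1 r).erase s := by simp; omega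
  have hrne : degu ux u (a r r) r ≠ ⊥ := hne r (by simp; omega)
  have hshift : ((ux * d : ℕ) : WithBot ℕ) + degu ux u (a s s) s = degu ux u (a r s) s := by
    simp only [degu, if_neg hass, if_neg hars]
    rw [← Nat.cast_add]
    congr 1
    obtain ⟨e, he⟩ := Nat.exists_eq_add_of_le hd
    rw [hdd, he]
    simp
    ring
  have hkey : degu ux u (a s r) r + degu ux u (a r s) s
      < degu ux u (a s s) s + degu ux u (a r r) r := by
    rw [← Finset.add_sum_erase _ _ hsI, ← Finset.add_sum_erase _ _ hrI,
      ← Finset.add_sum_erase _ (fun i => degu ux u (a i i) i) hsI,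
      ← Finset.add_sum_erase _ (fun i => degu ux u (a i i) i) hrI,
      Equiv.swap_apply_left, Equiv.swap_apply_right, ← add_assoc, ← add_assoc] at hsw
    have heq : ∑ i ∈ ((Finset.Icc 1 r).erase s).erase r,
        degu ux u (a i (Equiv.swap s r i)) (Equiv.swap s r i)
        = ∑ i ∈ ((Finset.Icc 1 r).erase s).erase r, degu ux u (a i i) i := by
      apply Finset.sum_congr rfl
      intro i hi
      simp only [Finset.mem_erase] at hi
      rw [Equiv.swap_apply_of_ne_of_ne hi.2.1 hi.1]
    rw [heq] at hsw
    exact lt_of_add_lt_add_right hsw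
  have hsne : degu ux u (a s s) s ≠ ⊥ := hne s hsI
  have hr' : ((ux * d : ℕ) : WithBot ℕ) + degu ux u (a s r) r < degu ux u (a r r) r := by
    rw [← hshift] at hkey
    have : degu ux u (a s s) s + (((ux * d : ℕ) : WithBot ℕ) + degu ux u (a s r) r)
        < degu ux u (a s s) s + degu ux u (a r r) r := by
      convert hkey using 1
      abel
    exact lt_of_add_lt_add_left this
  have hA1 : degu ux u (b r) r = degu ux u (a r r) r := by
    rw [hb]
    exact degu_sub_eq_aux ux hux u _ _ _ (by rw [hmul]; exact hr')
  have hA2 : degu ux u (b s) s < degu ux u (a r s) s := by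
    rw [degu_lt_iff_aux ux hux, hb]
    have h1 : Polynomial.C c * Polynomial.X ^ d ≠ 0 := by simp [hc0]
    apply Polynomial.degree_sub_lt
    · rw [Polynomial.degree_eq_natDegree hars,
        Polynomial.degree_eq_natDegree (mul_ne_zero h1 hass), Polynomial.natDegree_mul h1 hass,
        Polynomial.natDegree_C_mul_X_pow d c hc0]
      congr 1
      omega
    · exact hars
    · rw [Polynomial.leadingCoeff_mul, Polynomial.leadingCoeff_C_mul_X_pow, hc]
      have := Polynomial.leadingCoeff_ne_zero.2 hass
      field_simp
  have hA3 : ∀ j, s < j → j < r → degu ux u (b j) j < degu ux u (a r s) s := by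
    intro j h1 h2
    rw [hb]
    refine lt_of_le_of_lt (degu_sub_le_aux ux hux u _ _ _) (max_lt (hE2 j h1 h2.le) ?_)
    rw [hmul, ← hshift]
    exact WithBot.add_lt_add_left WithBot.coe_ne_bot (hE1 j h1 h2.le)
  have hA4 : ∀ j, 1 ≤ j → j < s → degu ux u (b j) j ≤ degu ux u (a r s) s := by
    intro j h1 h2
    rw [hb]
    refine le_trans (degu_sub_le_aux ux hux u _ _ _) (max_le (hE2' j h1 h2) ?_)
    rw [hmul, ← hshift]
    gcongr
    exact hE1' j h1 h2
  have hlt : ∀ j, s ≤ j → j ≤ r → degu ux u (b j) j < degu ux u (a r s) s := by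
    intro j h1 h2
    rcases h1.eq_or_lt with rfl | h1
    · exact hA2
    rcases h2.eq_or_lt with rfl | h2
    · rw [hA1]; exact hE2 _ h1 le_rfl
    · exact hA3 j h1 h2
  have hLTa : degLT ux u r (a r) = degu ux u (a r s) s := by
    apply le_antisymm
    · apply Finset.sup_le
      intro j hj
      rw [Finset.mem_Icc] at hj
      rcases lt_trichotomy j s with h | rfl | h
      · exact hE2' j hj.1 h
      · exact le_rfl
      · exact (hE2 j h hj.2).le
    · exact Finset.le_sup (f := fun j => degu ux u (a r j) j) hsI
  have hLTb : degLT ux u r b ≤ degu ux u (a r s) s := by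
    apply Finset.sup_le
    intro j hj
    rw [Finset.mem_Icc] at hj
    rcases lt_or_ge j s with h | h
    · exact hA4 j hj.1 h
    · exact (hlt j h hj.2).le
  refine ⟨hA1, hA2, hA3, hA4, ?_, ?_⟩
  · rw [hA1, hLTa]
    gcongr
  · intro heq
    rw [hA1, hLTa] at heq
    have heq' : degLT ux u r b = degu ux u (a r s) s := by
      apply le_antisymm hLTb
      by_contra! h
      exact absurd heq (WithBot.add_lt_add_right hrne h).ne
    have h1 : s ≤ indLT ux u r (a r) := by
      unfold indLT
      apply Finset.le_sup (f := id)
      rw [Finset.mem_filter]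
      exact ⟨hsI, hLTa.symm⟩
    refine lt_of_lt_of_le ?_ h1
    unfold indLT
    rw [Finset.sup_lt_iff (show 0 < s from hs)]
    intro j hj
    rw [Finset.mem_filter, Finset.mem_Icc, heq'] at hj
    by_contra! h
    exact absurd hj.2 (hlt j h hj.1.2).ne
end

section
/- In the setting of the context, assume additionally (E4): deg_u(a_{ii} e_i) ≥ deg_u(a_{ij} e_j) for all 1 ≤ i ≤ r−1 and 1 ≤ j ≤ r. Assume a_{ss} ≠ 0, a_{rs} ≠ 0, d := deg(a_{rs}) − deg(a_{ss}) ≥ 0, c = LC(a_{rs})·LC(a_{ss})^{−1}, and b_{rj} = a_{rj} − c·x^d·a_{sj}. Then for every non-identity permutation π of {1,…,r}: Σ_{i ≠ r} deg_u(a_{ii} e_i) + deg_u(b_{rr} e_r) > Σ_{i ≠ r} deg_u(a_{iπ(i)} e_{π(i)}) + deg_u(b_{rπ(r)} e_{π(r)}). -/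
open scoped Classical

theorem not_same_aux (P : Equiv.Perm ℕ) (r s : ℕ) (hrs : r ≠ s) (h : ∃ n, (P ^ n) s = r) :
    ¬ (P * Equiv.swap r s).SameCycle r s := by
  classical
  set n := Nat.find h with hn
  have hnr : (P ^ n) s = r := Nat.find_spec h
  have hmin : ∀ j < n, (P ^ j) s ≠ r := fun j hj => Nat.find_min h hj
  have hn0 : 0 < n := by
    rcases Nat.eq_zero_or_pos n with h0 | h0
    · rw [h0] at hnr; exact absurd hnr.symm hrs
    · exact h0
  have hs' : ∀ j, 0 < j → j ≤ n → (P ^ j) s ≠ s := by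
    intro j hj hjn hjs
    apply hmin (n - j) (by omega)
    rw [← hnr]
    conv_rhs => rw [show n = (n - j) + j by omega, pow_add, Equiv.Perm.mul_apply, hjs]
  have key : ∀ i : ℕ, ∃ j, 0 < j ∧ j ≤ n ∧ ((P * Equiv.swap r s) ^ i) r = (P ^ j) s := by
    intro i
    induction i with
    | zero => exact ⟨n, hn0, le_refl _, by simp [hnr]⟩
    | succ i ih =>
      obtain ⟨j, hj0, hjn, hj⟩ := ih
      rw [pow_succ', Equiv.Perm.mul_apply, hj, Equiv.Perm.mul_apply]
      rcases Nat.lt_or_ge j n with hlt | hge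
      · refine ⟨j + 1, by omega, by omega, ?_⟩
        rw [Equiv.swap_apply_of_ne_of_ne (hmin j hlt) (hs' j hj0 hjn), pow_succ', Equiv.Perm.mul_apply]
      · have : j = n := le_antisymm hjn hge
        refine ⟨1, by omega, by omega, ?_⟩
        rw [this, hnr]; simp
  have per : ((P * Equiv.swap r s) ^ n) r = r := by
    have : ∀ i, 0 < i → i ≤ n → ((P * Equiv.swap r s) ^ i) r = (P ^ i) s := by
      intro i hi
      induction i with
      | zero => omega
      | succ i ih =>
        intro hin
        rcases Nat.eq_zero_or_pos i with h0 | h0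
        · subst h0; simp
        · rw [pow_succ', Equiv.Perm.mul_apply, ih h0 (by omega), Equiv.Perm.mul_apply,
            Equiv.swap_apply_of_ne_of_ne (hmin i (by omega)) (hs' i h0 (by omega)), pow_succ',
            Equiv.Perm.mul_apply]
    rw [this n hn0 le_rfl, hnr]
  rintro ⟨z, hz⟩
  have hz' : ((P * Equiv.swap r s) ^ (z % (n : ℤ)).toNat) r = s := by
    have hnn : 0 ≤ z % (n : ℤ) := Int.emod_nonneg _ (by omega)
    rw [← zpow_natCast, Int.toNat_of_nonneg hnn]
    rw [← Int.emod_add_mul_ediv z n, zpow_add, zpow_mul, Equiv.Perm.mul_apply, zpow_natCast] at hz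
    rwa [Equiv.Perm.zpow_apply_eq_self_of_apply_eq_self per] at hz
  obtain ⟨j, h1, h2, h3⟩ := key (z % (n : ℤ)).toNat
  exact hs' j h1 h2 (h3.symm.trans hz')

theorem exists_sigma_of_not_same (P : Equiv.Perm ℕ) (r s : ℕ) (hrs : r ≠ s)
    (h : ¬ P.SameCycle r s) :
    ∃ σ : Equiv.Perm ℕ, σ r = s ∧ σ s = P r ∧
      ∀ i, i ≠ r → i ≠ s → (σ i = i ∨ σ i = P i) := by
  classical
  have inj : Function.Injective (fun x => if P.SameCycle r x then P x else x) := by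
    intro x y hxy
    simp only at hxy
    split_ifs at hxy with h1 h2 h2
    · exact P.injective hxy
    · exact absurd (hxy ▸ (Equiv.Perm.sameCycle_apply_right.2 h1)) h2
    · exact absurd (hxy ▸ (Equiv.Perm.sameCycle_apply_right.2 h2)) h1
    · exact hxy
  have surj : Function.Surjective (fun x => if P.SameCycle r x then P x else x) := by
    intro y
    by_cases hy : P.SameCycle r y
    · refine ⟨P.symm y, ?_⟩
      have : P.SameCycle r (P.symm y) := by
        rw [← Equiv.Perm.sameCycle_apply_right]; simpa using hy
      simp [this]
    · exact ⟨y, by simp [hy]⟩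
  let ρ : Equiv.Perm ℕ := Equiv.ofBijective _ ⟨inj, surj⟩
  have hρ : ∀ x, ρ x = if P.SameCycle r x then P x else x := fun x => rfl
  refine ⟨ρ * Equiv.swap r s, ?_, ?_, ?_⟩
  · simp [hρ, h]
  · simp [hρ, Equiv.Perm.SameCycle.refl]
  · intro i h1 h2
    rw [Equiv.Perm.mul_apply, Equiv.swap_apply_of_ne_of_ne h1 h2, hρ]
    split_ifs <;> simp

theorem exists_sigma (P : Equiv.Perm ℕ) (r s : ℕ) (hrs : r ≠ s)
    (hfin : ∃ n, 0 < n ∧ (P ^ n) r = r) :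
    ∃ σ : Equiv.Perm ℕ, σ r = s ∧ (σ s = P r ∨ σ s = P s) ∧
      ∀ i, i ≠ r → i ≠ s → (σ i = i ∨ σ i = P i) := by
  by_cases h : P.SameCycle r s
  · have h2 : ∃ n, (P ^ n) s = r := by
      obtain ⟨n, hn0, hn⟩ := hfin
      obtain ⟨z, hz⟩ := h.symm
      have hs : (P ^ n) s = s := by
        obtain ⟨w, hw⟩ := h
        rw [← hw, ← Equiv.Perm.mul_apply, ← zpow_natCast, ← zpow_add, add_comm, zpow_add,
          Equiv.Perm.mul_apply, zpow_natCast, hn]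
      refine ⟨(z % (n : ℤ)).toNat, ?_⟩
      have hnn : 0 ≤ z % (n : ℤ) := Int.emod_nonneg _ (by omega)
      rw [← zpow_natCast, Int.toNat_of_nonneg hnn]
      rw [← Int.emod_add_mul_ediv z n, zpow_add, zpow_mul, Equiv.Perm.mul_apply, zpow_natCast] at hz
      rwa [Equiv.Perm.zpow_apply_eq_self_of_apply_eq_self hs] at hz
    obtain ⟨σ, h3, h4, h5⟩ := exists_sigma_of_not_same _ r s hrs (not_same_aux P r s hrs h2)
    refine ⟨σ, h3, Or.inr ?_, ?_⟩
    · rw [h4]; simp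
    · intro i hi hi'
      have := h5 i hi hi'
      rwa [Equiv.Perm.mul_apply, Equiv.swap_apply_of_ne_of_ne hi hi'] at this
  · obtain ⟨σ, h3, h4, h5⟩ := exists_sigma_of_not_same _ r s hrs h
    exact ⟨σ, h3, Or.inl h4, h5⟩

theorem exists_sigma_bijOn (π : ℕ → ℕ) (r s : ℕ) (hs : 1 ≤ s) (hsr : s < r)
    (hπ : Set.BijOn π (Set.Icc 1 r) (Set.Icc 1 r)) :
    ∃ σ : ℕ → ℕ, Set.BijOn σ (Set.Icc 1 r) (Set.Icc 1 r) ∧ σ r = s ∧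
      (σ s = π r ∨ σ s = π s) ∧
      ∀ i ∈ Set.Icc 1 r, i ≠ r → i ≠ s → (σ i = i ∨ σ i = π i) := by
  classical
  let P : Equiv.Perm ℕ := Equiv.Perm.ofSubtype (p := fun x => x ∈ Set.Icc 1 r) hπ.equiv
  have hP : ∀ i ∈ Set.Icc 1 r, P i = π i := by
    intro i hi
    exact Equiv.Perm.ofSubtype_apply_of_mem _ hi
  have hfin : ∃ n, 0 < n ∧ (P ^ n) r = r := by
    have : IsOfFinOrder (hπ.equiv : Equiv.Perm (Set.Icc 1 r)) := isOfFinOrder_of_finite _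
    obtain ⟨n, hn, h⟩ := isOfFinOrder_iff_pow_eq_one.1 this
    refine ⟨n, hn, ?_⟩
    have h2 : P ^ n = 1 := by
      have := congrArg (Equiv.Perm.ofSubtype (p := fun x => x ∈ Set.Icc 1 r)) h
      rw [map_pow, map_one] at this
      exact this
    simp [h2]
  have hrm : r ∈ Set.Icc 1 r := ⟨by omega, le_rfl⟩
  have hsm : s ∈ Set.Icc 1 r := ⟨hs, hsr.le⟩
  obtain ⟨σ, h1, h2, h3⟩ := exists_sigma P r s hsr.ne' hfin
  rw [hP r hrm, hP s hsm] at h2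
  have h3' : ∀ i ∈ Set.Icc 1 r, i ≠ r → i ≠ s → (σ i = i ∨ σ i = π i) := by
    intro i hi a b
    rw [← hP i hi]; exact h3 i a b
  refine ⟨σ, ?_, h1, h2, h3'⟩
  have hm : Set.MapsTo σ (Set.Icc 1 r) (Set.Icc 1 r) := by
    intro i hi
    by_cases hir : i = r
    · rw [hir, h1]; exact hsm
    by_cases his : i = s
    · rw [his]
      rcases h2 with h | h <;> rw [h]
      · exact hπ.mapsTo hrm
      · exact hπ.mapsTo hsm
    rcases h3' i hi hir his with h | h <;> rw [h]
    · exact hi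
    · exact hπ.mapsTo hi
  exact ((Set.finite_Icc 1 r).injOn_iff_bijOn_of_mapsTo hm).1 σ.injective.injOn

theorem sum_erase_split (r s : ℕ) (hs : 1 ≤ s) (hsr : s < r) (f : ℕ → WithBot ℕ) :
    ∑ i ∈ (Finset.Icc 1 r).erase r, f i =
      ∑ i ∈ ((Finset.Icc 1 r).erase r).erase s, f i + f s := by
  rw [Finset.sum_erase_add]
  simp; omega

theorem sum_split (r : ℕ) (hr : 1 ≤ r) (f : ℕ → WithBot ℕ) :
    ∑ i ∈ Finset.Icc 1 r, f i =
      ∑ i ∈ (Finset.Icc 1 r).erase r, f i + f r := by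
  rw [Finset.sum_erase_add]
  simp; omega

theorem degu_zero {k : Type*} [Field k] (ux : ℕ) (u : ℕ → ℕ) (j : ℕ) :
    degu ux u (0 : Polynomial k) j = ⊥ := by simp [degu]

theorem degu_ne {k : Type*} [Field k] (ux : ℕ) (u : ℕ → ℕ) (j : ℕ) (p : Polynomial k)
    (h : p ≠ 0) : degu ux u p j = ((ux * p.natDegree + u j : ℕ) : WithBot ℕ) := by
  simp [degu, h]

/-- Proposition 5 (case `d ≥ 0`): after the update `b_{rj} = a_{rj} − c·x^d·a_{sj}`,
the invariant (iii) persists: for every non-identity permutation `π` of `{1,…,r}`,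
`Σ_{i ≠ r} deg_u(a_{ii} e_i) + deg_u(b_{rr} e_r)
  > Σ_{i ≠ r} deg_u(a_{iπ(i)} e_{π(i)}) + deg_u(b_{rπ(r)} e_{π(r)})`. -/
theorem stmt_16 (k : Type*) [Field k] (m : ℕ) (hm : 1 ≤ m)
    (ux : ℕ) (hux : 0 < ux) (u : ℕ → ℕ) (hupos : ∀ i, 0 < u i)
    (r s : ℕ) (hs : 1 ≤ s) (hsr : s < r) (hrm : r ≤ m)
    (a : ℕ → ℕ → Polynomial k)
    -- (E1)
    (hE1 : ∀ j, s < j → j ≤ r → degu ux u (a s j) j < degu ux u (a s s) s)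
    (hE1' : ∀ j', 1 ≤ j' → j' < s → degu ux u (a s j') j' ≤ degu ux u (a s s) s)
    -- (E2)
    (hE2 : ∀ j, s < j → j ≤ r → degu ux u (a r j) j < degu ux u (a r s) s)
    (hE2' : ∀ j', 1 ≤ j' → j' < s → degu ux u (a r j') j' ≤ degu ux u (a r s) s)
    -- (E3)
    (hE3 : ∀ π : ℕ → ℕ, Set.BijOn π (Set.Icc 1 r) (Set.Icc 1 r) →
      (∃ i ∈ Set.Icc 1 r, π i ≠ i) →
      ∑ i ∈ Finset.Icc 1 r, degu ux u (a i (π i)) (π i) <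
        ∑ i ∈ Finset.Icc 1 r, degu ux u (a i i) i)
    -- (E4)
    (hE4 : ∀ i, 1 ≤ i → i ≤ r - 1 → ∀ j, 1 ≤ j → j ≤ r →
      degu ux u (a i j) j ≤ degu ux u (a i i) i)
    (hass : a s s ≠ 0) (hars : a r s ≠ 0)
    (hd : (a s s).natDegree ≤ (a r s).natDegree)
    (d : ℕ) (hdd : d = (a r s).natDegree - (a s s).natDegree)
    (c : k) (hc : c = (a r s).leadingCoeff * (a s s).leadingCoeff⁻¹)
    (b : ℕ → Polynomial k)
    (hb : ∀ j, b j = a r j - Polynomial.C c * Polynomial.X ^ d * a s j) :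
    ∀ π : ℕ → ℕ, Set.BijOn π (Set.Icc 1 r) (Set.Icc 1 r) →
      (∃ i ∈ Set.Icc 1 r, π i ≠ i) →
      ∑ i ∈ (Finset.Icc 1 r).erase r, degu ux u (a i (π i)) (π i) +
          degu ux u (b (π r)) (π r) <
        ∑ i ∈ (Finset.Icc 1 r).erase r, degu ux u (a i i) i + degu ux u (b r) r := by
  intro π hπ hne
  have hc0 : c ≠ 0 := by
    rw [hc]; simp [hass, hars]
  have hr1 : 1 ≤ r := by omega
  have hrm' : r ∈ Set.Icc 1 r := ⟨hr1, le_rfl⟩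
  have hsm : s ∈ Set.Icc 1 r := ⟨hs, hsr.le⟩
  have hqd : ∀ j, a s j ≠ 0 →
      (Polynomial.C c * Polynomial.X ^ d * a s j).natDegree = d + (a s j).natDegree := by
    intro j hj
    rw [Polynomial.natDegree_mul (by simp [hc0]) hj, Polynomial.natDegree_C_mul_X_pow _ _ hc0]
  -- the general bound
  have hbound : ∀ j, degu ux u (b j) j ≤ degu ux u (a r j) j ∨
      degu ux u (b j) j + degu ux u (a s s) s ≤ degu ux u (a r s) s + degu ux u (a s j) j := by
    intro j
    by_cases hsj : a s j = 0
    · left; rw [hb, hsj]; simp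
    by_cases hbj : b j = 0
    · left; rw [hbj, degu_zero]; exact bot_le
    have h2 : (b j).natDegree ≤ d + (a s j).natDegree →
        degu ux u (b j) j + degu ux u (a s s) s ≤
          degu ux u (a r s) s + degu ux u (a s j) j := by
      intro h
      rw [degu_ne _ _ _ _ hsj, degu_ne _ _ _ _ hbj, degu_ne _ _ _ _ hass, degu_ne _ _ _ _ hars]
      norm_cast
      have e : (a r s).natDegree = d + (a s s).natDegree := by omega
      have := Nat.mul_le_mul_left ux h
      rw [e]
      simp only [Nat.mul_add] at *
      omega
    by_cases hrj : a r j = 0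
    · right
      apply h2
      rw [hb, hrj, zero_sub, Polynomial.natDegree_neg, hqd _ hsj]
    · have h3 := Polynomial.natDegree_sub_le (a r j) (Polynomial.C c * Polynomial.X ^ d * a s j)
      rw [← hb, hqd _ hsj] at h3
      rcases le_max_iff.1 h3 with h | h
      · left
        rw [degu_ne _ _ _ _ hbj, degu_ne _ _ _ _ hrj]
        norm_cast
        have := Nat.mul_le_mul_left ux h
        omega
      · exact Or.inr (h2 h)
  -- the transposition
  have hswap : degu ux u (a s r) r + degu ux u (a r s) s <
      degu ux u (a s s) s + degu ux u (a r r) r := by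
    have hb1 : Set.BijOn (Equiv.swap r s) (Set.Icc 1 r) (Set.Icc 1 r) := by
      have hm : Set.MapsTo (Equiv.swap r s) (Set.Icc 1 r) (Set.Icc 1 r) := by
        intro i hi
        rw [Equiv.swap_apply_def]
        split_ifs
        · exact hsm
        · exact hrm'
        · exact hi
      exact ((Set.finite_Icc 1 r).injOn_iff_bijOn_of_mapsTo hm).1
        (Equiv.swap r s).injective.injOn
    have h := hE3 _ hb1 ⟨r, hrm', by simp; omega⟩
    rw [sum_split r hr1, sum_split r hr1, sum_erase_split r s hs hsr,
      sum_erase_split r s hs hsr] at h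
    simp only [Equiv.swap_apply_left, Equiv.swap_apply_right] at h
    have e : ∑ i ∈ ((Finset.Icc 1 r).erase r).erase s,
        degu ux u (a i (Equiv.swap r s i)) (Equiv.swap r s i) =
        ∑ i ∈ ((Finset.Icc 1 r).erase r).erase s, degu ux u (a i i) i := by
      apply Finset.sum_congr rfl
      intro i hi
      simp only [Finset.mem_erase] at hi
      rw [Equiv.swap_apply_of_ne_of_ne hi.2.1 hi.1]
    rw [e, add_assoc, add_assoc] at h
    exact lt_of_add_lt_add_left h
  have hrr : a r r ≠ 0 := by
    intro h
    rw [h, degu_zero, WithBot.add_bot] at hswap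
    exact not_lt_bot hswap
  have hbr : degu ux u (b r) r = degu ux u (a r r) r := by
    by_cases hsr0 : a s r = 0
    · rw [hb, hsr0]; simp
    rw [degu_ne _ _ _ _ hsr0, degu_ne _ _ _ _ hrr, degu_ne _ _ _ _ hass,
      degu_ne _ _ _ _ hars] at hswap
    norm_cast at hswap
    have e : (a r s).natDegree = d + (a s s).natDegree := by omega
    have hlt : d + (a s r).natDegree < (a r r).natDegree := by
      apply lt_of_mul_lt_mul_left (a := ux) _ (Nat.zero_le _)
      rw [e] at hswap
      simp only [Nat.mul_add] at *
      omega
    rw [← hqd _ hsr0] at hlt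
    have h1 := Polynomial.natDegree_sub_eq_left_of_natDegree_lt hlt
    rw [← hb] at h1
    have h0 : b r ≠ 0 := by
      intro h
      rw [h, Polynomial.natDegree_zero] at h1
      omega
    rw [degu_ne _ _ _ _ h0, degu_ne _ _ _ _ hrr, h1]
  rw [hbr]
  rcases hbound (π r) with h | h
  · refine lt_of_le_of_lt ?_ (sum_split r hr1 (fun i => degu ux u (a i i) i) ▸ hE3 π hπ hne)
    rw [sum_split r hr1]
    gcongr
  obtain ⟨σ, hσ, hσr, hσs, hσi⟩ := exists_sigma_bijOn π r s hs hsr hπ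
  have hσ3 := hE3 σ hσ ⟨r, hrm', by omega⟩
  rw [sum_split r hr1, sum_split r hr1, hσr] at hσ3
  have hss : degu ux u (a s s) s ≠ ⊥ := by rw [degu_ne _ _ _ _ hass]; exact WithBot.coe_ne_bot
  refine lt_of_add_lt_add_right (a := degu ux u (a s s) s) ?_
  refine lt_of_le_of_lt ?_ (WithBot.add_lt_add_right hss hσ3)
  have hR : ∑ i ∈ ((Finset.Icc 1 r).erase r).erase s, degu ux u (a i (π i)) (π i) ≤
      ∑ i ∈ ((Finset.Icc 1 r).erase r).erase s, degu ux u (a i (σ i)) (σ i) := by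
    apply Finset.sum_le_sum
    intro i hi
    simp only [Finset.mem_erase, Finset.mem_Icc] at hi
    have hi' : i ∈ Set.Icc 1 r := hi.2.2
    rcases hσi i hi' hi.2.1 hi.1 with h | h <;> rw [h]
    have hpi := hπ.mapsTo hi'
    exact hE4 i hi'.1 (by have := hi'.2; have := hi.2.1; omega) _ hpi.1 hpi.2
  have hS : degu ux u (a s (π s)) (π s) + degu ux u (a s (π r)) (π r) ≤
      degu ux u (a s (σ s)) (σ s) + degu ux u (a s s) s := by
    have h1 := hπ.mapsTo hsm
    have h2 := hπ.mapsTo hrm'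
    rcases hσs with h | h <;> rw [h]
    · rw [add_comm]
      gcongr
      exact hE4 s hs (by omega) _ h1.1 h1.2
    · gcongr
      exact hE4 s hs (by omega) _ h2.1 h2.2
  rw [add_assoc]
  refine (add_le_add_right h _).trans ?_
  rw [sum_erase_split r s hs hsr, sum_erase_split r s hs hsr]
  calc _ = ∑ i ∈ ((Finset.Icc 1 r).erase r).erase s, degu ux u (a i (π i)) (π i) +
        (degu ux u (a s (π s)) (π s) + degu ux u (a s (π r)) (π r)) + degu ux u (a r s) s := by
        abel
    _ ≤ ∑ i ∈ ((Finset.Icc 1 r).erase r).erase s, degu ux u (a i (σ i)) (σ i) +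
        (degu ux u (a s (σ s)) (σ s) + degu ux u (a s s) s) + degu ux u (a r s) s :=
        add_le_add (add_le_add hR hS) le_rfl
    _ = _ := by abel
end
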